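/- arXiv:2104.01354 — 3 statements merged into one kernel-verified Lean document; each statement's English description precedes it below -/
import Mathlib

section
/- Let α ≤ β ≤ −1 be negative integers, let M = (M_i)_{i≥0} be real parameters with M_i ∉ {0,1}, and let F be a finite set of positive integers with {−β, …, −α−β−1} ⊆ F. If Ω_{M,F}^{α,β}(x) ≠ 0 for every x ∈ [−1,1], then α, β, M and F are admissible. -/
open Finset MeasureTheory

noncomputable section ExceptionalHahnJacobi

/-- Pochhammer symbol `(z)_m = z (z+1) ⋯ (z+m-1)`. -/
def poch (z : ℝ) (m : ℕ) : ℝ := ∏ i ∈ Finset.range m, (z + (i : ℝ))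

/-- Pochhammer symbol with integer exponent; `(z)_{-k} = 1 / ((z-1)(z-2)⋯(z-k))`. -/
def pochZ (z : ℝ) (m : ℤ) : ℝ :=
  if 0 ≤ m then poch z m.toNat else 1 / poch (z - ((-m).toNat : ℝ)) (-m).toNat

/-- Generalized binomial coefficient `C(z, k) = z(z-1)⋯(z-k+1)/k!`. -/
def genBinom (z : ℝ) (k : ℕ) : ℝ := (∏ i ∈ Finset.range k, (z - (i : ℝ))) / (k.factorial : ℝ)

/-- `λ^{a,b}(x) = x (x + a + b + 1)`. -/
def lam (a b x : ℝ) : ℝ := x * (x + a + b + 1)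

/-- Hahn polynomial `h_n^{a,b,N}(x)`. -/
def hahn (a b N : ℝ) (n : ℕ) (x : ℝ) : ℝ :=
  ∑ j ∈ Finset.range (n + 1),
    poch (-(n : ℝ)) j * poch (a + b + (n : ℝ) + 1) j * poch (-N + (j : ℝ)) (n - j) *
      poch (a + (j : ℝ) + 1) (n - j) * poch (-x) j / (j.factorial : ℝ)

/-- Dual Hahn polynomial `R_n^{a,b,N}(x)`. -/
def dualHahn (a b N : ℝ) (n : ℕ) (x : ℝ) : ℝ :=
  ∑ j ∈ Finset.range (n + 1),
    poch (-(n : ℝ)) j * poch (-N + (j : ℝ)) (n - j) * poch (a + (j : ℝ) + 1) (n - j) /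
        ((n.factorial : ℝ) * (-1 : ℝ) ^ j * (j.factorial : ℝ)) *
      ∏ i ∈ Finset.range j, (x - (i : ℝ) * (a + b + 1 + (i : ℝ)))

/-- Dual Hahn polynomial with integer degree; zero for negative degree. -/
def dualHahnZ (a b N : ℝ) (m : ℤ) (x : ℝ) : ℝ :=
  if 0 ≤ m then dualHahn a b N m.toNat x else 0

/-- Jacobi polynomial `P_n^{a,b}(x)`. -/
def jacobiP (a b : ℝ) (n : ℕ) (x : ℝ) : ℝ :=
  (2 : ℝ)⁻¹ ^ n * ∑ j ∈ Finset.range (n + 1),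
    genBinom ((n : ℝ) + a) j * genBinom ((n : ℝ) + b) (n - j) * (x - 1) ^ (n - j) * (x + 1) ^ j

/-- The function `φ_u^{α,β,N}(s,x)`, a normalized terminating ₃F₂. -/
def phiH (α β : ℤ) (N : ℝ) (u : ℕ) (s x : ℝ) : ℝ :=
  poch ((α : ℝ) + 1) (max u (-α - β - (u : ℤ) - 1).toNat) *
    poch (-N) (max u (-α - β - (u : ℤ) - 1).toNat) *
    ∑ j ∈ Finset.range (u + 1),
      poch (-(u : ℝ)) j * poch ((u : ℝ) - s + (α : ℝ) + (β : ℝ) + 1) j * poch (-x) j /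
        (poch ((α : ℝ) - s + 1) j * poch (-N) j * (j.factorial : ℝ))

/-- The polynomials `Ĥ_n^{α,β,N;M}(x)`. -/
def Hhat (α β : ℤ) (N : ℝ) (M : ℕ → ℝ) (n : ℕ) (x : ℝ) : ℝ :=
  if ⌈((-α - β : ℤ) : ℚ) / 2⌉ ≤ (n : ℤ) ∧ (n : ℤ) ≤ -α - 1 then
    deriv (fun s => phiH α β N n s x) 0 -
      deriv (fun s => phiH α β N (-α - β - (n : ℤ) - 1).toNat s x) 0
  else if -α ≤ (n : ℤ) ∧ (n : ℤ) ≤ -α - β - 1 then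
    (-1 : ℝ) ^ ((β : ℤ) + (n : ℤ)) * ((β + (n : ℤ)).toNat.factorial : ℝ) *
      (((-α - β - (n : ℤ) - 1).toNat.factorial : ℝ) * poch (-x) (-α).toNat *
          hahn (-(α : ℝ)) (β : ℝ) ((α : ℝ) + N) ((α + (n : ℤ)).toNat) (x + (α : ℝ)) +
        (((α + (n : ℤ)).toNat.factorial : ℝ)) *
            poch (-N - (α : ℝ) - (β : ℝ) - (n : ℝ) - 1) (2 * (n : ℤ) + α + β + 1).toNat /
            (M ((α + (n : ℤ)).toNat) - 1) *
          hahn (α : ℝ) (β : ℝ) N ((-α - β - (n : ℤ) - 1).toNat) x)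
  else hahn (α : ℝ) (β : ℝ) N n x

/-- The function `φ_u^{α,β}(s,x)`, a normalized terminating ₂F₁. -/
def phiJ (α β : ℤ) (u : ℕ) (s x : ℝ) : ℝ :=
  poch ((α : ℝ) + 1) (max u (-α - β - (u : ℤ) - 1).toNat) /
      ((max u.factorial (-α - β - (u : ℤ) - 1).toNat.factorial : ℕ) : ℝ) *
    ∑ j ∈ Finset.range (u + 1),
      poch (-(u : ℝ)) j * poch ((u : ℝ) - s + (α : ℝ) + (β : ℝ) + 1) j /
          (poch ((α : ℝ) - s + 1) j * (j.factorial : ℝ)) * ((1 - x) / 2) ^ j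

/-- The polynomials `P̂_n^{α,β;M}(x)`. -/
def Phat (α β : ℤ) (M : ℕ → ℝ) (n : ℕ) (x : ℝ) : ℝ :=
  if ⌈((-α - β : ℤ) : ℚ) / 2⌉ ≤ (n : ℤ) ∧ (n : ℤ) ≤ -α - 1 then
    deriv (fun s => phiJ α β n s x) 0 -
      deriv (fun s => phiJ α β (-α - β - (n : ℤ) - 1).toNat s x) 0
  else if -α ≤ (n : ℤ) ∧ (n : ℤ) ≤ -α - β - 1 then
    (-1 : ℝ) ^ ((β : ℤ) + (n : ℤ)) *
      ((((n : ℤ) + α).toNat.factorial : ℝ) * (((n : ℤ) + β).toNat.factorial : ℝ) *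
        ((-α - β - (n : ℤ) - 1).toNat.factorial : ℝ)) / (n.factorial : ℝ) *
      ((M ((α + (n : ℤ)).toNat) - 1)⁻¹ * jacobiP (α : ℝ) (β : ℝ) ((-α - β - (n : ℤ) - 1).toNat) x +
        ((1 - x) / 2) ^ (-α).toNat * jacobiP (-(α : ℝ)) (β : ℝ) ((α + (n : ℤ)).toNat) x)
  else jacobiP (α : ℝ) (β : ℝ) n x

/-- `u_F = Σ_{f ∈ F} f - C(n_F + 1, 2)`. -/
def uF (F : Finset ℕ) : ℕ := (∑ f ∈ F, f) - (F.card + 1).choose 2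

/-- `n ∈ σ_F = {u_F, u_F + 1, …} \ {u_F + f : f ∈ F}`. -/
def inSigma (F : Finset ℕ) (n : ℕ) : Prop := uF F ≤ n ∧ n - uF F ∉ F

/-- The `i`-th element of `F` in increasing order. -/
def elemOf (F : Finset ℕ) (i : Fin F.card) : ℕ := ((F.orderIsoOfFin rfl i : {x // x ∈ F}) : ℕ)

/-- The `i`-th element of a finite set of integers, in increasing order. -/
def elemOfZ (S : Finset ℤ) (i : Fin S.card) : ℤ := ((S.orderIsoOfFin rfl i : {x // x ∈ S}) : ℤ)

/-- Exceptional Hahn polynomial `h_n^{α,β,N;M,F}(x)`. -/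
def exHahn (α β : ℤ) (N : ℝ) (M : ℕ → ℝ) (F : Finset ℕ) (n : ℕ) (x : ℝ) : ℝ :=
  Matrix.det (Matrix.of fun i j : Fin (F.card + 1) =>
    Fin.cases (Hhat α β N M (n - uF F) (x + ((j : ℕ) : ℝ)))
      (fun k => Hhat α β N M (elemOf F k) (x + ((j : ℕ) : ℝ))) i)

/-- The polynomial `Ω_{M,F}^{α,β,N}(x)`. -/
def OmegaH (α β : ℤ) (N : ℝ) (M : ℕ → ℝ) (F : Finset ℕ) (x : ℝ) : ℝ :=
  Matrix.det (Matrix.of fun i j : Fin F.card =>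
    Hhat α β N M (elemOf F i) (x + ((j : ℕ) : ℝ)))

/-- The polynomial `Λ_{M,F}^{α,β,N}(x)` (columns `j ∈ {1,…,n_F+1}`, `j ≠ n_F`). -/
def LambdaH (α β : ℤ) (N : ℝ) (M : ℕ → ℝ) (F : Finset ℕ) (x : ℝ) : ℝ :=
  Matrix.det (Matrix.of fun i j : Fin F.card =>
    Hhat α β N M (elemOf F i)
      (x + ((if (j : ℕ) = F.card - 1 then F.card else (j : ℕ) : ℕ) : ℝ)))

/-- Exceptional Jacobi polynomial `P_n^{α,β;M,F}(x)`. -/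
def exJacobi (α β : ℤ) (M : ℕ → ℝ) (F : Finset ℕ) (n : ℕ) (x : ℝ) : ℝ :=
  Matrix.det (Matrix.of fun i j : Fin (F.card + 1) =>
    Fin.cases (iteratedDeriv (j : ℕ) (Phat α β M (n - uF F)) x)
      (fun k => iteratedDeriv (j : ℕ) (Phat α β M (elemOf F k)) x) i)

/-- The polynomial `Ω_{M,F}^{α,β}(x)`. -/
def OmegaJ (α β : ℤ) (M : ℕ → ℝ) (F : Finset ℕ) (x : ℝ) : ℝ :=
  Matrix.det (Matrix.of fun i j : Fin F.card =>
    iteratedDeriv (j : ℕ) (Phat α β M (elemOf F i)) x)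

/-- `F_ext = F \ {-β, …, -α-β-1}`. -/
def Fext (α β : ℤ) (F : Finset ℕ) : Finset ℕ :=
  F.filter fun f : ℕ => ((f : ℤ) < -β ∨ -α - β ≤ (f : ℤ))

/-- Admissibility of the data `α, β, M, F`. -/
def IsAdmissible (α β : ℤ) (M : ℕ → ℝ) (F : Finset ℕ) : Prop :=
  (∀ i : ℕ, (i : ℤ) ≤ -β - 1 → (∀ f ∈ F, (i : ℤ) ≠ -β - (f : ℤ) - 1) →
      Real.sign (M i) =
        Real.sign (∏ f ∈ Fext α β F, (((i : ℝ) - (f : ℝ) - (α : ℝ)) * ((i : ℝ) + (f : ℝ) + (β : ℝ) + 1)))) ∧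
  (∀ x : ℤ, 0 ≤ x → (∃ f ∈ F, x ≤ (f : ℤ) + α + β) →
      0 ≤ ∏ f ∈ F.filter (fun f : ℕ => -α - β ≤ (f : ℤ)), (x - (f : ℤ) - α - β))

/-- `U_{F-} = {f + α + β : f ∈ F, 1 ≤ f ≤ -β-1}`. -/
def UFm (α β : ℤ) (F : Finset ℕ) : Finset ℤ :=
  (F.filter fun f : ℕ => (1 ≤ f ∧ (f : ℤ) ≤ -β - 1)).image fun f : ℕ => (f : ℤ) + α + β

/-- `U_{F+} = {f + α + β : f ∈ F, f ≥ -α-β}`. -/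
def UFp (α β : ℤ) (F : Finset ℕ) : Finset ℤ :=
  (F.filter fun f : ℕ => -α - β ≤ (f : ℤ)).image fun f : ℕ => (f : ℤ) + α + β

/-- `U_F = U_{F-} ∪ U_{F+}`. -/
def UF (α β : ℤ) (F : Finset ℕ) : Finset ℤ := UFm α β F ∪ UFp α β F

/-- The weight of the measure `ω_{α,β,N}^{M,F}` at the point `x`. -/
def wH (α β : ℤ) (N : ℕ) (M : ℕ → ℝ) (F : Finset ℕ) (x : ℕ) : ℝ :=
  genBinom ((α : ℝ) + (F.card : ℝ) + (x : ℝ)) x *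
      genBinom ((β : ℝ) + (N : ℝ) - (x : ℝ)) (N - F.card - x) /
    (OmegaH α β (N : ℝ) M F (x : ℝ) * OmegaH α β (N : ℝ) M F ((x : ℝ) + 1))

/-- The weight `ω_{α,β;M,F}(x)` on `[-1,1]`. -/
def wJ (α β : ℤ) (M : ℕ → ℝ) (F : Finset ℕ) (x : ℝ) : ℝ :=
  (1 - x) ^ (α + (F.card : ℤ)) * (1 + x) ^ (β + (F.card : ℤ)) / (OmegaJ α β M F x) ^ 2

/-- The measure on `[-1,1]` with density `ω_{α,β;M,F}`. -/
def jacobiMeasure (α β : ℤ) (M : ℕ → ℝ) (F : Finset ℕ) : Measure ℝ :=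
  (volume.restrict (Set.Icc (-1 : ℝ) 1)).withDensity fun x => ENNReal.ofReal (wJ α β M F x)

/-- Mass of the dual Hahn measure `ρ_{b,a,N̂}` at `λ^{a,b}(x)`. -/
def rhoMass (a b Nh : ℤ) (x : ℕ) : ℝ :=
  (2 * (x : ℝ) + (a : ℝ) + (b : ℝ) + 1) * poch ((b : ℝ) + 1) x * poch (-(Nh : ℝ)) x *
      (Nh.toNat.factorial : ℝ) /
    ((-1 : ℝ) ^ x * poch ((x : ℝ) + (a : ℝ) + (b : ℝ) + 1) (Nh + 1).toNat *
      poch ((a : ℝ) + 1) x * (x.factorial : ℝ))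

/-- Mass of the measure `ν_{a,b,N̂}^{M}` at `λ^{a,b}(s)`. -/
def nuMass (a b Nh : ℤ) (M : ℕ → ℝ) (s : ℤ) : ℝ :=
  if -b ≤ s ∧ s ≤ -1 then
    (2 * (s : ℝ) + (a : ℝ) + (b : ℝ) + 1) * poch ((Nh : ℝ) + 1 - (s : ℝ)) (s + b).toNat /
        poch ((Nh : ℝ) + (b : ℝ) + 1) (s + a + 1).toNat * M ((s + b).toNat)
  else if 0 ≤ s ∧ s ≤ Nh then
    poch ((Nh : ℝ) + 1) b.toNat ^ 2 / poch ((b : ℝ) + 1) (a - b).toNat * rhoMass a b Nh s.toNat /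
      ∏ i ∈ Finset.range b.toNat, (((s : ℝ) + (a : ℝ) + (i : ℝ) + 1) * ((s : ℝ) + (b : ℝ) - (i : ℝ)))
  else 0

/-- `ζ_v` (defined for any integer `v` via `pochZ`). -/
def zetaH (α β : ℤ) (N : ℝ) (v : ℤ) : ℝ :=
  pochZ (-N - (α : ℝ) - (β : ℝ)) v * poch ((v : ℝ) + 1) (-α).toNat *
    ((v - α - β).toNat.factorial : ℝ)

/-- `θ_v^M`. -/
def thetaM (β : ℤ) (M : ℕ → ℝ) (v : ℕ) : ℝ :=
  if (v : ℤ) ≤ -β - 1 then 1 - M ((-β - 1 - (v : ℤ)).toNat) else 1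

/-- `τ_v = ∏_{u ∈ U_F} (λ^{a,b}(v+α+β) - λ^{a,b}(u))` with `a = -α`, `b = -β`. -/
def tauH (α β : ℤ) (F : Finset ℕ) (v : ℕ) : ℝ :=
  ∏ u ∈ UF α β F,
    (lam ((-α : ℤ) : ℝ) ((-β : ℤ) : ℝ) ((v : ℝ) + (α : ℝ) + (β : ℝ)) -
      lam ((-α : ℤ) : ℝ) ((-β : ℤ) : ℝ) ((u : ℤ) : ℝ))

/-- `ξ_n`. -/
def xiH (α β : ℤ) (N : ℝ) (F : Finset ℕ) (n : ℕ) : ℝ :=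
  pochZ (N - (n : ℝ) + 1) ((n : ℤ) + α + β) ^ (α + (F.card : ℤ) + 1) *
    ∏ j ∈ Finset.range (F.card + 1), poch (N - (n : ℝ) - (j : ℝ) + 1) j

/-- `κ_M`. -/
def kappaM (α β : ℤ) (N : ℝ) (M : ℕ → ℝ) (F : Finset ℕ) : ℝ :=
  (∏ u ∈ UFm α β F, (1 - M ((-u + α - 1).toNat))) * ∏ u ∈ UF α β F, zetaH α β N u

/-- Entry `(i,j)` (0-based) of the determinant defining `q_n^{a,b,N̂;M,U_F}`. -/
def qEntry (α β : ℤ) (N : ℝ) (M : ℕ → ℝ) (F : Finset ℕ) (n : ℕ) (x : ℝ) (i j : ℕ) : ℝ :=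
  if i = 0 then
    (-1 : ℝ) ^ j * dualHahnZ (((-α).toNat : ℝ)) (((-β).toNat : ℝ)) (N + (α : ℝ) + (β : ℝ))
      ((n : ℤ) - (-α).toNat + j) x
  else if h1 : i - 1 < (UFm α β F).card then
    (-1 : ℝ) ^ j * dualHahnZ (((-α).toNat : ℝ)) (((-β).toNat : ℝ)) (N + (α : ℝ) + (β : ℝ))
      ((n : ℤ) - (-α).toNat + j)
      (lam (((-α).toNat : ℝ)) (((-β).toNat : ℝ)) ((elemOfZ (UFm α β F) ⟨i - 1, h1⟩ : ℤ) : ℝ))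
  else if i - 1 - (UFm α β F).card < (-α).toNat then
    poch (((-α).toNat : ℝ) + ((-β).toNat : ℝ) + (N + (α : ℝ) + (β : ℝ)) - (n : ℝ) - (j : ℝ) + 1) j *
      Hhat α β (-2 - (N + (α : ℝ) + (β : ℝ))) M ((-β).toNat + (i - 1 - (UFm α β F).card))
        (-(n : ℝ) + ((-α).toNat : ℝ) - (j : ℝ) - 1)
  else if h3 : i - 1 - (UFm α β F).card - (-α).toNat < (UFp α β F).card then
    (-1 : ℝ) ^ j * dualHahnZ (((-α).toNat : ℝ)) (((-β).toNat : ℝ)) (N + (α : ℝ) + (β : ℝ))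
      ((n : ℤ) - (-α).toNat + j)
      (lam (((-α).toNat : ℝ)) (((-β).toNat : ℝ))
        ((elemOfZ (UFp α β F) ⟨i - 1 - (UFm α β F).card - (-α).toNat, h3⟩ : ℤ) : ℝ))
  else 0

/-- The Krall dual Hahn orthogonal polynomial `q_n^{a,b,N̂;M,U_F}(x)`. -/
def qKrall (α β : ℤ) (N : ℝ) (M : ℕ → ℝ) (F : Finset ℕ) (n : ℕ) (x : ℝ) : ℝ :=
  Matrix.det (Matrix.of fun i j : Fin (1 + (UFm α β F).card + (-α).toNat + (UFp α β F).card) =>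
      qEntry α β N M F n x (i : ℕ) (j : ℕ)) /
    ((-1 : ℝ) ^ ((n + (-α).toNat + (-β).toNat) * ((UF α β F).card + 1) +
        ((-α).toNat + (-β).toNat).choose 2 + ((-β).toNat).choose 2 + (-α).toNat) *
      ∏ u ∈ UF α β F, (x - lam (((-α).toNat : ℝ)) (((-β).toNat : ℝ)) ((u : ℤ) : ℝ)))

/-- Row used in the renormalized determinant `P̄`: for `-α ≤ g ≤ -α-β-1` it is
`(M_{α+g} - 1) · P̂_g` written without the division by `M_{α+g} - 1`. -/
def PhatBarRow (α β : ℤ) (M : ℕ → ℝ) (g : ℕ) (x : ℝ) : ℝ :=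
  if -α ≤ (g : ℤ) ∧ (g : ℤ) ≤ -α - β - 1 then
    (-1 : ℝ) ^ ((β : ℤ) + (g : ℤ)) *
      ((((g : ℤ) + α).toNat.factorial : ℝ) * (((g : ℤ) + β).toNat.factorial : ℝ) *
        ((-α - β - (g : ℤ) - 1).toNat.factorial : ℝ)) / (g.factorial : ℝ) *
      (jacobiP (α : ℝ) (β : ℝ) ((-α - β - (g : ℤ) - 1).toNat) x +
        (M ((α + (g : ℤ)).toNat) - 1) * ((1 - x) / 2) ^ (-α).toNat *
          jacobiP (-(α : ℝ)) (β : ℝ) ((α + (g : ℤ)).toNat) x)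
  else Phat α β M g x

/-- The renormalized exceptional Jacobi polynomial
`P̄_n^{α,β;M,F} = (∏_{i=0}^{-β-1} (M_i - 1)) · P_n^{α,β;M,F}`
(written so that the factors `M_i - 1` are distributed into the corresponding rows of the
determinant; this agrees with the product formula whenever all `M_i ≠ 1`). -/
def Pbar (α β : ℤ) (M : ℕ → ℝ) (F : Finset ℕ) (n : ℕ) (x : ℝ) : ℝ :=
  (∏ i ∈ (Finset.range (-β).toNat).filter
      (fun i : ℕ => (((i : ℤ) - α).toNat ∉ F ∧ ((i : ℤ) - α).toNat ≠ n - uF F)), (M i - 1)) *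
    Matrix.det (Matrix.of fun r j : Fin (F.card + 1) =>
      Fin.cases (iteratedDeriv (j : ℕ) (PhatBarRow α β M (n - uF F)) x)
        (fun k => iteratedDeriv (j : ℕ) (PhatBarRow α β M (elemOf F k)) x) r)

end ExceptionalHahnJacobi

/-!
Write `a = -α` and `b = -β`. Up to a nonzero scalar, `Ω` is the Wronskian of seed polynomials
attached to the elements of `F`, and these are triangular for the Jacobi operator with parameters
`-a` and `-b`: each is an eigenfunction up to a combination of the earlier ones. The Darboux
transformation annihilating the seeds maps a further eigenfunction of eigenvalue `m` to a rational
function whose denominator is `Ω`, and integration by parts shows that it multiplies squared norms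
by `∏_f (μ_f - m)`, where `μ_f` is the eigenvalue of the seed `f`. When `Ω` has no zero on `[-1, 1]`
both norms are finite, so the product is nonnegative. Applied to the Jacobi polynomials of degree at
least `a + b`, this is the second admissibility condition.

For the first condition, drop from `F` the seed `c P_v + Q` of index `a + i`, where `v + i + 1 = b`
and `P_v`, `Q` have the same eigenvalue, and complete the Wronskian of the remaining seeds by `P_v`
and by the dropped seed. By Abel's identity the derivative of the quotient of the two completions
has the constant sign of a product of eigenvalue differences, and the quotient takes the values
`(M_i - 1) / M_i` at `-1` and `M_i - 1` at `1`. Comparing the two determines the sign of `M_i`.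
-/

namespace ExceptionalJacobi

open Polynomial

noncomputable section

/-! ### Wronskians and Darboux transformations -/

/-- Wronskian determinant of the family `u` with respect to `d`, one row per member of the family;
`d` is a bare function so that the derivative of polynomials and derivations of fields both fit. -/
def wronskian {R : Type*} [CommRing R] (d : R → R) {n : ℕ} (u : Fin n → R) : R :=
  Matrix.det (Matrix.of fun i j : Fin n => d^[(j : ℕ)] (u i))

theorem wronskian_eq_smul_of_mem_span {k R : Type*} [CommRing k] [CommRing R] [Algebra k R]
    (d : R →ₗ[k] R) {n : ℕ} {u v : Fin n → R} (h : ∀ i, v i ∈ Submodule.span k (Set.range u)) :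
    ∃ c : k, wronskian d v = c • wronskian d u := by
  choose A hA using fun i => (Submodule.mem_span_range_iff_exists_fun k).1 (h i)
  refine ⟨(Matrix.of A).det, ?_⟩
  rw [Algebra.smul_def, wronskian, wronskian, RingHom.map_det, ← Matrix.det_mul]
  congr 1
  ext1 i j
  simp only [Matrix.mul_apply, Matrix.of_apply, RingHom.mapMatrix_apply, Matrix.map_apply,
    ← Module.End.coe_pow, ← hA i, map_sum, map_smul]
  exact sum_congr rfl fun l _ => Algebra.smul_def _ _

theorem map_wronskian {R S : Type*} [CommRing R] [CommRing S] (f : R →+* S) {d : R → R}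
    {d' : S → S} (h : Function.Semiconj f d d') {n : ℕ} (u : Fin n → R) :
    f (wronskian d u) = wronskian d' (fun i => f (u i)) := by
  rw [wronskian, wronskian, RingHom.map_det]
  congr 1
  ext1 i j
  exact h.iterate_right j (u i)

theorem snoc_succ {A : Type*} {n : ℕ} (u : Fin (n + 1) → A) (y : A) (i : Fin (n + 1)) :
    (Fin.snoc u y : Fin (n + 2) → A) i.succ =
      (Fin.snoc (fun i : Fin n => u i.succ) y : Fin (n + 1) → A) i := by
  refine Fin.lastCases ?_ (fun i => ?_) i
  · rw [Fin.succ_last, Fin.snoc_last, Fin.snoc_last]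
  · rw [Fin.succ_castSucc, Fin.snoc_castSucc, Fin.snoc_castSucc]

section Leibniz

variable {k R : Type*} [CommRing k] [CommRing R] [Algebra k R] (δ : Derivation k R R)

theorem iterate_derivation_mul (n : ℕ) (x y : R) :
    δ^[n] (x * y) = ∑ ij ∈ antidiagonal n, (n.choose ij.1 : R) * (δ^[ij.1] x * δ^[ij.2] y) := by
  induction n with
  | zero => simp
  | succ n ih =>
    rw [sum_antidiagonal_choose_succ_mul (fun i j => δ^[i] x * δ^[j] y),
      Function.iterate_succ_apply', ih, map_sum, ← sum_add_distrib]
    refine sum_congr rfl fun ij hij => ?_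
    rw [show n.choose ij.2 = n.choose ij.1 from
      (Nat.choose_symm_of_eq_add (mem_antidiagonal.1 hij).symm).symm]
    simp only [Derivation.leibniz, smul_eq_mul, Derivation.map_natCast,
      Function.iterate_succ_apply']
    ring

theorem wronskian_mul_left (f : R) {n : ℕ} (u : Fin n → R) :
    wronskian δ (fun i => f * u i) = f ^ n * wronskian δ u := by
  let leibnizMatrix : Matrix (Fin n) (Fin n) R :=
    Matrix.of fun l j => if l ≤ j then ((j : ℕ).choose l : R) * δ^[(j : ℕ) - l] f else 0
  have det_leibnizMatrix : leibnizMatrix.det = f ^ n := by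
    rw [Matrix.det_of_isUpperTriangular]
    · simp [leibnizMatrix]
    · intro i j hij
      exact if_neg (not_le.2 hij)
  rw [mul_comm, ← det_leibnizMatrix, wronskian, wronskian, ← Matrix.det_mul]
  congr 1
  ext1 i j
  rw [Matrix.mul_apply, Matrix.of_apply, mul_comm, iterate_derivation_mul,
    Nat.sum_antidiagonal_eq_sum_range_succ (fun a b => ((j : ℕ).choose a : R) *
      (δ^[a] (u i) * δ^[b] f))]
  simp only [leibnizMatrix, Matrix.of_apply, Fin.le_def, mul_ite, mul_zero]
  rw [Fin.sum_univ_eq_sum_range (fun l => if l ≤ (j : ℕ) then δ^[l] (u i) *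
    (((j : ℕ).choose l : R) * δ^[(j : ℕ) - l] f) else 0), ← sum_filter]
  refine sum_congr ?_ fun l _ => by ring
  ext l
  simp only [mem_range, mem_filter]
  omega

theorem wronskian_eq_wronskian_derivation_of_one {n : ℕ} (u : Fin (n + 1) → R) (h : u 0 = 1) :
    wronskian δ u = wronskian δ (fun i : Fin n => δ (u i.succ)) := by
  have iterate_one (j : ℕ) : δ^[j + 1] (1 : R) = 0 := by
    rw [Function.iterate_succ_apply, δ.map_one_eq_zero, iterate_map_zero]
  rw [wronskian, Matrix.det_succ_row_zero, Fin.sum_univ_succ, sum_eq_zero]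
  · simp [h, wronskian, Matrix.submatrix, Function.iterate_succ_apply]
  · intro j _
    simp [h, iterate_one, -Function.iterate_succ]

theorem wronskian_eq_zero_of_zero {n : ℕ} (u : Fin (n + 1) → R) (h : u 0 = 0) :
    wronskian δ u = 0 :=
  Matrix.det_eq_zero_of_row_eq_zero 0 fun j => by simp [h, iterate_map_zero]

end Leibniz

section Darboux

variable {k K : Type*} [Field k] [Field K] [Algebra k K] (δ : Derivation k K K)

/-- First-order operator `y ↦ x (y / x)'` annihilating the seed function `x`. -/
def darboux (x : K) : K →ₗ[k] K := δ - LinearMap.mulLeft k (δ x / x)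

theorem darboux_apply (x y : K) : darboux δ x y = δ y - δ x / x * y := rfl

theorem darboux_self {x : K} (hx : x ≠ 0) : darboux δ x x = 0 := by
  rw [darboux_apply, div_mul_cancel₀ _ hx, sub_self]

theorem darboux_eq_mul_derivation_div {x : K} (hx : x ≠ 0) (y : K) :
    darboux δ x y = x * δ (y / x) := by
  rw [darboux_apply, Derivation.leibniz_div]
  simp only [smul_eq_mul]
  field_simp

theorem wronskian_eq_mul_wronskian_darboux {n : ℕ} (u : Fin (n + 1) → K) (h : u 0 ≠ 0) :
    wronskian δ u = u 0 * wronskian δ (fun i : Fin n => darboux δ (u 0) (u i.succ)) := by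
  calc wronskian δ u
      = wronskian δ (fun i => u 0 * (u i / u 0)) := by simp only [mul_div_cancel₀ _ h]
    _ = u 0 ^ (n + 1) * wronskian δ (fun i : Fin n => δ (u i.succ / u 0)) := by
        rw [wronskian_mul_left, wronskian_eq_wronskian_derivation_of_one _ _ (div_self h)]
    _ = u 0 * wronskian δ (fun i : Fin n => u 0 * δ (u i.succ / u 0)) := by
        rw [wronskian_mul_left, pow_succ', mul_assoc]
    _ = _ := by simp only [darboux_eq_mul_derivation_div δ h]

/-- Composition of the Darboux transformations that successively annihilate the members of `u`,
each member being first transported by the preceding transformations. -/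
def darbouxChain : {n : ℕ} → (Fin n → K) → K →ₗ[k] K
  | 0, _ => LinearMap.id
  | _ + 1, u => darbouxChain (fun i => darboux δ (u 0) (u i.succ)) ∘ₗ darboux δ (u 0)

theorem darbouxChain_zero (u : Fin 0 → K) (y : K) : darbouxChain δ u y = y := rfl

theorem darbouxChain_succ {n : ℕ} (u : Fin (n + 1) → K) (y : K) :
    darbouxChain δ u y =
      darbouxChain δ (fun i => darboux δ (u 0) (u i.succ)) (darboux δ (u 0) y) := rfl

variable {δ} in
theorem ne_zero_of_wronskian_ne_zero {n : ℕ} {u : Fin (n + 1) → K} (h : wronskian δ u ≠ 0) :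
    u 0 ≠ 0 :=
  fun h0 => h (wronskian_eq_zero_of_zero δ u h0)

variable {δ} in
theorem wronskian_darboux_ne_zero {n : ℕ} {u : Fin (n + 1) → K} (h : wronskian δ u ≠ 0) :
    wronskian δ (fun i : Fin n => darboux δ (u 0) (u i.succ)) ≠ 0 := by
  rw [wronskian_eq_mul_wronskian_darboux δ u (ne_zero_of_wronskian_ne_zero h)] at h
  exact right_ne_zero_of_mul h

theorem wronskian_snoc_succ {n : ℕ} (u : Fin (n + 1) → K) (y : K) (h : u 0 ≠ 0) :
    wronskian δ (Fin.snoc u y : Fin (n + 2) → K) = u 0 * wronskian δ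
      (Fin.snoc (fun i : Fin n => darboux δ (u 0) (u i.succ)) (darboux δ (u 0) y) :
        Fin (n + 1) → K) := by
  have snoc_zero : (Fin.snoc u y : Fin (n + 2) → K) 0 = u 0 := Fin.snoc_castSucc (i := 0) ..
  rw [wronskian_eq_mul_wronskian_darboux δ _ (by rwa [snoc_zero]), snoc_zero]
  simp only [snoc_succ]
  congr 2
  exact (Fin.comp_snoc (darboux δ (u 0)) (fun i : Fin n => u i.succ) y)

theorem wronskian_snoc {n : ℕ} {u : Fin n → K} (h : wronskian δ u ≠ 0) (y : K) :
    wronskian δ (Fin.snoc u y : Fin (n + 1) → K) = wronskian δ u * darbouxChain δ u y := by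
  induction n generalizing y with
  | zero => simp [wronskian, Fin.snoc, darbouxChain_zero]
  | succ n ih =>
    have hu := ne_zero_of_wronskian_ne_zero h
    rw [wronskian_snoc_succ δ u y hu, ih (wronskian_darboux_ne_zero h), darbouxChain_succ,
      wronskian_eq_mul_wronskian_darboux δ u hu, mul_assoc]

theorem wronskian_ne_zero_of_snoc {n : ℕ} {u : Fin n → K} {y : K}
    (h : wronskian δ (Fin.snoc u y : Fin (n + 1) → K) ≠ 0) : wronskian δ u ≠ 0 := by
  induction n generalizing y with
  | zero => simp [wronskian]
  | succ n ih =>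
    have hu : u 0 ≠ 0 := (Fin.snoc_castSucc (α := fun _ => K) y u 0).symm.trans_ne
      (ne_zero_of_wronskian_ne_zero (u := (Fin.snoc u y : Fin (n + 2) → K)) h)
    rw [wronskian_snoc_succ δ u y hu] at h
    rw [wronskian_eq_mul_wronskian_darboux δ u hu]
    exact mul_ne_zero hu (ih (right_ne_zero_of_mul h))

/-- Algebra of differential operators with coefficients in `K`. -/
def diffOperators : Subalgebra k (Module.End k K) :=
  Algebra.adjoin k (insert (δ : K →ₗ[k] K) (Set.range (LinearMap.mulLeft k)))

theorem mulLeft_mem_diffOperators (r : K) : LinearMap.mulLeft k r ∈ diffOperators δ :=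
  Algebra.subset_adjoin (Set.mem_insert_of_mem _ ⟨r, rfl⟩)

theorem darboux_mem_diffOperators (x : K) : darboux δ x ∈ diffOperators δ :=
  sub_mem (Algebra.subset_adjoin (Set.mem_insert _ _)) (mulLeft_mem_diffOperators δ _)

/-- The second-order operator `y ↦ p y'' + g y' + V y`. -/
def secondOrder (p g V : K) : K →ₗ[k] K :=
  let d : K →ₗ[k] K := δ
  LinearMap.mulLeft k p ∘ₗ d ∘ₗ d + LinearMap.mulLeft k g ∘ₗ d + LinearMap.mulLeft k V

theorem secondOrder_apply (p g V y : K) :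
    secondOrder δ p g V y = p * δ (δ y) + g * δ y + V * y := rfl

theorem lagrange_identity {p g w : K} (V : K) (hw : δ (p * w) = g * w) (x y : K) :
    w * (x * secondOrder δ p g V y - y * secondOrder δ p g V x) =
      δ (p * w * (x * δ y - y * δ x)) := by
  rw [Derivation.leibniz, hw]
  simp only [secondOrder_apply, map_sub, Derivation.leibniz, smul_eq_mul]
  ring

section Eigenfunction

variable {δ} {p g V x : K} {m : k}

theorem secondOrder_sub_smul_eq (hx : x ≠ 0) (h : secondOrder δ p g V x = m • x) (y : K) :
    secondOrder δ p g V y - m • y =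
      p * δ (darboux δ x y) + (g + δ x / x * p) * darboux δ x y := by
  rw [secondOrder_apply, Algebra.smul_def] at h
  have hV : V = algebraMap k K m - (p * δ (δ x) + g * δ x) / x := by
    field_simp
    linear_combination h
  simp only [secondOrder_apply, darboux_apply, hV, map_sub, Derivation.leibniz,
    Derivation.leibniz_div, smul_eq_mul, Algebra.smul_def]
  field_simp
  ring

variable (δ) in
/-- Zeroth-order coefficient of the partner of `p y'' + g y' + V y` under the Darboux
transformation whose seed `x` is an eigenfunction with eigenvalue `m`. -/
def partnerPotential (p g x : K) (m : k) : K :=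
  algebraMap k K m + (δ (g + δ x / x * p) - δ x / x * (g + δ x / x * p))

theorem darboux_secondOrder (hx : x ≠ 0) (h : secondOrder δ p g V x = m • x) (y : K) :
    darboux δ x (secondOrder δ p g V y) =
      secondOrder δ p (g + δ p) (partnerPotential δ p g x m) (darboux δ x y) := by
  rw [← sub_add_cancel (secondOrder δ p g V y) (m • y), secondOrder_sub_smul_eq hx h, map_add,
    map_smul, darboux_apply δ x (_ + _), Algebra.smul_def m]
  simp only [secondOrder_apply, partnerPotential, map_add, Derivation.leibniz, smul_eq_mul]
  ring

end Eigenfunction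

/-- `u` is triangular for `D` with diagonal `μ`: each `u i` is an eigenvector of eigenvalue `μ i`
modulo the preceding members of the family. -/
def IsTriangular {k V : Type*} [CommRing k] [AddCommGroup V] [Module k V] {n : ℕ} (D : V →ₗ[k] V)
    (u : Fin n → V) (μ : Fin n → k) : Prop :=
  ∀ i, D (u i) - μ i • u i ∈ Submodule.span k (u '' Set.Iio i)

namespace IsTriangular

section Module

variable {k V V' : Type*} [CommRing k] [AddCommGroup V] [Module k V] [AddCommGroup V'] [Module k V']
  {n : ℕ} {D : V →ₗ[k] V} {D' : V' →ₗ[k] V'} {L : V →ₗ[k] V'}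

theorem apply_zero {u : Fin (n + 1) → V} {μ : Fin (n + 1) → k} (h : IsTriangular D u μ) :
    D (u 0) = μ 0 • u 0 := by
  have h0 := h 0
  rw [show Set.Iio (0 : Fin (n + 1)) = ∅ by ext; simp, Set.image_empty, Submodule.span_empty,
    Submodule.mem_bot] at h0
  exact sub_eq_zero.1 h0

theorem map {u : Fin n → V} {μ : Fin n → k} (h : IsTriangular D u μ)
    (hL : ∀ y, L (D y) = D' (L y)) : IsTriangular D' (fun i => L (u i)) μ := by
  intro i
  have hmem := Submodule.mem_map_of_mem (f := L) (h i)
  rwa [map_sub, hL, map_smul, Submodule.map_span, ← Set.image_comp] at hmem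

theorem map_tail {u : Fin (n + 1) → V} {μ : Fin (n + 1) → k} (h : IsTriangular D u μ)
    (hL : ∀ y, L (D y) = D' (L y)) (h0 : L (u 0) = 0) :
    IsTriangular D' (fun i => L (u i.succ)) (fun i => μ i.succ) := by
  intro i
  refine Submodule.span_le.2 ?_ (h.map hL i.succ)
  rintro _ ⟨j, hj, rfl⟩
  cases j using Fin.cases with
  | zero => simp [h0]
  | succ j => exact Submodule.subset_span ⟨j, Fin.succ_lt_succ_iff.1 hj, rfl⟩

end Module

variable {δ} {n : ℕ} {p g V : K} {u : Fin (n + 1) → K} {μ : Fin (n + 1) → k}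

theorem darboux_tail (h : IsTriangular (secondOrder δ p g V) u μ) (hu : u 0 ≠ 0) :
    IsTriangular (secondOrder δ p (g + δ p) (partnerPotential δ p g (u 0) (μ 0)))
      (fun i => darboux δ (u 0) (u i.succ)) (fun i => μ i.succ) :=
  h.map_tail (darboux_secondOrder hu h.apply_zero) (darboux_self δ hu)

theorem secondOrder_darboux (h : IsTriangular (secondOrder δ p g V) u μ)
    (hu : u 0 ≠ 0) {y : K} {m : k} (hy : secondOrder δ p g V y = m • y) :
    secondOrder δ p (g + δ p) (partnerPotential δ p g (u 0) (μ 0)) (darboux δ (u 0) y) =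
      m • darboux δ (u 0) y := by
  rw [← darboux_secondOrder hu h.apply_zero, hy, map_smul]

end IsTriangular

theorem derivation_pow_mul_weight {p g w : K} (hw : δ (p * w) = g * w) (n : ℕ) :
    δ (p * (p ^ n * w)) = (g + n * δ p) * (p ^ n * w) := by
  induction n with
  | zero => simpa using hw
  | succ n ih =>
    rw [show p * (p ^ (n + 1) * w) = p * (p * (p ^ n * w)) by ring, Derivation.leibniz, ih]
    simp only [smul_eq_mul]
    push_cast
    ring

section ChainIdentities

variable {δ} {n : ℕ} {p g V w : K} {u : Fin n → K} {μ : Fin n → k}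

theorem exists_darbouxChain_secondOrder (h : IsTriangular (secondOrder δ p g V) u μ)
    (hu : wronskian δ u ≠ 0) :
    ∃ V', ∀ y, darbouxChain δ u (secondOrder δ p g V y) =
      secondOrder δ p (g + n * δ p) V' (darbouxChain δ u y) := by
  induction n generalizing g V with
  | zero => exact ⟨V, fun y => by simp [darbouxChain_zero]⟩
  | succ n ih =>
    have hu0 := ne_zero_of_wronskian_ne_zero hu
    obtain ⟨V', hV'⟩ := ih (h.darboux_tail hu0) (wronskian_darboux_ne_zero hu)
    refine ⟨V', fun y => ?_⟩
    rw [darbouxChain_succ, darboux_secondOrder hu0 h.apply_zero, hV', darbouxChain_succ]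
    congr 2
    push_cast
    ring

theorem exists_darbouxChain_mul_darbouxChain (hw : δ (p * w) = g * w)
    (h : IsTriangular (secondOrder δ p g V) u μ) (hu : wronskian δ u ≠ 0) {z : K} {m : k}
    (hz : secondOrder δ p g V z = m • z) :
    ∃ R ∈ diffOperators δ, ∀ y, p ^ n * w * darbouxChain δ u y * darbouxChain δ u z =
      (∏ i, (μ i - m)) • (w * y * z) + δ (R y) := by
  induction n generalizing g V w z with
  | zero => exact ⟨0, zero_mem _, fun y => by simp [darbouxChain_zero]⟩
  | succ n ih =>
    have hu0 := ne_zero_of_wronskian_ne_zero hu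
    obtain ⟨R, hR, hRy⟩ := ih (w := p * w) (by simpa using derivation_pow_mul_weight δ hw 1)
      (h.darboux_tail hu0) (wronskian_darboux_ne_zero hu)
      (h.secondOrder_darboux hu0 hz)
    set P := ∏ i : Fin n, (μ i.succ - m) with hP
    refine ⟨R * darboux δ (u 0) + LinearMap.mulLeft k (P • (p * w * darboux δ (u 0) z)),
      add_mem (mul_mem hR (darboux_mem_diffOperators δ _)) (mulLeft_mem_diffOperators δ _),
      fun y => ?_⟩
    have factor_z := secondOrder_sub_smul_eq hu0 h.apply_zero z
    rw [hz] at factor_z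
    have step : P • (p * w * darboux δ (u 0) y * darboux δ (u 0) z) =
        ((μ 0 - m) * P) • (w * y * z) + δ (P • (p * w * darboux δ (u 0) z) * y) := by
      have hy : δ y = darboux δ (u 0) y + δ (u 0) / u 0 * y := by rw [darboux_apply]; ring
      have hpw : δ (p * w * darboux δ (u 0) z) =
          p * w * δ (darboux δ (u 0) z) + darboux δ (u 0) z * (g * w) := by
        rw [Derivation.leibniz, hw]; rfl
      rw [smul_mul_assoc, Derivation.map_smul, Derivation.leibniz, hpw, hy]
      simp only [Algebra.smul_def, map_mul, map_sub] at factor_z ⊢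
      linear_combination algebraMap k K P * w * y * factor_z
    rw [darbouxChain_succ, darbouxChain_succ, Fin.prod_univ_succ, ← hP,
      show p ^ (n + 1) * w = p ^ n * (p * w) by ring, hRy, step]
    simp [add_assoc, add_comm]

theorem exists_derivation_eq_darbouxChain_sq (hw : δ (p * w) = g * w)
    (h : IsTriangular (secondOrder δ p g V) u μ) (hu : wronskian δ u ≠ 0) {q : K} {m : k}
    (hq : secondOrder δ p g V q = m • q) :
    ∃ R ∈ diffOperators δ, ∀ z,
      δ (R (q - (secondOrder δ p g V z - m • z)) +
          p * (p ^ n * w) * (darbouxChain δ u q * δ (darbouxChain δ u z) -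
            darbouxChain δ u z * δ (darbouxChain δ u q)) -
          (∏ i, (μ i - m)) • (p * w * (q * δ z - z * δ q))) =
        p ^ n * w * darbouxChain δ u q ^ 2 - (∏ i, (μ i - m)) • (w * q ^ 2) := by
  obtain ⟨V', hV'⟩ := exists_darbouxChain_secondOrder h hu
  obtain ⟨R, hR, hRy⟩ := exists_darbouxChain_mul_darbouxChain hw h hu hq
  refine ⟨R, hR, fun z => ?_⟩
  have hTq : secondOrder δ p (g + n * δ p) V' (darbouxChain δ u q) = m • darbouxChain δ u q := by
    rw [← hV', hq, map_smul]
  have lagrange_T := lagrange_identity δ V' (derivation_pow_mul_weight δ hw n)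
    (darbouxChain δ u q) (darbouxChain δ u z)
  have lagrange_q := lagrange_identity δ V hw q z
  have hRz := hRy (q - (secondOrder δ p g V z - m • z))
  rw [map_sub, map_sub, map_smul, hV'] at hRz
  rw [hTq] at lagrange_T
  rw [hq] at lagrange_q
  rw [map_sub, map_add, Derivation.map_smul, ← lagrange_T, ← lagrange_q]
  simp only [Algebra.smul_def] at hRz ⊢
  linear_combination -hRz

theorem darbouxChain_wronskian (h : IsTriangular (secondOrder δ p g V) u μ)
    (hu : wronskian δ u ≠ 0) {y z : K} {m : k} (hy : secondOrder δ p g V y = m • y)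
    (hz : secondOrder δ p g V z = m • z) :
    p ^ n * (darbouxChain δ u y * δ (darbouxChain δ u z) -
        δ (darbouxChain δ u y) * darbouxChain δ u z) =
      (∏ i, (μ i - m)) • (y * δ z - δ y * z) := by
  induction n generalizing g V y z with
  | zero => simp [darbouxChain_zero]
  | succ n ih =>
    have hu0 := ne_zero_of_wronskian_ne_zero hu
    have ih' := ih (h.darboux_tail hu0) (wronskian_darboux_ne_zero hu)
      (h.secondOrder_darboux hu0 hy)
      (h.secondOrder_darboux hu0 hz)
    have factor_y := secondOrder_sub_smul_eq hu0 h.apply_zero y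
    have factor_z := secondOrder_sub_smul_eq hu0 h.apply_zero z
    rw [hy] at factor_y
    rw [hz] at factor_z
    have step : p * (darboux δ (u 0) y * δ (darboux δ (u 0) z) -
        δ (darboux δ (u 0) y) * darboux δ (u 0) z) = (μ 0 - m) • (y * δ z - δ y * z) := by
      have hδy : δ y = darboux δ (u 0) y + δ (u 0) / u 0 * y := by rw [darboux_apply]; ring
      have hδz : δ z = darboux δ (u 0) z + δ (u 0) / u 0 * z := by rw [darboux_apply]; ring
      rw [hδy, hδz]
      simp only [Algebra.smul_def, map_sub] at factor_y factor_z ⊢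
      linear_combination darboux δ (u 0) z * factor_y - darboux δ (u 0) y * factor_z
    rw [darbouxChain_succ, darbouxChain_succ, Fin.prod_univ_succ, mul_comm (μ 0 - m), mul_smul,
      ← step, ← mul_smul_comm, ← ih']
    ring

end ChainIdentities

end Darboux

/-! ### Rational functions -/

section RationalFunctions

variable {k : Type*} [Field k]

local notation "ι" => algebraMap k[X] (RatFunc k)

theorem formallyEtale_ratFunc (k : Type*) [Field k] : Algebra.FormallyEtale k[X] (RatFunc k) :=
  .of_isLocalization (nonZeroDivisors k[X])

/-- Differentiation of rational functions, obtained from the derivation `d/dX : k[X] → k(X)`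
because derivations extend uniquely along the localization `k[X] → k(X)`. -/
def ratDeriv (k : Type*) [Field k] : Derivation k (RatFunc k) (RatFunc k) :=
  haveI := formallyEtale_ratFunc k
  ((mkDerivation k (1 : RatFunc k)).liftKaehlerDifferential.liftBaseChange (RatFunc k) ∘ₗ
    (KaehlerDifferential.tensorKaehlerEquivOfFormallyEtale k k[X]
      (RatFunc k)).symm.toLinearMap).compDer (KaehlerDifferential.D k (RatFunc k))

theorem ratDeriv_algebraMap (q : k[X]) : ratDeriv k (ι q) = ι (derivative q) := by
  have := formallyEtale_ratFunc k
  simp [ratDeriv, KaehlerDifferential.tensorKaehlerEquivOfFormallyEtale_symm_D_algebraMap,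
    mkDerivation_apply, Algebra.smul_def]

theorem wronskian_algebraMap {n : ℕ} (u : Fin n → k[X]) :
    wronskian (ratDeriv k) (fun i => ι (u i)) = ι (wronskian derivative u) :=
  (map_wronskian (algebraMap k[X] (RatFunc k)) (fun q => (ratDeriv_algebraMap q).symm) u).symm

theorem wronskian_algebraMap_ne_zero {n : ℕ} {u : Fin n → k[X]} :
    wronskian (ratDeriv k) (fun i => ι (u i)) ≠ 0 ↔ wronskian derivative u ≠ 0 := by
  rw [wronskian_algebraMap, map_ne_zero_iff _ (RatFunc.algebraMap_injective k)]

theorem algebraMap_snoc {n : ℕ} (u : Fin n → k[X]) (y : k[X]) :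
    (fun i => ι ((Fin.snoc u y : Fin (n + 1) → k[X]) i)) =
      (Fin.snoc (fun i => ι (u i)) (ι y) : Fin (n + 1) → RatFunc k) := by
  ext i
  refine Fin.lastCases ?_ (fun i => ?_) i <;> simp

theorem wronskian_derivative_ne_zero_of_snoc {n : ℕ} {u : Fin n → k[X]} {y : k[X]}
    (h : wronskian derivative (Fin.snoc u y : Fin (n + 1) → k[X]) ≠ 0) :
    wronskian derivative u ≠ 0 := by
  rw [← wronskian_algebraMap_ne_zero] at h ⊢
  rw [algebraMap_snoc] at h
  exact wronskian_ne_zero_of_snoc _ h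

theorem algebraMap_wronskian_mul_darbouxChain {n : ℕ} {u : Fin n → k[X]}
    (h : wronskian derivative u ≠ 0) (y : k[X]) :
    ι (wronskian derivative u) * darbouxChain (ratDeriv k) (fun i => ι (u i)) (ι y) =
      ι (wronskian derivative (Fin.snoc u y : Fin (n + 1) → k[X])) := by
  rw [← wronskian_algebraMap, ← wronskian_algebraMap, algebraMap_snoc,
    wronskian_snoc _ (wronskian_algebraMap_ne_zero.2 h)]

theorem algebraMap_denom_ne_zero (f : RatFunc k) : ι f.denom ≠ 0 :=
  RatFunc.algebraMap_ne_zero f.denom_ne_zero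

theorem algebraMap_denom_mul (f : RatFunc k) : ι f.denom * f = ι f.num := by
  rw [mul_comm, ← eq_div_iff (algebraMap_denom_ne_zero f), RatFunc.num_div_denom]

theorem algebraMap_sq_mul_ratDeriv {f : RatFunc k} {d q : k[X]} (h : ι d * f = ι q) :
    ι (d ^ 2) * ratDeriv k f = ι (d * derivative q - derivative d * q) := by
  have h' := congrArg (ratDeriv k) h
  simp only [Derivation.leibniz, ratDeriv_algebraMap, smul_eq_mul] at h'
  simp only [map_mul, map_sub, map_pow]
  linear_combination ι d * h' - ι (derivative d) * h

/-- `f` vanishes at `x` to order at least `m`; for `m = 0` this says that `f` is regular at `x`. -/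
def VanishesToOrder (x : k) (m : ℕ) (f : RatFunc k) : Prop :=
  ∃ e s : k[X], e.eval x ≠ 0 ∧ ι e * f = ι ((X - C x) ^ m * s)

namespace VanishesToOrder

variable {x : k} {m l : ℕ} {f g : RatFunc k}

theorem mono (h : VanishesToOrder x l f) (hml : m ≤ l) : VanishesToOrder x m f := by
  obtain ⟨j, rfl⟩ := Nat.exists_eq_add_of_le hml
  obtain ⟨e, s, he, h⟩ := h
  exact ⟨e, (X - C x) ^ j * s, he, by rw [h, pow_add, mul_assoc]⟩

theorem add (hf : VanishesToOrder x m f) (hg : VanishesToOrder x m g) :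
    VanishesToOrder x m (f + g) := by
  obtain ⟨e, s, he, h⟩ := hf
  obtain ⟨e', s', he', h'⟩ := hg
  refine ⟨e * e', e' * s + e * s', by simp [he, he'], ?_⟩
  simp only [map_mul, map_add, map_pow] at *
  linear_combination ι e' * h + ι e * h'

theorem mul (hf : VanishesToOrder x m f) (hg : VanishesToOrder x l g) :
    VanishesToOrder x (m + l) (f * g) := by
  obtain ⟨e, s, he, h⟩ := hf
  obtain ⟨e', s', he', h'⟩ := hg
  refine ⟨e * e', s * s', by simp [he, he'], ?_⟩
  rw [map_mul, mul_mul_mul_comm, h, h', ← map_mul]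
  congr 1
  ring

theorem algebraMap_of_dvd {q : k[X]} (h : (X - C x) ^ m ∣ q) : VanishesToOrder x m (ι q) := by
  obtain ⟨s, rfl⟩ := h
  exact ⟨1, s, by simp, by simp⟩

theorem of_algebraMap (q : k[X]) : VanishesToOrder x 0 (ι q) := algebraMap_of_dvd (by simp)

theorem of_algebraMap_mul_eq {d q : k[X]} (hd : d.eval x ≠ 0) (h : ι d * f = ι q) :
    VanishesToOrder x 0 f :=
  ⟨d, q, hd, by rwa [pow_zero, one_mul]⟩

theorem ratDeriv_of_algebraMap_mul_eq {d q : k[X]} (hd : d.eval x ≠ 0) (h : ι d * f = ι q) :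
    VanishesToOrder x 0 (ExceptionalJacobi.ratDeriv k f) :=
  of_algebraMap_mul_eq (by simpa using hd) (algebraMap_sq_mul_ratDeriv h)

theorem smul (r : k) (hf : VanishesToOrder x m f) : VanishesToOrder x m (r • f) := by
  simpa [Algebra.smul_def, RatFunc.algebraMap_eq_C] using (of_algebraMap (C r)).mul hf

theorem sub (hf : VanishesToOrder x m f) (hg : VanishesToOrder x m g) :
    VanishesToOrder x m (f - g) := by
  simpa [sub_eq_add_neg] using hf.add (hg.smul (-1))

theorem ratDeriv (hf : VanishesToOrder x (m + 1) f) : VanishesToOrder x m (ratDeriv k f) := by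
  obtain ⟨e, s, he, h⟩ := hf
  refine ⟨e * e, e * (((m : k[X]) + 1) * s + (X - C x) * derivative s) -
    derivative e * (X - C x) * s, by simp [he], ?_⟩
  have h' := congrArg (ExceptionalJacobi.ratDeriv k) h
  rw [Derivation.leibniz, ratDeriv_algebraMap, ratDeriv_algebraMap, derivative_mul,
    derivative_X_sub_C_pow, Nat.add_sub_cancel] at h'
  simp only [map_mul, map_add, map_sub, map_pow, map_natCast, map_one, smul_eq_mul,
    Nat.cast_add, Nat.cast_one] at *
  linear_combination ι e * h' - ι (derivative e) * h

theorem exists_mul_left (x : k) (r : RatFunc k) :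
    ∃ j, ∀ m f, VanishesToOrder x (m + j) f → VanishesToOrder x m (r * f) := by
  obtain ⟨d, hd, hndvd⟩ :=
    exists_eq_pow_rootMultiplicity_mul_and_not_dvd r.denom r.denom_ne_zero x
  refine ⟨r.denom.rootMultiplicity x, fun m f ⟨e, s, he, h⟩ => ⟨d * e, r.num * s, ?_, ?_⟩⟩
  · rw [eval_mul]
    exact mul_ne_zero (fun h0 => hndvd (dvd_iff_isRoot.2 h0)) he
  · have hX : ι (X - C x) ^ r.denom.rootMultiplicity x ≠ 0 :=
      pow_ne_zero _ (RatFunc.algebraMap_ne_zero (X_sub_C_ne_zero x))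
    have hr := algebraMap_denom_mul r
    rw [congrArg ι hd] at hr
    refine mul_left_cancel₀ hX ?_
    simp only [map_mul, map_pow, pow_add] at *
    linear_combination ι e * f * hr + ι r.num * h

theorem exists_of_mem_diffOperators {R : Module.End k (RatFunc k)}
    (hR : R ∈ diffOperators (ExceptionalJacobi.ratDeriv k)) (x : k) :
    ∃ j, ∀ m f, VanishesToOrder x (m + j) f → VanishesToOrder x m (R f) := by
  induction hR using Algebra.adjoin_induction with
  | mem R hR =>
    obtain rfl | ⟨r, rfl⟩ := hR
    · exact ⟨1, fun m f h => h.ratDeriv⟩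
    · exact exists_mul_left x r
  | algebraMap r => exact ⟨0, fun m f h => h.smul r⟩
  | add R S _ _ hR hS =>
    obtain ⟨i, hi⟩ := hR
    obtain ⟨j, hj⟩ := hS
    exact ⟨i + j, fun m f h => (hi m f (h.mono (by omega))).add (hj m f (h.mono (by omega)))⟩
  | mul R S _ _ hR hS =>
    obtain ⟨i, hi⟩ := hR
    obtain ⟨j, hj⟩ := hS
    exact ⟨i + j, fun m f h => hi _ _ (hj _ _ (by rwa [add_assoc]))⟩

theorem eval_num_eq_zero (h : VanishesToOrder x 1 f) : f.num.eval x = 0 := by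
  obtain ⟨e, s, he, h⟩ := h
  have h' : e * f.num = f.denom * ((X - C x) * s) := by
    apply RatFunc.algebraMap_injective k
    rw [map_mul, ← algebraMap_denom_mul, map_mul]
    rw [pow_one] at h
    linear_combination ι f.denom * h
  simpa [he] using congrArg (eval x) h'

theorem eval_denom_ne_zero [CharZero k] (h : VanishesToOrder x 0 (ExceptionalJacobi.ratDeriv k f)) :
    f.denom.eval x ≠ 0 := by
  intro h0
  obtain ⟨e, s, he, h⟩ := h
  have h' : e * (f.denom * derivative f.num - derivative f.denom * f.num) = f.denom ^ 2 * s := by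
    apply RatFunc.algebraMap_injective k
    rw [map_mul, ← algebraMap_sq_mul_ratDeriv (algebraMap_denom_mul f), map_mul]
    simp only [pow_zero, one_mul] at h
    linear_combination ι (f.denom ^ 2) * h
  have hdvd : f.denom ∣ (e * f.num) * derivative f.denom :=
    ⟨e * derivative f.num - f.denom * s, by linear_combination -h'⟩
  have hcop : IsCoprime (X - C x) (e * f.num) := by
    refine (Irreducible.coprime_iff_not_dvd (irreducible_X_sub_C x)).2 ?_
    rw [dvd_iff_isRoot, IsRoot, eval_mul, mul_eq_zero, not_or]
    refine ⟨he, fun hnum => ?_⟩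
    obtain ⟨A, B, hAB⟩ := f.isCoprime_num_denom
    simpa [hnum, h0] using congrArg (eval x) hAB
  have hpow : (X - C x) ^ f.denom.rootMultiplicity x ∣ derivative f.denom :=
    hcop.pow_left.dvd_of_dvd_mul_left ((pow_rootMultiplicity_dvd _ _).trans hdvd)
  have hderiv : derivative f.denom ≠ 0 := fun hconst => by
    rw [eq_C_of_derivative_eq_zero hconst, eval_C] at h0
    exact f.denom_ne_zero (by rw [eq_C_of_derivative_eq_zero hconst, h0, C_0])
  have hle := (le_rootMultiplicity_iff hderiv).2 hpow
  rw [derivative_rootMultiplicity_of_root h0] at hle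
  have hpos := (rootMultiplicity_pos f.denom_ne_zero).2 h0
  omega

end VanishesToOrder

end RationalFunctions

theorem monotoneOn_eval_div_eval {a b : ℝ} {n d : ℝ[X]} (hd : ∀ x ∈ Set.Icc a b, d.eval x ≠ 0)
    (h : ∀ x ∈ Set.Ioo a b, 0 ≤ eval x (d * derivative n - derivative d * n)) :
    MonotoneOn (fun x => n.eval x / d.eval x) (Set.Icc a b) := by
  refine monotoneOn_of_deriv_nonneg (convex_Icc _ _)
    (n.continuous.continuousOn.div d.continuous.continuousOn hd) ?_ ?_
  · rw [interior_Icc]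
    intro x hx
    exact (n.differentiableAt.div d.differentiableAt
      (hd x (Set.Ioo_subset_Icc_self hx))).differentiableWithinAt
  · rw [interior_Icc]
    intro x hx
    rw [((n.hasDerivAt x).fun_div (d.hasDerivAt x) (hd x (Set.Ioo_subset_Icc_self hx))).deriv]
    refine div_nonneg ?_ (sq_nonneg _)
    have hx := h x hx
    simp only [eval_sub, eval_mul] at hx
    linarith

theorem eq_zero_of_ratDeriv_nonneg_of_vanishesToOrder {a b : ℝ} (hab : a < b) {f : RatFunc ℝ}
    {c d : ℝ[X]} (hd : ∀ x ∈ Set.Icc a b, d.eval x ≠ 0) (hc : ∀ x ∈ Set.Icc a b, 0 ≤ c.eval x)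
    (hf : algebraMap ℝ[X] (RatFunc ℝ) (d ^ 2) * ratDeriv ℝ f = algebraMap ℝ[X] (RatFunc ℝ) c)
    (ha : VanishesToOrder a 1 f) (hb : VanishesToOrder b 1 f) : c = 0 := by
  have hdenom : ∀ x ∈ Set.Icc a b, f.denom.eval x ≠ 0 := fun x hx =>
    VanishesToOrder.eval_denom_ne_zero ⟨d ^ 2, c, by simpa using hd x hx, by simp [← hf]⟩
  have hderiv : d ^ 2 * (f.denom * derivative f.num - derivative f.denom * f.num) =
      c * f.denom ^ 2 := by
    apply RatFunc.algebraMap_injective ℝ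
    rw [map_mul, ← algebraMap_sq_mul_ratDeriv (algebraMap_denom_mul f), map_mul, ← hf]
    ring
  have hmono : MonotoneOn (fun x => f.num.eval x / f.denom.eval x) (Set.Icc a b) := by
    refine monotoneOn_eval_div_eval hdenom fun x hx => ?_
    have hx' := Set.Ioo_subset_Icc_self hx
    have hsq : 0 < eval x d ^ 2 := by have := hd x hx'; positivity
    refine nonneg_of_mul_nonneg_right (a := eval x d ^ 2) ?_ hsq
    rw [← eval_pow, ← eval_mul, hderiv, eval_mul, eval_pow]
    exact mul_nonneg (hc x hx') (sq_nonneg _)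
  have hnum : f.num = 0 := by
    refine eq_zero_of_infinite_isRoot _ ((Set.Icc_infinite hab).mono fun x hx => ?_)
    have hle := hmono hx (Set.right_mem_Icc.2 hab.le) hx.2
    have hge := hmono (Set.left_mem_Icc.2 hab.le) hx hx.1
    simp only [ha.eval_num_eq_zero, hb.eval_num_eq_zero, zero_div] at hle hge
    exact (div_eq_zero_iff.1 (le_antisymm hle hge)).resolve_right (hdenom x hx)
  rw [hnum, derivative_zero, mul_zero, mul_zero, sub_zero, mul_zero] at hderiv
  exact (mul_eq_zero.1 hderiv.symm).resolve_right (pow_ne_zero 2 f.denom_ne_zero)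

/-! ### The Jacobi operator and its eigenfunctions -/

/-- The Jacobi differential operator `y ↦ (1 - x²) y'' + (B - A - (A + B + 2) x) y'`. -/
def jacobiOp (A B : ℝ) : ℝ[X] →ₗ[ℝ] ℝ[X] :=
  LinearMap.mulLeft ℝ (1 - X ^ 2) ∘ₗ derivative ∘ₗ derivative +
    LinearMap.mulLeft ℝ (C (B - A) - C (A + B + 2) * X) ∘ₗ derivative

lemma jacobiOp_apply (A B : ℝ) (y : ℝ[X]) :
    jacobiOp A B y = (1 - X ^ 2) * derivative (derivative y) +
      (C (B - A) - C (A + B + 2) * X) * derivative y := rfl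

lemma X_sub_C_mul_derivative_pow (c : ℝ) (m : ℕ) :
    (X - C c) * derivative ((X - C c) ^ m) = C (m : ℝ) * (X - C c) ^ m := by
  cases m with
  | zero => simp
  | succ m => simp only [derivative_X_sub_C_pow]; push_cast; ring

lemma X_sub_C_mul_derivative_derivative_pow (c : ℝ) (m : ℕ) :
    (X - C c) * derivative (derivative ((X - C c) ^ m)) =
      (C (m : ℝ) - 1) * (C (m : ℝ) * (X - C c) ^ (m - 1)) := by
  have h := congrArg derivative (X_sub_C_mul_derivative_pow c m)
  rw [derivative_mul, derivative_X_sub_C, derivative_C_mul, derivative_X_sub_C_pow] at h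
  rw [derivative_X_sub_C_pow]
  linear_combination h

lemma jacobiOp_X_sub_C_pow_mul_pow (A B : ℝ) (m l : ℕ) :
    jacobiOp A B ((X - C 1) ^ m * (X - C (-1)) ^ l) =
      -(C (m * (m + A)) * ((X - C 1) ^ (m - 1) * (X - C (-1)) ^ (l + 1)) +
        C (l * (l + B)) * ((X - C 1) ^ (m + 1) * (X - C (-1)) ^ (l - 1)) +
        C (2 * m * l + (A + 1) * l + (B + 1) * m) * ((X - C 1) ^ m * (X - C (-1)) ^ l)) := by
  have s1 : derivative ((X - C (1 : ℝ)) ^ m) = C (m : ℝ) * (X - C 1) ^ (m - 1) :=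
    derivative_X_sub_C_pow 1 m
  have t1 : derivative ((X - C (-1 : ℝ)) ^ l) = C (l : ℝ) * (X - C (-1)) ^ (l - 1) :=
    derivative_X_sub_C_pow (-1) l
  have ss1 := X_sub_C_mul_derivative_pow 1 m
  have tt1 := X_sub_C_mul_derivative_pow (-1) l
  have ss2 := X_sub_C_mul_derivative_derivative_pow 1 m
  have tt2 := X_sub_C_mul_derivative_derivative_pow (-1) l
  rw [jacobiOp_apply]
  simp only [derivative_mul, derivative_add, pow_succ _ l, pow_succ _ m]
  generalize derivative (derivative ((X - C (1 : ℝ)) ^ m)) = S2 at *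
  generalize derivative (derivative ((X - C (-1 : ℝ)) ^ l)) = T2 at *
  rw [s1, t1] at *
  generalize (X - C (1 : ℝ)) ^ (m - 1) = S at *
  generalize (X - C (-1 : ℝ)) ^ (l - 1) = T at *
  generalize (X - C (1 : ℝ)) ^ m = S0 at *
  generalize (X - C (-1 : ℝ)) ^ l = T0 at *
  simp only [C_add, C_sub, C_mul, C_neg, C_1, C_ofNat] at *
  linear_combination (-(X + 1) * T0) * ss2 - (X - 1) * S0 * tt2
    - ((X + 1) * C (l : ℝ) * T * 2 + (C B + 1) * T0) * ss1
    - (2 * C (m : ℝ) * S0 + (C A + 1) * S0) * tt1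

lemma genBinom_zero (z : ℝ) : genBinom z 0 = 1 := by simp [genBinom]

lemma genBinom_succ (z : ℝ) (k : ℕ) : genBinom z (k + 1) * (k + 1) = genBinom z k * (z - k) := by
  simp only [genBinom, prod_range_succ, Nat.factorial_succ]
  push_cast
  field_simp

/-- The coefficient of `((x - 1) / 2) ^ (n - j) * ((x + 1) / 2) ^ j` in `P_n^{A,B}`. -/
def jacobiCoeff (A B : ℝ) (n j : ℕ) : ℝ :=
  genBinom ((n : ℝ) + A) j * genBinom ((n : ℝ) + B) (n - j)

lemma jacobiCoeff_recurrence (A B : ℝ) (j m : ℕ) :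
    jacobiCoeff A B (j + m + 1) j * ((m + 1) * (m + 1 + A)) =
      jacobiCoeff A B (j + m + 1) (j + 1) * ((j + 1) * (j + 1 + B)) := by
  have hj := genBinom_succ (((j + m + 1 : ℕ) : ℝ) + A) j
  have hm := genBinom_succ (((j + m + 1 : ℕ) : ℝ) + B) m
  have hjm : j + m + 1 - j = m + 1 := by omega
  have hjm' : j + m + 1 - (j + 1) = m := by omega
  simp only [jacobiCoeff, hjm, hjm']
  push_cast at *
  linear_combination (genBinom ((j : ℝ) + m + 1 + A) j * ((m : ℝ) + 1 + A)) * hm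
    - genBinom ((j : ℝ) + m + 1 + B) m * (j + 1 + B) * hj

/-- The Jacobi polynomial `P_n^{A,B}` as a formal polynomial. -/
def jacobiPoly (A B : ℝ) (n : ℕ) : ℝ[X] :=
  C ((2 : ℝ)⁻¹ ^ n) * ∑ j ∈ range (n + 1),
    C (jacobiCoeff A B n j) * ((X - C 1) ^ (n - j) * (X - C (-1)) ^ j)

lemma eval_jacobiPoly (A B : ℝ) (n : ℕ) (x : ℝ) :
    (jacobiPoly A B n).eval x = jacobiP A B n x := by
  simp only [jacobiPoly, jacobiP, jacobiCoeff, eval_mul, eval_C, eval_finsetSum, eval_pow,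
    eval_sub, eval_X, sub_neg_eq_add, mul_assoc]

lemma sum_jacobiCoeff_reindex (A B : ℝ) (n : ℕ) (S T : ℝ[X]) :
    ∑ j ∈ range (n + 1), C (jacobiCoeff A B n j * ((n - j : ℕ) * ((n - j : ℕ) + A))) *
        (S ^ (n - j - 1) * T ^ (j + 1)) =
      ∑ j ∈ range (n + 1), C (jacobiCoeff A B n j * (j * (j + B))) *
        (S ^ (n - j) * T ^ j) := by
  rw [sum_range_succ, sum_range_succ' fun j => C (jacobiCoeff A B n j * (j * (j + B))) * _]
  simp only [Nat.sub_self, Nat.cast_zero, zero_mul, mul_zero, C_0, add_zero]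
  refine sum_congr rfl fun j hj => ?_
  obtain ⟨m, rfl⟩ : ∃ m, n = j + m + 1 := ⟨n - j - 1, by have := mem_range.1 hj; omega⟩
  have hjm : j + m + 1 - j = m + 1 := by omega
  have hjm' : j + m + 1 - (j + 1) = m := by omega
  have h := jacobiCoeff_recurrence A B j m
  rw [hjm, hjm', Nat.add_sub_cancel]
  push_cast
  rw [h]

lemma sum_jacobiCoeff_reindex' (A B : ℝ) (n : ℕ) (S T : ℝ[X]) :
    ∑ j ∈ range (n + 1), C (jacobiCoeff A B n j * (j * (j + B))) *
        (S ^ (n - j + 1) * T ^ (j - 1)) =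
      ∑ j ∈ range (n + 1), C (jacobiCoeff A B n j * ((n - j : ℕ) * ((n - j : ℕ) + A))) *
        (S ^ (n - j) * T ^ j) := by
  rw [sum_range_succ', sum_range_succ fun j => C (jacobiCoeff A B n j * (_ * (_ + A))) * _]
  simp only [Nat.sub_self, Nat.cast_zero, zero_mul, mul_zero, C_0, add_zero]
  refine sum_congr rfl fun j hj => ?_
  obtain ⟨m, rfl⟩ : ∃ m, n = j + m + 1 := ⟨n - j - 1, by have := mem_range.1 hj; omega⟩
  have hjm : j + m + 1 - j = m + 1 := by omega
  have hjm' : j + m + 1 - (j + 1) = m := by omega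
  have h := jacobiCoeff_recurrence A B j m
  rw [hjm, hjm', Nat.add_sub_cancel]
  push_cast
  rw [h]

lemma jacobiOp_jacobiPoly (A B : ℝ) (n : ℕ) :
    jacobiOp A B (jacobiPoly A B n) = -lam A B n • jacobiPoly A B n := by
  have hterm : ∀ j, jacobiOp A B (C (jacobiCoeff A B n j) *
      ((X - C 1) ^ (n - j) * (X - C (-1)) ^ j)) =
      -(C (jacobiCoeff A B n j * ((n - j : ℕ) * ((n - j : ℕ) + A))) *
          ((X - C 1) ^ (n - j - 1) * (X - C (-1)) ^ (j + 1)) +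
        C (jacobiCoeff A B n j * (j * (j + B))) *
          ((X - C 1) ^ (n - j + 1) * (X - C (-1)) ^ (j - 1)) +
        C (jacobiCoeff A B n j *
          (2 * (n - j : ℕ) * j + (A + 1) * j + (B + 1) * (n - j : ℕ))) *
          ((X - C 1) ^ (n - j) * (X - C (-1)) ^ j)) := fun j => by
    rw [← smul_eq_C_mul, map_smul, jacobiOp_X_sub_C_pow_mul_pow, smul_eq_C_mul]
    simp only [C_mul]
    ring
  rw [jacobiPoly, ← smul_eq_C_mul, map_smul, smul_comm, map_sum]
  congr 1
  simp only [hterm, sum_neg_distrib, sum_add_distrib, sum_jacobiCoeff_reindex,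
    sum_jacobiCoeff_reindex', neg_smul, smul_sum, neg_inj]
  rw [← sum_add_distrib, ← sum_add_distrib]
  refine sum_congr rfl fun j hj => ?_
  rw [smul_eq_C_mul, ← mul_assoc (C (lam A B n)), ← C_mul, ← add_mul, ← add_mul, ← C_add,
    ← C_add]
  congr 2
  rw [Nat.cast_sub (mem_range_succ_iff.1 hj), lam]
  ring

/-- An endpoint `ε` of `[-1, 1]` together with the parameter of the Jacobi operator attached
to it; the indicial exponents of the operator at `ε` are `0` and minus that parameter. -/
inductive IsEndpoint (A B : ℝ) : ℝ → ℝ → Prop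
  | one : IsEndpoint A B 1 A
  | neg_one : IsEndpoint A B (-1) B

lemma taylor_jacobiOp {A B ε γ : ℝ} (h : IsEndpoint A B ε γ) (y : ℝ[X]) :
    taylor ε (jacobiOp A B y) =
      C (-2 * ε) * (X * derivative (derivative (taylor ε y)))
        - X * (X * derivative (derivative (taylor ε y)))
        + C (-2 * ε * (1 + γ)) * derivative (taylor ε y)
        - C (A + B + 2) * (X * derivative (taylor ε y)) := by
  have taylor_derivative (q : ℝ[X]) : taylor ε (derivative q) = derivative (taylor ε q) := by
    simp [taylor_apply, derivative_comp]
  rw [jacobiOp_apply, map_add, taylor_mul, taylor_mul, taylor_derivative, taylor_derivative]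
  cases h <;>
  · simp only [map_sub, taylor_mul, taylor_pow, taylor_one, taylor_X, taylor_C]
    simp only [C_mul, C_add, C_neg, C_1, C_ofNat]
    ring

lemma coeff_taylor_jacobiOp {A B ε γ : ℝ} (h : IsEndpoint A B ε γ) (y : ℝ[X]) (j : ℕ) :
    (taylor ε (jacobiOp A B y)).coeff j =
      -2 * ε * (j + 1) * (j + 1 + γ) * (taylor ε y).coeff (j + 1)
        - lam A B j * (taylor ε y).coeff j := by
  rw [taylor_jacobiOp h, lam]
  rcases j with _ | _ | j
  · simp [coeff_derivative]
  all_goals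
    simp only [coeff_add, coeff_sub, coeff_C_mul, coeff_X_mul, coeff_derivative, coeff_X_mul_zero]
    push_cast
    ring

lemma IsEndpoint.ne_zero {A B ε γ : ℝ} (h : IsEndpoint A B ε γ) : ε ≠ 0 := by
  cases h <;> norm_num

lemma X_sub_C_pow_dvd_iff_coeff_taylor (ε : ℝ) (k : ℕ) (y : ℝ[X]) :
    (X - C ε) ^ k ∣ y ↔ ∀ j < k, (taylor ε y).coeff j = 0 := by
  rw [X_sub_C_pow_dvd_iff, X_pow_dvd_iff, taylor_apply]

lemma pow_dvd_of_jacobiOp_eq_smul {A B ε γ μ : ℝ} {k : ℕ} {y : ℝ[X]} (hε : IsEndpoint A B ε γ)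
    (hγ : ∀ j < k, j ≠ 0 → (j : ℝ) + γ ≠ 0) (h0 : y.eval ε = 0)
    (h : jacobiOp A B y = μ • y) : (X - C ε) ^ k ∣ y := by
  rw [X_sub_C_pow_dvd_iff_coeff_taylor]
  intro j
  induction j with
  | zero => intro _; simpa using h0
  | succ j ih =>
    intro hj
    have hrec := coeff_taylor_jacobiOp hε y j
    have hne : -2 * ε * (j + 1) * (j + 1 + γ) ≠ 0 := by
      have hj' := hγ (j + 1) hj (by omega)
      push_cast at hj'
      exact mul_ne_zero (mul_ne_zero (mul_ne_zero (by norm_num) hε.ne_zero) (by positivity)) hj'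
    rw [h, map_smul, coeff_smul, ih (by omega), smul_zero, mul_zero, sub_zero] at hrec
    exact (mul_eq_zero.1 hrec.symm).resolve_left hne

lemma pow_dvd_of_pow_dvd_jacobiOp_sub_smul {A B ε μ : ℝ} {k : ℕ} {y : ℝ[X]}
    (hε : IsEndpoint A B ε (-k)) (hμ : ∀ j < k, μ ≠ -lam A B j)
    (h : (X - C ε) ^ k ∣ jacobiOp A B y - μ • y) : (X - C ε) ^ k ∣ y := by
  rw [X_sub_C_pow_dvd_iff_coeff_taylor] at h ⊢
  -- The recurrence is solved downwards: its leading factor vanishes at `j + 1 = k`.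
  have hstep (j : ℕ) (hj : j < k) (hj' : j + 1 = k ∨ (taylor ε y).coeff (j + 1) = 0) :
      (taylor ε y).coeff j = 0 := by
    have hrec := h j hj
    rw [map_sub, map_smul, coeff_sub, coeff_smul, coeff_taylor_jacobiOp hε, smul_eq_mul] at hrec
    have hlead : -2 * ε * (j + 1) * (j + 1 + -(k : ℝ)) * (taylor ε y).coeff (j + 1) = 0 := by
      rcases hj' with rfl | hj'
      · push_cast; ring
      · rw [hj', mul_zero]
    have hmul : (μ + lam A B j) * (taylor ε y).coeff j = 0 := by linear_combination hlead - hrec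
    exact (mul_eq_zero.1 hmul).resolve_left fun h0 => hμ j hj (by linarith)
  intro j hj
  induction hn : k - j using Nat.strong_induction_on generalizing j with
  | _ n ih =>
    refine hstep j hj ?_
    by_cases hjk : j + 1 = k
    · exact .inl hjk
    · exact .inr (ih (k - (j + 1)) (by omega) (j + 1) (by omega) rfl)

lemma genBinom_natCast (m k : ℕ) : genBinom m k = m.choose k := by
  rw [genBinom, ← descPochhammer_eval_eq_prod_range, descPochhammer_eval_eq_descFactorial,
    Nat.descFactorial_eq_factorial_mul_choose, Nat.cast_mul, mul_div_cancel_left₀ _ (by positivity)]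

lemma neg_one_pow_mul_genBinom_sub (z : ℝ) (n : ℕ) :
    (-1) ^ n * genBinom (n - z) n = genBinom (z - 1) n := by
  rw [genBinom, genBinom, ← mul_div_assoc, ← prod_range_reflect]
  congr 1
  rw [← card_range n, ← prod_const, card_range, ← prod_mul_distrib]
  refine prod_congr rfl fun i hi => ?_
  rw [Nat.sub_sub, Nat.cast_sub (by have := mem_range.1 hi; omega)]
  push_cast
  ring

lemma neg_one_pow_mul_genBinom_neg {b : ℕ} (hb : 0 < b) (n : ℕ) :
    (-1) ^ n * genBinom (n + -(b : ℝ)) n = (b - 1).choose n := by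
  rw [← sub_eq_add_neg, neg_one_pow_mul_genBinom_sub, ← genBinom_natCast, Nat.cast_pred hb]

lemma eval_one_jacobiPoly (A B : ℝ) (n : ℕ) :
    (jacobiPoly A B n).eval 1 = genBinom (n + A) n := by
  simp only [jacobiPoly, jacobiCoeff, eval_mul, eval_C, eval_finsetSum, eval_pow, eval_sub, eval_X]
  rw [sum_range_succ, sum_eq_zero fun j hj => by
    have : n - j ≠ 0 := by have := mem_range.1 hj; omega
    simp [this]]
  norm_num [genBinom_zero, mul_comm]
  rw [mul_assoc, ← mul_pow]
  norm_num

lemma eval_neg_one_jacobiPoly (A B : ℝ) (n : ℕ) :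
    (jacobiPoly A B n).eval (-1) = (-1) ^ n * genBinom (n + B) n := by
  simp only [jacobiPoly, jacobiCoeff, eval_mul, eval_C, eval_finsetSum, eval_pow, eval_sub, eval_X]
  rw [sum_range_succ', sum_eq_zero fun j _ => by simp]
  simp only [genBinom_zero, Nat.sub_zero, pow_zero, mul_one, one_mul, zero_add]
  rw [mul_left_comm, ← mul_pow, mul_comm]
  norm_num

lemma natDegree_jacobiPoly_le (A B : ℝ) (n : ℕ) : (jacobiPoly A B n).natDegree ≤ n := by
  refine (natDegree_C_mul_le _ _).trans (natDegree_sum_le_of_forall_le _ _ fun j hj => ?_)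
  refine (natDegree_C_mul_le _ _).trans (natDegree_mul_le.trans ?_)
  rw [natDegree_pow, natDegree_pow, natDegree_X_sub_C, natDegree_X_sub_C]
  have := mem_range.1 hj
  omega

lemma one_sub_X_mul_derivative_pow (a : ℕ) :
    (1 - X) * derivative ((1 - X) ^ a) = -(C (a : ℝ) * (1 - X : ℝ[X]) ^ a) := by
  cases a with
  | zero => simp
  | succ a =>
    simp only [derivative_pow_succ, derivative_sub, derivative_one, derivative_X, Nat.cast_succ]
    ring

lemma jacobiOp_one_sub_X_pow_mul (B : ℝ) (a : ℕ) (z : ℝ[X]) :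
    jacobiOp (-a) B ((1 - X) ^ a * z) =
      (1 - X) ^ a * (jacobiOp a B z - (a * (1 + B)) • z) := by
  have h1 := one_sub_X_mul_derivative_pow a
  have h2 := congrArg derivative h1
  simp only [jacobiOp_apply, derivative_mul, derivative_add, derivative_neg, derivative_sub,
    derivative_one, derivative_X, derivative_C, smul_eq_C_mul] at *
  generalize derivative (derivative ((1 - X : ℝ[X]) ^ a)) = S2 at *
  generalize derivative ((1 - X : ℝ[X]) ^ a) = S1 at *
  generalize (1 - X : ℝ[X]) ^ a = S0 at *
  simp only [C_add, C_sub, C_mul, C_neg, C_1, C_ofNat] at *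
  linear_combination (1 + X) * z * h2 + ((C B + 1) * z + 2 * (1 + X) * derivative z) * h1

/-- The eigenfunction `((1 - x) / 2) ^ a * P_i^{a,B}(x)` of the Jacobi operator with
parameters `-a` and `B`. -/
def shiftedJacobi (a : ℕ) (B : ℝ) (i : ℕ) : ℝ[X] :=
  C ((2 : ℝ)⁻¹ ^ a) * ((1 - X) ^ a * jacobiPoly a B i)

lemma jacobiOp_shiftedJacobi (a : ℕ) (B : ℝ) (i : ℕ) :
    jacobiOp (-a) B (shiftedJacobi a B i) = -lam (-a) B (a + i) • shiftedJacobi a B i := by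
  rw [shiftedJacobi, ← smul_eq_C_mul, map_smul, jacobiOp_one_sub_X_pow_mul, jacobiOp_jacobiPoly,
    smul_comm, ← sub_smul, mul_smul_comm]
  congr 2
  simp only [lam]
  ring

lemma lam_eq_lam_of_add_add_one_eq {a b m n : ℕ} (h : m + n + 1 = a + b) :
    lam (-a) (-b) m = lam (-a) (-b) n := by
  have h' : (m : ℝ) + n + 1 = a + b := by exact_mod_cast h
  simp only [lam]
  linear_combination (m - n : ℝ) * h'

lemma jacobiOp_shiftedJacobi_neg {a b i v : ℕ} (h : v + i + 1 = b) :
    jacobiOp (-a) (-b) (shiftedJacobi a (-b) i) =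
      -lam (-a) (-b) v • shiftedJacobi a (-b) i := by
  rw [jacobiOp_shiftedJacobi, ← Nat.cast_add, lam_eq_lam_of_add_add_one_eq (m := a + i) (n := v)]
  omega

lemma X_sub_C_one_pow_dvd_shiftedJacobi (a : ℕ) (B : ℝ) (i : ℕ) :
    (X - C 1) ^ a ∣ shiftedJacobi a B i := by
  refine Dvd.dvd.mul_left (Dvd.dvd.mul_right (pow_dvd_pow_of_dvd ?_ a) _) _
  rw [C_1, ← neg_sub X 1]
  exact (dvd_neg).2 dvd_rfl

lemma eval_one_jacobiPoly_neg {a : ℕ} (ha : 0 < a) (B : ℝ) (v : ℕ) :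
    (jacobiPoly (-a) B v).eval 1 = (-1) ^ v * (a - 1).choose v := by
  rw [eval_one_jacobiPoly, ← neg_one_pow_mul_genBinom_neg ha, ← mul_assoc, ← mul_pow]
  simp

lemma eval_neg_one_jacobiPoly_neg (A : ℝ) {b : ℕ} (hb : 0 < b) (v : ℕ) :
    (jacobiPoly A (-b) v).eval (-1) = (b - 1).choose v := by
  rw [eval_neg_one_jacobiPoly, neg_one_pow_mul_genBinom_neg hb]

lemma eval_neg_one_shiftedJacobi {a b i v : ℕ} (h : v + i + 1 = b) :
    (shiftedJacobi a (-b) i).eval (-1) = (b - 1).choose v := by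
  simp only [shiftedJacobi, eval_mul, eval_C, eval_pow, eval_sub, eval_X, eval_one]
  rw [eval_neg_one_jacobiPoly_neg _ (by omega), Nat.choose_symm_of_eq_add (b := v) (by omega),
    ← mul_assoc, ← mul_pow]
  norm_num

lemma X_sub_C_neg_one_pow_dvd_jacobiPoly (A : ℝ) {b n : ℕ} (h : b ≤ n) :
    (X - C (-1)) ^ b ∣ jacobiPoly A (-b) n := by
  refine Dvd.dvd.mul_left (dvd_sum fun j hj => ?_) _
  by_cases hjb : b ≤ j
  · exact ((pow_dvd_pow _ hjb).mul_left _).mul_left _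
  · have hnb : (n : ℝ) + -(b : ℝ) = (n - b : ℕ) := by rw [Nat.cast_sub h]; ring
    have := mem_range.1 hj
    rw [jacobiCoeff, hnb, genBinom_natCast (n - b), Nat.choose_eq_zero_of_lt (by omega)]
    simp

lemma X_sub_C_neg_one_pow_dvd_jacobiPoly_sub_shiftedJacobi {a b i v : ℕ} (h : v + i + 1 = b) :
    (X - C (-1)) ^ b ∣ jacobiPoly (-a) (-b) v - shiftedJacobi a (-b) i := by
  refine pow_dvd_of_jacobiOp_eq_smul (.neg_one (A := -a) (B := -b)) (μ := -lam (-a) (-b) v)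
    (fun j hj _ => ?_) ?_ ?_
  · have : (j : ℝ) < b := by exact_mod_cast hj
    linarith
  · rw [eval_sub, eval_neg_one_jacobiPoly_neg _ (by omega), eval_neg_one_shiftedJacobi h, sub_self]
  · rw [map_sub, jacobiOp_jacobiPoly, jacobiOp_shiftedJacobi_neg h, smul_sub]

lemma eq_zero_of_jacobiOp_eq_smul {a : ℕ} {B μ : ℝ} {y : ℝ[X]} (hdeg : y.natDegree < a)
    (h0 : y.eval 1 = 0) (h : jacobiOp (-a) B y = μ • y) : y = 0 := by
  refine eq_zero_of_dvd_of_natDegree_lt (p := (X - C 1) ^ a)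
    (pow_dvd_of_jacobiOp_eq_smul .one (fun j hj _ => ?_) h0 h) ?_
  · have : (j : ℝ) < a := by exact_mod_cast hj
    linarith
  · rwa [natDegree_pow, natDegree_X_sub_C, mul_one]

lemma jacobiCoeff_neg_add (a b N i : ℕ) (hi : i ≤ N) :
    jacobiCoeff (-a) (-b) (a + b + N) (b + i) = jacobiCoeff a b N i := by
  have ha : ((a + b + N : ℕ) : ℝ) + -a = (b + N : ℕ) := by push_cast; ring
  have hb : ((a + b + N : ℕ) : ℝ) + -b = (a + N : ℕ) := by push_cast; ring
  rw [jacobiCoeff, jacobiCoeff, ha, hb, ← Nat.cast_add, ← Nat.cast_add]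
  simp only [genBinom_natCast]
  rw [Nat.choose_symm_of_eq_add (by omega : b + N = (b + i) + (N - i)),
    Nat.choose_symm_of_eq_add (by omega : a + N = (a + b + N - (b + i)) + i), mul_comm,
    add_comm a N, add_comm b N]

lemma jacobiCoeff_neg_eq_zero {a b N j : ℕ} (hj : j ≤ a + b + N) (h : j < b ∨ b + N < j) :
    jacobiCoeff (-a) (-b) (a + b + N) j = 0 := by
  have ha : ((a + b + N : ℕ) : ℝ) + -a = (b + N : ℕ) := by push_cast; ring
  have hb : ((a + b + N : ℕ) : ℝ) + -b = (a + N : ℕ) := by push_cast; ring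
  rw [jacobiCoeff, ha, hb]
  simp only [genBinom_natCast]
  rcases h with h | h
  · rw [Nat.choose_eq_zero_of_lt (by omega : a + N < a + b + N - j), Nat.cast_zero, mul_zero]
  · rw [Nat.choose_eq_zero_of_lt h, Nat.cast_zero, zero_mul]

lemma jacobiPoly_neg_neg (a b N : ℕ) :
    jacobiPoly (-a) (-b) (a + b + N) =
      (X - C 1) ^ a * (X - C (-1)) ^ b * (C ((2 : ℝ)⁻¹ ^ (a + b)) * jacobiPoly a b N) := by
  have hsum : ∑ j ∈ range (a + b + N + 1), C (jacobiCoeff (-a) (-b) (a + b + N) j) *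
        ((X - C 1) ^ (a + b + N - j) * (X - C (-1)) ^ j) =
      ∑ i ∈ range (N + 1), (X - C 1) ^ a * (X - C (-1)) ^ b *
        (C (jacobiCoeff a b N i) * ((X - C 1) ^ (N - i) * (X - C (-1)) ^ i)) := by
    refine (sum_of_injOn (b + ·) (fun i _ j _ h => by simpa using h)
      (fun i hi => ?_) (fun j hj hj' => ?_) fun i hi => ?_).symm
    · have := mem_range.1 (mem_coe.1 hi)
      exact mem_coe.2 (mem_range.2 (by dsimp only; omega))
    · rw [jacobiCoeff_neg_eq_zero (mem_range_succ_iff.1 hj), C_0, zero_mul]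
      by_contra! hjN
      exact hj' ⟨j - b, mem_coe.2 (mem_range.2 (by omega)), by dsimp only; omega⟩
    · have hiN := mem_range_succ_iff.1 hi
      rw [jacobiCoeff_neg_add a b N i hiN,
        show a + b + N - (b + i) = a + (N - i) by omega, pow_add, pow_add]
      ring
  rw [jacobiPoly, jacobiPoly, hsum, ← mul_sum, pow_add, C_mul]
  ring

lemma jacobiPoly_natCast_ne_zero (a : ℕ) (B : ℝ) (N : ℕ) : jacobiPoly a B N ≠ 0 := by
  intro h
  have h1 := eval_one_jacobiPoly a B N
  rw [h, eval_zero, ← Nat.cast_add, genBinom_natCast] at h1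
  exact (Nat.choose_pos (Nat.le_add_right N a)).ne (by exact_mod_cast h1)

/-- The `j`-th coefficient of the hypergeometric series `₂F₁(p, q - s; r - s; z)`. -/
def hypCoeff (p q r : ℝ) (j : ℕ) (s : ℝ) : ℝ :=
  poch p j * poch (q - s) j / (poch (r - s) j * (j.factorial : ℝ))

lemma poch_succ (z : ℝ) (j : ℕ) : poch z (j + 1) = poch z j * (z + j) := by
  simp [poch, prod_range_succ]

lemma poch_neg_natCast_eq_zero {u j : ℕ} (h : u < j) : poch (-(u : ℝ)) j = 0 :=
  prod_eq_zero (mem_range.2 h) (by simp)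

lemma hypCoeff_zero (p q r s : ℝ) : hypCoeff p q r 0 s = 1 := by simp [hypCoeff, poch]

lemma hypCoeff_succ (p q r : ℝ) (j : ℕ) (s : ℝ) :
    hypCoeff p q r (j + 1) s =
      hypCoeff p q r j s * ((p + j) / (j + 1) * ((q + j - s) / (r + j - s))) := by
  simp only [hypCoeff, poch_succ, Nat.factorial_succ]
  rw [div_mul_div_comm, div_mul_div_comm]
  push_cast
  congr 1 <;> ring

lemma hypCoeff_neg_natCast {u j : ℕ} (h : u < j) (q r : ℝ) :
    hypCoeff (-(u : ℝ)) q r j = fun _ => 0 := by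
  ext s
  rw [hypCoeff, poch_neg_natCast_eq_zero h, zero_mul, zero_div]

lemma hypCoeff_at_zero_comm (p q r : ℝ) (j : ℕ) : hypCoeff p q r j 0 = hypCoeff q p r j 0 := by
  simp only [hypCoeff, sub_zero, mul_comm (poch p j)]

lemma hasDerivAt_sub_div_sub (p q : ℝ) (hq : q ≠ 0) :
    HasDerivAt (fun s => (p - s) / (q - s)) ((p - q) / q ^ 2) 0 := by
  refine (((hasDerivAt_id (0 : ℝ)).const_sub p).fun_div ((hasDerivAt_id (0 : ℝ)).const_sub q)
    (by simpa using hq)).congr_deriv ?_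
  simp only [id_eq, sub_zero]
  ring

lemma hasDerivAt_hypCoeff_succ {p q r E : ℝ} {j : ℕ} (hr : r + j ≠ 0)
    (hE : HasDerivAt (hypCoeff p q r j) E 0) :
    HasDerivAt (hypCoeff p q r (j + 1)) (E * ((p + j) / (j + 1) * ((q + j) / (r + j))) +
      hypCoeff p q r j 0 * ((p + j) / (j + 1) * ((q - r) / (r + j) ^ 2))) 0 := by
  rw [funext (hypCoeff_succ p q r j)]
  refine (hE.fun_mul ((hasDerivAt_sub_div_sub (q + j) _ hr).const_mul
    ((p + j) / (j + 1)))).congr_deriv ?_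
  simp only [sub_zero, add_sub_add_right_eq_sub]

lemma hasDerivAt_hypCoeff (p q : ℝ) {r : ℝ} :
    ∀ {j : ℕ}, (∀ i < j, r + i ≠ 0) →
      HasDerivAt (hypCoeff p q r j) (deriv (hypCoeff p q r j) 0) 0
  | 0, _ => by
    rw [funext (hypCoeff_zero p q r), deriv_const]
    exact hasDerivAt_const 0 1
  | j + 1, h => (hasDerivAt_hypCoeff_succ (h j (by omega))
      (hasDerivAt_hypCoeff p q fun i hi => h i (by omega))).differentiableAt.hasDerivAt

/-- The `s`-derivative at `0` of `hypCoeff`, antisymmetrized in the two upper parameters. -/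
def hypCoeffSkew (p q r : ℝ) (j : ℕ) : ℝ :=
  deriv (hypCoeff p q r j) 0 - deriv (hypCoeff q p r j) 0

lemma hypCoeff_recurrence (p q : ℝ) {r : ℝ} {j : ℕ} (hr : r + j ≠ 0) :
    hypCoeff p q r (j + 1) 0 * ((j + 1) * (r + j)) = (p + j) * (q + j) * hypCoeff p q r j 0 := by
  rw [hypCoeff_succ]
  simp only [sub_zero]
  field_simp

lemma hypCoeffSkew_recurrence (p q : ℝ) {r : ℝ} {j : ℕ} (hr : ∀ i ≤ j, r + i ≠ 0) :
    hypCoeffSkew p q r (j + 1) * ((j + 1) * (r + j)) =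
      (p + j) * (q + j) * hypCoeffSkew p q r j + (q - p) * hypCoeff p q r j 0 := by
  have hrj := hr j le_rfl
  have hpq := (hasDerivAt_hypCoeff_succ hrj (hasDerivAt_hypCoeff p q fun i hi => hr i hi.le)).deriv
  have hqp := (hasDerivAt_hypCoeff_succ hrj (hasDerivAt_hypCoeff q p fun i hi => hr i hi.le)).deriv
  rw [hypCoeff_at_zero_comm] at hqp
  rw [hypCoeffSkew, hypCoeffSkew, hpq, hqp]
  field_simp
  ring

/-- The polynomial `∑_{j < a} c_j ((1 - x) / 2) ^ j`. -/
def expansionAtOne (a : ℕ) (c : ℕ → ℝ) : ℝ[X] :=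
  ∑ j ∈ range a, C (c j * (-1 / 2) ^ j) * (X - C 1) ^ j

lemma coeff_taylor_expansionAtOne (a : ℕ) (c : ℕ → ℝ) (j : ℕ) :
    (taylor 1 (expansionAtOne a c)).coeff j = if j < a then c j * (-1 / 2) ^ j else 0 := by
  have h : taylor 1 (expansionAtOne a c) = ∑ i ∈ range a, C (c i * (-1 / 2) ^ i) * X ^ i := by
    simp [expansionAtOne, taylor_apply]
  simp only [h, finsetSum_coeff, coeff_C_mul_X_pow, sum_ite_eq, mem_range]

lemma eval_expansionAtOne (a : ℕ) (c : ℕ → ℝ) (x : ℝ) :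
    (expansionAtOne a c).eval x = ∑ j ∈ range a, c j * ((1 - x) / 2) ^ j := by
  simp only [expansionAtOne, eval_finsetSum, eval_mul, eval_C, eval_pow, eval_sub, eval_X]
  refine sum_congr rfl fun j _ => ?_
  rw [mul_assoc, ← mul_pow]
  ring

lemma natDegree_expansionAtOne_lt {a : ℕ} (ha : 0 < a) (c : ℕ → ℝ) :
    (expansionAtOne a c).natDegree < a := by
  refine (natDegree_sum_le_of_forall_le (n := a - 1) _ _ fun j hj => ?_).trans_lt (by omega)
  refine (natDegree_C_mul_le _ _).trans ?_
  rw [natDegree_pow, natDegree_X_sub_C]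
  have := mem_range.1 hj
  omega

lemma jacobiOp_expansionAtOne {a : ℕ} {B k μ : ℝ} {c d : ℕ → ℝ}
    (h : ∀ j < a, c (j + 1) * ((j + 1) * (1 - a + j)) = (lam (-a) B j - μ) * c j + k * d j) :
    jacobiOp (-a) B (expansionAtOne a c) =
      -μ • expansionAtOne a c + k • expansionAtOne a d := by
  apply taylor_injective 1
  ext j
  rw [coeff_taylor_jacobiOp .one, map_add, map_smul, map_smul, coeff_add, coeff_smul, coeff_smul]
  simp only [coeff_taylor_expansionAtOne, smul_eq_mul]
  rcases lt_trichotomy (j + 1) a with hj | hj | hj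
  · rw [if_pos hj, if_pos (by omega), if_pos (by omega), pow_succ]
    linear_combination (-1 / 2) ^ j * h j (by omega)
  · have hrec := h j (by omega)
    rw [if_neg (by omega), if_pos (by omega), if_pos (by omega)]
    have : (1 : ℝ) - a + j = 0 := by rw [← hj]; push_cast; ring
    rw [this, mul_zero, mul_zero] at hrec
    linear_combination (-1 / 2) ^ j * hrec
  · rw [if_neg (by omega), if_neg (by omega), if_neg (by omega)]
    ring

/-- The normalization of the functions `φ_n` and `φ_m`, `n + m + 1 = a + b`, for `α = -a`. -/
def phiScale (a n m : ℕ) : ℝ :=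
  poch (-(a : ℝ) + 1) (max n m) / ((max n.factorial m.factorial : ℕ) : ℝ)

lemma phiJ_neg {a b n m : ℕ} (h : n + m + 1 = a + b) (hn : n < a) (s x : ℝ) :
    phiJ (-a) (-b) n s x =
      phiScale a n m * ∑ j ∈ range a, hypCoeff (-n) (-m) (1 - a) j s * ((1 - x) / 2) ^ j := by
  have hm : (-(-(a : ℤ)) - -(b : ℤ) - (n : ℤ) - 1).toNat = m := by omega
  have hq : (-(m : ℝ)) = n - a - b + 1 := by
    have : (n : ℝ) + m + 1 = a + b := by exact_mod_cast h
    linarith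
  rw [phiJ, hm, phiScale, ← sum_subset (range_mono (show n + 1 ≤ a by omega))]
  · congr 1
    · push_cast
      rfl
    refine sum_congr rfl fun j _ => ?_
    rw [hypCoeff, hq]
    push_cast
    congr! 4 <;> ring
  · intro j _ hj
    rw [hypCoeff_neg_natCast (by simpa using hj), zero_mul]

lemma one_sub_add_ne_zero {a j : ℕ} (h : j + 1 < a) : (1 : ℝ) - a + j ≠ 0 := by
  have : (j : ℝ) + 1 < a := by exact_mod_cast h
  linarith

lemma deriv_phiJ_neg {a b n m : ℕ} (h : n + m + 1 = a + b) (hn : n < a) (x : ℝ) :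
    deriv (fun s => phiJ (-a) (-b) n s x) 0 = phiScale a n m *
      ∑ j ∈ range a, deriv (hypCoeff (-n) (-m) (1 - a) j) 0 * ((1 - x) / 2) ^ j := by
  rw [funext fun s => phiJ_neg h hn s x]
  refine HasDerivAt.deriv (.const_mul _ (.fun_sum fun j hj => .mul_const (hasDerivAt_hypCoeff _ _
    fun i hi => one_sub_add_ne_zero ?_) _))
  have := mem_range.1 hj
  omega

/-- The polynomial `∂_s φ_n(0, ·) - ∂_s φ_m(0, ·)`, `m = a + b - 1 - n`, for `α = -a`, `β = -b`. -/
def derivPhiPoly (a b n : ℕ) : ℝ[X] :=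
  phiScale a n (a + b - 1 - n) •
    expansionAtOne a (hypCoeffSkew (-n) (-(a + b - 1 - n : ℕ)) (1 - a))

lemma eval_derivPhiPoly {a b n : ℕ} (hb : 0 < b) (h2 : a + b ≤ 2 * n) (hn : n < a) (x : ℝ) :
    (derivPhiPoly a b n).eval x = deriv (fun s => phiJ (-a) (-b) n s x) 0 -
      deriv (fun s => phiJ (-a) (-b) (a + b - 1 - n) s x) 0 := by
  rw [deriv_phiJ_neg (m := a + b - 1 - n) (by omega) hn,
    deriv_phiJ_neg (n := a + b - 1 - n) (m := n) (by omega) (by omega), derivPhiPoly, eval_smul,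
    eval_expansionAtOne, smul_eq_mul, phiScale, phiScale, max_comm (a + b - 1 - n),
    max_comm (a + b - 1 - n).factorial, ← mul_sub, ← sum_sub_distrib]
  simp only [hypCoeffSkew, sub_mul]

lemma lam_sub_lam_eq_mul {a b n m : ℕ} (h : n + m + 1 = a + b) (j : ℝ) :
    lam (-a) (-b) j - lam (-a) (-b) n = (-n + j) * (-m + j) := by
  have hab : (n : ℝ) + m + 1 = a + b := by exact_mod_cast h
  simp only [lam]
  linear_combination (j - n) * hab

lemma jacobiOp_expansionAtOne_hypCoeff {a b n m : ℕ} (h : n + m + 1 = a + b) (hm : m + 1 < a) :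
    jacobiOp (-a) (-b) (expansionAtOne a fun j => hypCoeff (-n) (-m) (1 - a) j 0) =
      -lam (-a) (-b) m • expansionAtOne a fun j => hypCoeff (-n) (-m) (1 - a) j 0 := by
  rw [jacobiOp_expansionAtOne (d := 0) (k := 0) (μ := lam (-a) (-b) m), zero_smul, add_zero]
  intro j hj
  rw [← lam_eq_lam_of_add_add_one_eq h, lam_sub_lam_eq_mul h, zero_mul, add_zero]
  obtain hja | rfl : j + 1 < a ∨ j + 1 = a := by omega
  · exact hypCoeff_recurrence _ _ (one_sub_add_ne_zero hja)
  · rw [hypCoeff_at_zero_comm _ _ _ j, hypCoeff_neg_natCast (show m < j by omega)]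
    push_cast
    ring

lemma jacobiOp_expansionAtOne_hypCoeffSkew {a b n m : ℕ} (h : n + m + 1 = a + b) (hmn : m < n)
    (hn : n < a) :
    jacobiOp (-a) (-b) (expansionAtOne a (hypCoeffSkew (-n) (-m) (1 - a))) =
      -lam (-a) (-b) n • expansionAtOne a (hypCoeffSkew (-n) (-m) (1 - a)) +
        ((n : ℝ) - m) • expansionAtOne a fun j => hypCoeff (-n) (-m) (1 - a) j 0 := by
  refine jacobiOp_expansionAtOne fun j hj => ?_
  rw [lam_sub_lam_eq_mul h]
  obtain hja | rfl : j + 1 < a ∨ j + 1 = a := by omega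
  · rw [hypCoeffSkew_recurrence _ _ fun i hi => one_sub_add_ne_zero (by omega)]
    ring
  · have hm := hypCoeff_neg_natCast (show m < j by omega)
    rw [hypCoeff_at_zero_comm _ _ _ j, hm]
    obtain rfl | hnj : n = j ∨ n < j := by omega
    · push_cast
      ring
    · have hskew (r : ℝ) : hypCoeffSkew (-n) (-m) r j = 0 := by
        rw [hypCoeffSkew, hypCoeff_neg_natCast hnj, hm, sub_self]
      rw [hskew]
      push_cast
      ring

lemma exists_expansionAtOne_hypCoeff_eq_smul {a b n m : ℕ} (h : n + m + 1 = a + b)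
    (hm : m + 1 < a) :
    ∃ c : ℝ, (expansionAtOne a fun j => hypCoeff (-n) (-m) (1 - a) j 0) =
      c • jacobiPoly (-a) (-b) m := by
  have hne : (jacobiPoly (-a) (-b) m).eval 1 ≠ 0 := by
    rw [eval_one_jacobiPoly_neg (by omega)]
    exact mul_ne_zero (pow_ne_zero _ (by norm_num))
      (by exact_mod_cast (Nat.choose_pos (by omega : m ≤ a - 1)).ne')
  set y := expansionAtOne a fun j => hypCoeff (-n) (-m) (1 - a) j 0
  refine ⟨y.eval 1 / (jacobiPoly (-a) (-b) m).eval 1, sub_eq_zero.1 ?_⟩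
  refine eq_zero_of_jacobiOp_eq_smul (a := a) (B := -b) (μ := -lam (-a) (-b) m) ?_ ?_ ?_
  · refine (natDegree_sub_le _ _).trans_lt (max_lt (natDegree_expansionAtOne_lt (by omega) _) ?_)
    exact (natDegree_smul_le _ _).trans_lt ((natDegree_jacobiPoly_le _ _ _).trans_lt (by omega))
  · rw [eval_sub, eval_smul, smul_eq_mul, div_mul_cancel₀ _ hne, sub_self]
  · rw [map_sub, map_smul, jacobiOp_expansionAtOne_hypCoeff h hm, jacobiOp_jacobiPoly, smul_sub,
      smul_comm]

lemma exists_jacobiOp_derivPhiPoly_eq {a b n : ℕ} (hb : 0 < b) (h2 : a + b ≤ 2 * n) (hn : n < a) :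
    ∃ c : ℝ, jacobiOp (-a) (-b) (derivPhiPoly a b n) =
      -lam (-a) (-b) n • derivPhiPoly a b n + c • jacobiPoly (-a) (-b) (a + b - 1 - n) := by
  have h : n + (a + b - 1 - n) + 1 = a + b := by omega
  obtain ⟨c, hc⟩ := exists_expansionAtOne_hypCoeff_eq_smul h (by omega)
  refine ⟨phiScale a n (a + b - 1 - n) * ((n - (a + b - 1 - n : ℕ)) * c), ?_⟩
  rw [derivPhiPoly, map_smul, jacobiOp_expansionAtOne_hypCoeffSkew h (by omega) hn, hc, smul_add,
    smul_comm, mul_smul, mul_smul]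

/-- The polynomial `P̂_n` for `-β ≤ n ≤ -α - 1`, where `α = -a` and `β = -b`. -/
def middlePoly (a b n : ℕ) : ℝ[X] :=
  if a + b ≤ 2 * n then derivPhiPoly a b n else jacobiPoly (-a) (-b) n

/-- The polynomial `P̂_n` for `-α ≤ n ≤ -α - β - 1`, where `α = -a` and `β = -b`, without its
scalar prefactor. -/
def mixedPoly (a b : ℕ) (M : ℕ → ℝ) (n : ℕ) : ℝ[X] :=
  (M (n - a) - 1)⁻¹ • jacobiPoly (-a) (-b) (a + b - 1 - n) + shiftedJacobi a (-b) (n - a)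

/-- The polynomial `P̂_n` for `α = -a` and `β = -b`, up to a scalar factor. -/
def phatPoly (a b : ℕ) (M : ℕ → ℝ) (n : ℕ) : ℝ[X] :=
  if n < b then jacobiPoly (-a) (-b) n
  else if n < a then middlePoly a b n
  else if n < a + b then mixedPoly a b M n
  else jacobiPoly (-a) (-b) n

lemma ceil_half_le_iff (a b n : ℕ) :
    ⌈((-(-(a : ℤ)) - -(b : ℤ) : ℤ) : ℚ) / 2⌉ ≤ (n : ℤ) ↔ a + b ≤ 2 * n := by
  rw [Int.ceil_le, div_le_iff₀ (by norm_num), ← Nat.cast_le (α := ℚ)]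
  push_cast
  constructor <;> intro h <;> linarith

lemma exists_phat_eq_mul_eval {a b : ℕ} (hb : 0 < b) (hba : b ≤ a) (M : ℕ → ℝ) (n : ℕ) :
    ∃ c : ℝ, ∀ x, Phat (-a) (-b) M n x = c * (phatPoly a b M n).eval x := by
  have hm : (-(-(a : ℤ)) - -(b : ℤ) - (n : ℤ) - 1).toNat = a + b - 1 - n := by omega
  have hmid : (n : ℤ) ≤ -(-(a : ℤ)) - 1 ↔ n < a := by omega
  have hmix : -(-(a : ℤ)) ≤ n ∧ (n : ℤ) ≤ -(-(a : ℤ)) - -(b : ℤ) - 1 ↔ a ≤ n ∧ n < a + b := by omega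
  simp only [Phat, ceil_half_le_iff, hm, phatPoly, middlePoly, hmid, hmix]
  by_cases hderiv : a + b ≤ 2 * n ∧ n < a
  · refine ⟨1, fun x => ?_⟩
    rw [if_pos hderiv, if_neg (by omega), if_pos hderiv.2, if_pos hderiv.1,
      eval_derivPhiPoly hb hderiv.1 hderiv.2, one_mul]
  simp only [if_neg hderiv]
  by_cases hmixed : a ≤ n ∧ n < a + b
  · simp only [if_pos hmixed, if_neg (show ¬ n < b by omega), if_neg (show ¬ n < a by omega),
      if_pos hmixed.2]
    refine ⟨_, fun x => congrArg _ ?_⟩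
    rw [show (-(a : ℤ) + (n : ℤ)).toNat = n - a by omega, show (-(-(a : ℤ))).toNat = a by omega,
      mixedPoly, shiftedJacobi]
    simp only [eval_add, eval_smul, eval_mul, eval_C, eval_pow, eval_sub, eval_one, eval_X,
      eval_jacobiPoly, smul_eq_mul]
    push_cast
    rw [neg_neg, div_pow, inv_pow]
    ring
  · refine ⟨1, fun x => ?_⟩
    rw [if_neg hmixed, one_mul]
    push_cast
    split_ifs <;> first | exact (eval_jacobiPoly _ _ _ _).symm | omega

/-! ### Positivity of the norms of the transformed eigenfunctions -/

section Positivity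

local notation "ι" => algebraMap ℝ[X] (RatFunc ℝ)

/-- The polynomial `(1 - x)^a (1 + x)^b`, the reciprocal of the Jacobi weight with parameters
`-a` and `-b`. -/
def jacobiWeight (a b : ℕ) : ℝ[X] := (1 - X) ^ a * (1 + X) ^ b

/-- The first-order coefficient of `jacobiOp A B`. -/
def jacobiDrift (A B : ℝ) : ℝ[X] := C (B - A) - C (A + B + 2) * X

lemma jacobiWeight_eq (a b : ℕ) :
    jacobiWeight a b = C ((-1) ^ a) * ((X - C 1) ^ a * (X - C (-1)) ^ b) := by
  have h1 : (1 - X : ℝ[X]) = C (-1) * (X - C 1) := by simp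
  have h2 : (1 + X : ℝ[X]) = X - C (-1) := by simp [add_comm]
  rw [jacobiWeight, h2, h1, mul_pow, C_pow, mul_assoc]

lemma jacobiWeight_dvd_iff {a b : ℕ} {q : ℝ[X]} :
    jacobiWeight a b ∣ q ↔ (X - C 1) ^ a * (X - C (-1)) ^ b ∣ q := by
  rw [jacobiWeight_eq, IsUnit.mul_left_dvd]
  exact isUnit_C.2 ((isUnit_neg_one).pow a)

lemma eval_jacobiWeight_nonneg (a b : ℕ) {x : ℝ} (hx : x ∈ Set.Icc (-1 : ℝ) 1) :
    0 ≤ (jacobiWeight a b).eval x := by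
  simp only [jacobiWeight, eval_mul, eval_pow, eval_sub, eval_add, eval_one, eval_X]
  exact mul_nonneg (pow_nonneg (by linarith [hx.2]) _) (pow_nonneg (by linarith [hx.1]) _)

lemma algebraMap_jacobiWeight_ne_zero (a b : ℕ) : ι (jacobiWeight a b) ≠ 0 := by
  refine RatFunc.algebraMap_ne_zero fun h => ?_
  simpa [jacobiWeight] using congrArg (eval 0) h

lemma one_sub_X_sq_mul_derivative_jacobiWeight (a b : ℕ) :
    (1 - X ^ 2) * derivative (jacobiWeight a b) =
      (C ((b : ℝ) - a) - C ((a : ℝ) + b) * X) * jacobiWeight a b := by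
  have hs := X_sub_C_mul_derivative_pow 1 a
  have ht := X_sub_C_mul_derivative_pow (-1) b
  rw [jacobiWeight_eq, derivative_C_mul, derivative_mul]
  simp only [C_sub, C_add, C_neg, C_1] at hs ht ⊢
  linear_combination -C ((-1) ^ a) * ((X + 1) * (X - -1) ^ b * hs + (X - 1) * (X - 1) ^ a * ht)

lemma ratDeriv_mul_inv_jacobiWeight (a b : ℕ) :
    ratDeriv ℝ (ι (1 - X ^ 2) * (ι (jacobiWeight a b))⁻¹) =
      ι (jacobiDrift (-a) (-b)) * (ι (jacobiWeight a b))⁻¹ := by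
  have hE := algebraMap_jacobiWeight_ne_zero a b
  have hder : derivative (1 - X ^ 2 : ℝ[X]) = -(C 2 * X) := by
    simp [show (C 2 : ℝ[X]) = 1 + 1 by rw [← C_1, ← C_add]; norm_num]
  have hweight := congrArg ι (one_sub_X_sq_mul_derivative_jacobiWeight a b)
  rw [Derivation.leibniz, Derivation.leibniz_inv, ratDeriv_algebraMap, ratDeriv_algebraMap, hder,
    jacobiDrift]
  simp only [map_mul, map_sub, map_add, map_neg, smul_eq_mul] at hweight ⊢
  field_simp
  linear_combination -hweight

lemma secondOrder_algebraMap (A B : ℝ) (y : ℝ[X]) :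
    secondOrder (ratDeriv ℝ) (ι (1 - X ^ 2)) (ι (jacobiDrift A B)) 0 (ι y) =
      ι (jacobiOp A B y) := by
  simp only [secondOrder_apply, ratDeriv_algebraMap, jacobiOp_apply, jacobiDrift, map_add, map_mul,
    zero_mul, add_zero]

lemma algebraMap_smul_polynomial (c : ℝ) (y : ℝ[X]) : ι (c • y) = c • ι y :=
  map_smul (IsScalarTower.toAlgHom ℝ ℝ[X] (RatFunc ℝ)) c y

theorem IsTriangular.algebraMap {A B : ℝ} {n : ℕ} {u : Fin n → ℝ[X]} {μ : Fin n → ℝ}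
    (h : IsTriangular (jacobiOp A B) u μ) :
    IsTriangular (secondOrder (ratDeriv ℝ) (ι (1 - X ^ 2)) (ι (jacobiDrift A B)) 0)
      (fun i => ι (u i)) μ :=
  h.map (L := (IsScalarTower.toAlgHom ℝ ℝ[X] (RatFunc ℝ)).toLinearMap)
    fun y => (secondOrder_algebraMap A B y).symm

lemma secondOrder_algebraMap_eq_smul {A B m : ℝ} {q : ℝ[X]} (h : jacobiOp A B q = m • q) :
    secondOrder (ratDeriv ℝ) (ι (1 - X ^ 2)) (ι (jacobiDrift A B)) 0 (ι q) = m • ι q := by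
  rw [secondOrder_algebraMap, h, algebraMap_smul_polynomial]

lemma pow_mul_inv_jacobiWeight {a b n : ℕ} (ha : a ≤ n) (hb : b ≤ n) :
    ι (1 - X ^ 2) ^ n * (ι (jacobiWeight a b))⁻¹ = ι (jacobiWeight (n - a) (n - b)) := by
  rw [mul_inv_eq_iff_eq_mul₀ (algebraMap_jacobiWeight_ne_zero a b), ← map_pow, ← map_mul]
  congr 1
  rw [jacobiWeight, jacobiWeight, show (1 - X ^ 2 : ℝ[X]) = (1 - X) * (1 + X) by ring, mul_pow,
    mul_mul_mul_comm, ← pow_add, ← pow_add, Nat.sub_add_cancel ha, Nat.sub_add_cancel hb]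

lemma exists_jacobiOp_sub_smul_eq_mul (a b i j : ℕ) (μ : ℝ) :
    ∃ r : ℝ[X],
      jacobiOp (-a) (-b) ((X - C 1) ^ (i + 1) * (X - C (-1)) ^ (j + 1)) -
          μ • ((X - C 1) ^ (i + 1) * (X - C (-1)) ^ (j + 1)) =
        (X - C 1) ^ i * (X - C (-1)) ^ j * r ∧
      r.eval 1 = -4 * ((i + 1) * (i + 1 - a)) ∧ r.eval (-1) = -4 * ((j + 1) * (j + 1 - b)) := by
  refine ⟨-(C ((i + 1) * (i + 1 - a) : ℝ) * (X - C (-1)) ^ 2 +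
      C ((j + 1) * (j + 1 - b) : ℝ) * (X - C 1) ^ 2 +
      (C (2 * (i + 1) * (j + 1) + (-a + 1) * (j + 1) + (-b + 1) * (i + 1) : ℝ) + C μ) *
        ((X - C 1) * (X - C (-1)))), ?_, ?_, ?_⟩
  · simp only [jacobiOp_X_sub_C_pow_mul_pow, smul_eq_C_mul, Nat.add_sub_cancel, Nat.cast_add,
      Nat.cast_one, ← sub_eq_add_neg]
    ring
  all_goals
    simp only [eval_neg, eval_add, eval_mul, eval_sub, eval_C, eval_X, eval_pow]
    ring

lemma exists_mul_X_sub_C_dvd_sub {L : ℝ[X] →ₗ[ℝ] ℝ[X]} {w y r q : ℝ[X]} {ε : ℝ} (hL : L y = w * r)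
    (hr : r.eval ε ≠ 0) (hq : w ∣ q) : ∃ c : ℝ, w * (X - C ε) ∣ q - L (c • y) := by
  obtain ⟨s, rfl⟩ := hq
  refine ⟨s.eval ε / r.eval ε, ?_⟩
  rw [map_smul, hL, smul_eq_C_mul, mul_left_comm, ← mul_sub]
  refine mul_dvd_mul_left w (dvd_iff_isRoot.2 ?_)
  simp [div_mul_cancel₀ _ hr]

/- At each endpoint the exponents `0` and `a` (resp. `0` and `b`) are the only obstructions to
solving `(D - μ) z = q` order by order, and they are not met from order `a` (resp. `b`) on. -/
theorem exists_pow_dvd_sub_jacobiOp_sub_smul {a b : ℕ} (μ : ℝ) {q : ℝ[X]}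
    (hq : jacobiWeight a b ∣ q) (m : ℕ) :
    ∃ z, jacobiWeight a b ∣ z ∧
      (X - C 1) ^ (a + m) * (X - C (-1)) ^ (b + m) ∣ q - (jacobiOp (-a) (-b) z - μ • z) := by
  simp only [jacobiWeight_dvd_iff] at hq ⊢
  induction m with
  | zero => exact ⟨0, dvd_zero _, by simpa using hq⟩
  | succ m ih =>
    obtain ⟨z, hz, hdvd⟩ := ih
    obtain ⟨r, hr, hr_one, -⟩ := exists_jacobiOp_sub_smul_eq_mul a b (a + m) (b + m) μ
    obtain ⟨r', hr', -, hr'_neg_one⟩ := exists_jacobiOp_sub_smul_eq_mul a b (a + m + 1) (b + m) μ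
    let L : ℝ[X] →ₗ[ℝ] ℝ[X] := jacobiOp (-a) (-b) - μ • LinearMap.id
    have factor_ne_zero (l : ℕ) : -4 * (((l + m : ℕ) + 1 : ℝ) * ((l + m : ℕ) + 1 - l)) ≠ 0 := by
      push_cast
      rw [show (l + m + 1 - l : ℝ) = m + 1 by ring]
      exact mul_ne_zero (by norm_num) (by positivity)
    obtain ⟨c, hc⟩ := exists_mul_X_sub_C_dvd_sub (L := L) hr (hr_one ▸ factor_ne_zero a) hdvd
    rw [mul_right_comm, ← pow_succ] at hc
    obtain ⟨c', hc'⟩ :=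
      exists_mul_X_sub_C_dvd_sub (L := L) hr' (hr'_neg_one ▸ factor_ne_zero b) hc
    rw [mul_assoc, ← pow_succ] at hc'
    have weight_dvd (i j : ℕ) :
        (X - C (1 : ℝ)) ^ a * (X - C (-1)) ^ b ∣ (X - C 1) ^ (a + i) * (X - C (-1)) ^ (b + j) :=
      mul_dvd_mul (pow_dvd_pow _ (Nat.le_add_right a i)) (pow_dvd_pow _ (Nat.le_add_right b j))
    refine ⟨z + c • ((X - C 1) ^ (a + m + 1) * (X - C (-1)) ^ (b + m + 1)) +
        c' • ((X - C 1) ^ (a + m + 1 + 1) * (X - C (-1)) ^ (b + m + 1)),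
      dvd_add (dvd_add hz (dvd_smul_of_dvd c (weight_dvd (m + 1) (m + 1))))
        (dvd_smul_of_dvd c' (weight_dvd (m + 2) (m + 1))), ?_⟩
    refine hc'.trans (dvd_of_eq ?_)
    have hL (y : ℝ[X]) : L y = jacobiOp (-a) (-b) y - μ • y := rfl
    rw [hL, hL, map_add, map_add]
    module

section Chain

variable {a b n : ℕ} {u : Fin n → ℝ[X]} {ε : ℝ}

lemma vanishesToOrder_one_sub_X_sq (hε : ε ^ 2 = 1) : VanishesToOrder ε 1 (ι (1 - X ^ 2)) :=
  .algebraMap_of_dvd (by rw [pow_one, dvd_iff_isRoot]; simp [hε])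

lemma vanishesToOrder_weighted_wronskian_darbouxChain (ha : a ≤ n) (hb : b ≤ n) (hε : ε ^ 2 = 1)
    (hu : (wronskian derivative u).eval ε ≠ 0) (y z : ℝ[X]) :
    VanishesToOrder ε 1 (ι (1 - X ^ 2) * (ι (1 - X ^ 2) ^ n * (ι (jacobiWeight a b))⁻¹) *
      (darbouxChain (ratDeriv ℝ) (fun i => ι (u i)) (ι y) *
          ratDeriv ℝ (darbouxChain (ratDeriv ℝ) (fun i => ι (u i)) (ι z)) -
        darbouxChain (ratDeriv ℝ) (fun i => ι (u i)) (ι z) *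
          ratDeriv ℝ (darbouxChain (ratDeriv ℝ) (fun i => ι (u i)) (ι y)))) := by
  have hT := algebraMap_wronskian_mul_darbouxChain (u := u) fun h => hu (by rw [h, eval_zero])
  have regular (y : ℝ[X]) := VanishesToOrder.of_algebraMap_mul_eq hu (hT y)
  have regular_deriv (y : ℝ[X]) := VanishesToOrder.ratDeriv_of_algebraMap_mul_eq hu (hT y)
  rw [pow_mul_inv_jacobiWeight ha hb]
  exact (((vanishesToOrder_one_sub_X_sq hε).mul (.of_algebraMap _)).mul
    (((regular y).mul (regular_deriv z)).sub ((regular z).mul (regular_deriv y)))).mono le_rfl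

lemma inv_jacobiWeight_mul (a b : ℕ) (Q : ℝ[X]) :
    (ι (jacobiWeight a b))⁻¹ * ι (jacobiWeight a b * Q) = ι Q := by
  rw [map_mul, inv_mul_cancel_left₀ (algebraMap_jacobiWeight_ne_zero a b)]

lemma vanishesToOrder_weighted_wronskian (hε : ε ^ 2 = 1) {y z : ℝ[X]} (hy : jacobiWeight a b ∣ y)
    (hz : jacobiWeight a b ∣ z) :
    VanishesToOrder ε 1 (ι (1 - X ^ 2) * (ι (jacobiWeight a b))⁻¹ *
      (ι y * ratDeriv ℝ (ι z) - ι z * ratDeriv ℝ (ι y))) := by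
  obtain ⟨Y, rfl⟩ := hy
  obtain ⟨Z, rfl⟩ := hz
  rw [mul_assoc, mul_sub, ← mul_assoc _ (ι (jacobiWeight a b * Y)),
    ← mul_assoc _ (ι (jacobiWeight a b * Z)), inv_jacobiWeight_mul, inv_jacobiWeight_mul,
    ratDeriv_algebraMap, ratDeriv_algebraMap, ← map_mul, ← map_mul, ← map_sub]
  exact ((vanishesToOrder_one_sub_X_sq hε).mul (.of_algebraMap _)).mono le_rfl

lemma algebraMap_sq_mul_darbouxChain_sq_sub (ha : a ≤ n) (hb : b ≤ n)
    (hu : wronskian derivative u ≠ 0) (Q : ℝ[X]) (c : ℝ) :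
    ι (wronskian derivative u ^ 2) * (ι (1 - X ^ 2) ^ n * (ι (jacobiWeight a b))⁻¹ *
        darbouxChain (ratDeriv ℝ) (fun i => ι (u i)) (ι (jacobiWeight a b * Q)) ^ 2 -
      c • ((ι (jacobiWeight a b))⁻¹ * ι (jacobiWeight a b * Q) ^ 2)) =
    ι (jacobiWeight (n - a) (n - b) *
        wronskian derivative (Fin.snoc u (jacobiWeight a b * Q) : Fin (n + 1) → ℝ[X]) ^ 2 -
      c • (jacobiWeight a b * Q ^ 2 * wronskian derivative u ^ 2)) := by
  have hT := algebraMap_wronskian_mul_darbouxChain hu (jacobiWeight a b * Q)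
  rw [pow_mul_inv_jacobiWeight ha hb, pow_two (ι (jacobiWeight a b * Q)), ← mul_assoc (_)⁻¹,
    inv_jacobiWeight_mul, map_sub, algebraMap_smul_polynomial]
  simp only [map_mul, map_pow, ← hT, Algebra.smul_def]
  ring

/- Integrated over `[-1, 1]`, this says that the eigenfunction and its Darboux transform have
squared norms in the ratio `∏ (μ i - m)`, for the weights `(1 - x)^(-a) (1 + x)^(-b)` and
`(1 - x)^(n-a) (1 + x)^(n-b)`. -/
theorem exists_ratDeriv_eq_darbouxChain_sq_sub {μ : Fin n → ℝ} (ha : a ≤ n) (hb : b ≤ n)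
    (h : IsTriangular (jacobiOp (-a) (-b)) u μ)
    (hu : ∀ x ∈ Set.Icc (-1 : ℝ) 1, (wronskian derivative u).eval x ≠ 0) {q : ℝ[X]} {m : ℝ}
    (hq : jacobiOp (-a) (-b) q = m • q) (hdvd : jacobiWeight a b ∣ q) :
    ∃ f : RatFunc ℝ, ratDeriv ℝ f = ι (1 - X ^ 2) ^ n * (ι (jacobiWeight a b))⁻¹ *
        darbouxChain (ratDeriv ℝ) (fun i => ι (u i)) (ι q) ^ 2 -
          (∏ i, (μ i - m)) • ((ι (jacobiWeight a b))⁻¹ * ι q ^ 2) ∧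
      VanishesToOrder 1 1 f ∧ VanishesToOrder (-1) 1 f := by
  have hW : wronskian derivative u ≠ 0 := fun h0 => hu 1 (by simp) (by rw [h0, eval_zero])
  obtain ⟨R, hR, hprimitive⟩ := exists_derivation_eq_darbouxChain_sq
    (ratDeriv_mul_inv_jacobiWeight a b) h.algebraMap (wronskian_algebraMap_ne_zero.2 hW)
    (secondOrder_algebraMap_eq_smul hq)
  obtain ⟨j₁, hj₁⟩ := VanishesToOrder.exists_of_mem_diffOperators hR 1
  obtain ⟨j₂, hj₂⟩ := VanishesToOrder.exists_of_mem_diffOperators hR (-1)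
  obtain ⟨z, hz, happrox⟩ := exists_pow_dvd_sub_jacobiOp_sub_smul m hdvd (1 + j₁ + j₂)
  specialize hprimitive (ι z)
  rw [secondOrder_algebraMap, ← algebraMap_smul_polynomial, ← map_sub, ← map_sub] at hprimitive
  have vanishes {ε : ℝ} (hε : ε ^ 2 = 1) (hW : (wronskian derivative u).eval ε ≠ 0)
      (hRz : VanishesToOrder ε 1 (R (ι (q - (jacobiOp (-a) (-b) z - m • z))))) :=
    (hRz.add (vanishesToOrder_weighted_wronskian_darbouxChain ha hb hε hW q z)).sub
      ((vanishesToOrder_weighted_wronskian hε hdvd hz).smul (∏ i, (μ i - m)))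
  refine ⟨_, hprimitive, vanishes (one_pow 2) (hu 1 (by simp)) (hj₁ _ _ ?_),
    vanishes neg_one_sq (hu (-1) (by simp)) (hj₂ _ _ ?_)⟩
  · exact .algebraMap_of_dvd
      (((pow_dvd_pow _ (by omega)).trans (Dvd.intro _ rfl)).trans happrox)
  · exact .algebraMap_of_dvd
      (((pow_dvd_pow _ (by omega)).trans (Dvd.intro_left _ rfl)).trans happrox)

lemma eval_sub_smul_nonneg {A B : ℝ[X]} {c x : ℝ} (hc : c ≤ 0) (hA : 0 ≤ A.eval x)
    (hB : 0 ≤ B.eval x) : 0 ≤ (A - c • B).eval x := by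
  rw [eval_sub, eval_smul, smul_eq_mul]
  linarith [mul_nonneg (neg_nonneg.2 hc) hB]

lemma eq_zero_of_sub_smul_eq_zero {A B : ℝ[X]} {c : ℝ} (hc : c < 0)
    (hA : ∀ x ∈ Set.Icc (-1 : ℝ) 1, 0 ≤ A.eval x) (hB : ∀ x ∈ Set.Icc (-1 : ℝ) 1, 0 ≤ B.eval x)
    (h : A - c • B = 0) : B = 0 := by
  refine eq_zero_of_infinite_isRoot _
    ((Set.Icc_infinite (show (-1 : ℝ) < 1 by norm_num)).mono fun x hx => ?_)
  have hx0 := congrArg (eval x) h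
  rw [eval_sub, eval_smul, smul_eq_mul, eval_zero] at hx0
  have hA := hA x hx
  have hB := hB x hx
  rcases hB.eq_or_lt with hB | hB
  · exact hB.symm
  · nlinarith

theorem prod_sub_nonneg_of_wronskian_eval_ne_zero {μ : Fin n → ℝ} (ha : a ≤ n) (hb : b ≤ n)
    (h : IsTriangular (jacobiOp (-a) (-b)) u μ)
    (hu : ∀ x ∈ Set.Icc (-1 : ℝ) 1, (wronskian derivative u).eval x ≠ 0) {q : ℝ[X]} {m : ℝ}
    (hq : jacobiOp (-a) (-b) q = m • q) (hq0 : q ≠ 0) (hdvd : jacobiWeight a b ∣ q) :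
    0 ≤ ∏ i, (μ i - m) := by
  by_contra! hneg
  have hW : wronskian derivative u ≠ 0 := fun h0 => hu 1 (by simp) (by rw [h0, eval_zero])
  obtain ⟨f, hf, hf_one, hf_neg_one⟩ := exists_ratDeriv_eq_darbouxChain_sq_sub ha hb h hu hq hdvd
  obtain ⟨Q, rfl⟩ := hdvd
  have hderiv := algebraMap_sq_mul_darbouxChain_sq_sub ha hb hW Q (∏ i, (μ i - m))
  rw [← hf] at hderiv
  have transformed_nonneg (x : ℝ) (hx : x ∈ Set.Icc (-1 : ℝ) 1) :
      0 ≤ (jacobiWeight (n - a) (n - b) * wronskian derivative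
        (Fin.snoc u (jacobiWeight a b * Q) : Fin (n + 1) → ℝ[X]) ^ 2).eval x := by
    rw [eval_mul, eval_pow]
    exact mul_nonneg (eval_jacobiWeight_nonneg _ _ hx) (sq_nonneg _)
  have original_nonneg (x : ℝ) (hx : x ∈ Set.Icc (-1 : ℝ) 1) :
      0 ≤ (jacobiWeight a b * Q ^ 2 * wronskian derivative u ^ 2).eval x := by
    simp only [eval_mul, eval_pow]
    have := eval_jacobiWeight_nonneg a b hx
    positivity
  have hzero := eq_zero_of_ratDeriv_nonneg_of_vanishesToOrder (by norm_num) hu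
    (fun x hx => eval_sub_smul_nonneg hneg.le (transformed_nonneg x hx) (original_nonneg x hx))
    hderiv hf_neg_one hf_one
  have hprod := eq_zero_of_sub_smul_eq_zero hneg transformed_nonneg original_nonneg hzero
  refine mul_ne_zero ?_ (pow_ne_zero 2 hW) hprod
  rw [pow_two, ← mul_assoc]
  exact mul_ne_zero hq0 (right_ne_zero_of_mul hq0)

end Chain

end Positivity

/-! ### The seed polynomials -/

lemma iteratedDeriv_eval (q : ℝ[X]) (j : ℕ) :
    iteratedDeriv j (fun x => q.eval x) = fun x => (derivative^[j] q).eval x := by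
  induction j with
  | zero => simp
  | succ j ih =>
    ext x
    rw [iteratedDeriv_succ, ih, Polynomial.deriv, Function.iterate_succ_apply']

lemma exists_omegaJ_eq_mul_eval_wronskian {a b : ℕ} (hb : 0 < b) (hba : b ≤ a) (M : ℕ → ℝ)
    {F : Finset ℕ} {n : ℕ} (hn : F.card = n) {u : Fin n → ℝ[X]}
    (hu : ∀ f ∈ F, phatPoly a b M f ∈ Submodule.span ℝ (Set.range u)) :
    ∃ c : ℝ, ∀ x, OmegaJ (-a) (-b) M F x = c * (wronskian derivative u).eval x := by
  subst hn
  choose c hc using exists_phat_eq_mul_eval hb hba M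
  obtain ⟨d, hd⟩ := wronskian_eq_smul_of_mem_span derivative (u := u)
    (v := fun i => c (elemOf F i) • phatPoly a b M (elemOf F i))
    fun i => Submodule.smul_mem _ _ (hu _ (F.orderEmbOfFin_mem rfl i))
  refine ⟨d, fun x => ?_⟩
  rw [← smul_eq_mul, ← eval_smul, ← hd, OmegaJ, wronskian, ← coe_evalRingHom, RingHom.map_det]
  congr 1
  ext1 i j
  have hphat : Phat (-a) (-b) M (elemOf F i) =
      fun x => (c (elemOf F i) • phatPoly a b M (elemOf F i)).eval x :=
    funext fun x => (hc _ x).trans (by rw [eval_smul, smul_eq_mul])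
  rw [Matrix.of_apply, hphat, iteratedDeriv_eval]
  rfl

/-- A replacement for `P̂_n` that spans the same space for `n ∈ F` and, unlike `P̂_n` itself,
vanishes to order `b` at `-1` when `n < b` and to order `a` at `1` when `a ≤ n` and
`a + b - 1 - n ∈ F`. -/
def seedPoly (a b : ℕ) (M : ℕ → ℝ) (F : Finset ℕ) (n : ℕ) : ℝ[X] :=
  if n < b then jacobiPoly (-a) (-b) n - shiftedJacobi a (-b) (b - 1 - n)
  else if n < a then middlePoly a b n
  else if n < a + b then
    if a + b - 1 - n ∈ F then shiftedJacobi a (-b) (n - a) else mixedPoly a b M n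
  else jacobiPoly (-a) (-b) n

section Seeds

variable {a b n : ℕ} {M : ℕ → ℝ} {F : Finset ℕ}

lemma seedPoly_of_lt (hn : n < b) :
    seedPoly a b M F n = jacobiPoly (-a) (-b) n - shiftedJacobi a (-b) (b - 1 - n) :=
  if_pos hn

lemma seedPoly_of_mem_Ico (hbn : b ≤ n) (hna : n < a) : seedPoly a b M F n = middlePoly a b n := by
  rw [seedPoly, if_neg (by omega), if_pos hna]

lemma seedPoly_of_mem (hba : b ≤ a) (han : a ≤ n) (hn : n < a + b) (hF : a + b - 1 - n ∈ F) :
    seedPoly a b M F n = shiftedJacobi a (-b) (n - a) := by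
  rw [seedPoly, if_neg (by omega), if_neg (by omega), if_pos hn, if_pos hF]

lemma seedPoly_of_notMem (hba : b ≤ a) (han : a ≤ n) (hn : n < a + b) (hF : a + b - 1 - n ∉ F) :
    seedPoly a b M F n = mixedPoly a b M n := by
  rw [seedPoly, if_neg (by omega), if_neg (by omega), if_pos hn, if_neg hF]

lemma seedPoly_of_ge (hn : a + b ≤ n) :
    seedPoly a b M F n = jacobiPoly (-a) (-b) n := by
  rw [seedPoly, if_neg (by omega), if_neg (by omega), if_neg (by omega)]

lemma phatPoly_mem_of_seedPoly_mem {S : Submodule ℝ ℝ[X]} (hba : b ≤ a)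
    (hF : ∀ f, b ≤ f → f < a + b → f ∈ F) (hS : ∀ f ∈ F, seedPoly a b M F f ∈ S) (hn : n ∈ F) :
    phatPoly a b M n ∈ S := by
  have hseed := hS n hn
  rw [phatPoly]
  split_ifs with hnb hna hnab
  · have hpartner := hS (a + b - 1 - n) (hF _ (by omega) (by omega))
    rw [seedPoly_of_mem hba (by omega) (by omega) (by rwa [show a + b - 1 - (a + b - 1 - n) = n by
      omega]), show a + b - 1 - n - a = b - 1 - n by omega] at hpartner
    rw [seedPoly_of_lt hnb] at hseed
    simpa using S.add_mem hseed hpartner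
  · rwa [seedPoly_of_mem_Ico (by omega) hna] at hseed
  · by_cases hpartner : a + b - 1 - n ∈ F
    · rw [seedPoly_of_mem hba (by omega) hnab hpartner] at hseed
      have hsum := S.add_mem (hS _ hpartner) hseed
      rw [seedPoly_of_lt (by omega), show b - 1 - (a + b - 1 - n) = n - a by omega,
        sub_add_cancel] at hsum
      exact S.add_mem (S.smul_mem _ hsum) hseed
    · rwa [seedPoly_of_notMem hba (by omega) hnab hpartner] at hseed
  · rwa [seedPoly_of_ge (by omega)] at hseed

lemma jacobiOp_mixedPoly (han : a ≤ n) (hn : n < a + b) :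
    jacobiOp (-a) (-b) (mixedPoly a b M n) = -lam (-a) (-b) n • mixedPoly a b M n := by
  rw [mixedPoly, map_add, map_smul, jacobiOp_jacobiPoly,
    jacobiOp_shiftedJacobi_neg (v := a + b - 1 - n) (by omega),
    lam_eq_lam_of_add_add_one_eq (m := n) (n := a + b - 1 - n) (by omega), smul_add, smul_comm]

lemma exists_jacobiOp_seedPoly_eq (hb : 0 < b) (M : ℕ → ℝ) (F : Finset ℕ) (n : ℕ) :
    jacobiOp (-a) (-b) (seedPoly a b M F n) = -lam (-a) (-b) n • seedPoly a b M F n ∨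
      ∃ m, b ≤ m ∧ m < n ∧ n < a ∧ ∃ c : ℝ, jacobiOp (-a) (-b) (seedPoly a b M F n) =
        -lam (-a) (-b) n • seedPoly a b M F n + c • seedPoly a b M F m := by
  by_cases hmiddle : b ≤ n ∧ n < a ∧ a + b ≤ 2 * n
  · obtain ⟨hbn, hna, h2⟩ := hmiddle
    obtain ⟨c, hc⟩ := exists_jacobiOp_derivPhiPoly_eq hb h2 hna
    refine .inr ⟨a + b - 1 - n, by omega, by omega, hna, c, ?_⟩
    rw [seedPoly_of_mem_Ico hbn hna, seedPoly_of_mem_Ico (by omega) (by omega), middlePoly,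
      middlePoly, if_pos h2, if_neg (by omega), hc]
  · left
    rw [seedPoly]
    split_ifs with hnb hna hnab hF
    · rw [map_sub, jacobiOp_jacobiPoly, jacobiOp_shiftedJacobi_neg (v := n) (by omega), smul_sub]
    · rw [middlePoly, if_neg (by omega), jacobiOp_jacobiPoly]
    · rw [jacobiOp_shiftedJacobi_neg (v := a + b - 1 - n) (by omega),
        lam_eq_lam_of_add_add_one_eq (m := n) (n := a + b - 1 - n) (by omega)]
    · exact jacobiOp_mixedPoly (by omega) hnab
    · exact jacobiOp_jacobiPoly _ _ _

/-- The seed polynomials with index in `G`, in increasing order of the index. -/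
def seedFamily (a b : ℕ) (M : ℕ → ℝ) (F G : Finset ℕ) : Fin G.card → ℝ[X] :=
  fun i => seedPoly a b M F (G.orderEmbOfFin rfl i)

variable {G : Finset ℕ}

lemma exists_orderEmbOfFin_eq (hn : n ∈ G) : ∃ i, G.orderEmbOfFin rfl i = n := by
  rwa [← Set.mem_range, range_orderEmbOfFin]

lemma seedPoly_mem_range_seedFamily (hn : n ∈ G) :
    seedPoly a b M F n ∈ Set.range (seedFamily a b M F G) := by
  obtain ⟨i, rfl⟩ := exists_orderEmbOfFin_eq hn
  exact ⟨i, rfl⟩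

lemma isTriangular_seedFamily (hb : 0 < b) (hG : ∀ m, b ≤ m → m < a → m ∈ G) :
    IsTriangular (jacobiOp (-a) (-b)) (seedFamily a b M F G)
      fun i => -lam (-a) (-b) (G.orderEmbOfFin rfl i) := by
  intro i
  rcases exists_jacobiOp_seedPoly_eq hb M F (G.orderEmbOfFin rfl i) with h | h
  · rw [seedFamily, h, sub_self]
    exact zero_mem _
  · obtain ⟨m, hbm, hmi, hia, c, hc⟩ := h
    obtain ⟨j, rfl⟩ := exists_orderEmbOfFin_eq (hG m hbm (hmi.trans hia))
    rw [seedFamily, hc, add_sub_cancel_left]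
    exact Submodule.smul_mem _ _
      (Submodule.subset_span ⟨j, (G.orderEmbOfFin rfl).lt_iff_lt.1 hmi, rfl⟩)

lemma prod_orderEmbOfFin (G : Finset ℕ) (φ : ℕ → ℝ) :
    ∏ i, φ (G.orderEmbOfFin rfl i) = ∏ f ∈ G, φ f := by
  conv_rhs => rw [← map_orderEmbOfFin_univ G rfl, prod_map]
  rfl

end Seeds

/-! ### Endpoint values of Wronskians -/

lemma det_eq_zero_of_card_lt {R ι : Type*} [CommRing R] [Fintype ι] [DecidableEq ι]
    {A : Matrix ι ι R} {S T : Finset ι} (hST : #S < #T) (h : ∀ i ∉ S, ∀ j ∈ T, A i j = 0) :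
    A.det = 0 := by
  rw [Matrix.det_apply]
  refine sum_eq_zero fun σ _ => ?_
  obtain ⟨j, hjT, hjS⟩ : ∃ j ∈ T, σ j ∉ S := by
    by_contra! hσ
    exact hST.not_ge (card_le_card_of_injOn σ hσ σ.injective.injOn)
  have hprod : ∏ i, A (σ i) i = 0 := prod_eq_zero (mem_univ j) (h _ hjS j hjT)
  rw [hprod, smul_zero]

lemma eval_iterate_derivative_eq_zero {R : Type*} [CommRing R] {x : R} {c j : ℕ} {y : R[X]}
    (h : (X - C x) ^ c ∣ y) (hj : j < c) : (derivative^[j] y).eval x = 0 :=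
  dvd_iff_isRoot.1 ((dvd_pow_self _ (by omega)).trans
    (pow_sub_dvd_iterate_derivative_of_pow_dvd j h))

lemma eval_wronskian_eq_zero {R : Type*} [CommRing R] {n c : ℕ} {u : Fin n → R[X]} {x : R}
    {S : Finset (Fin n)} (hc : c ≤ n) (hS : #S < c) (h : ∀ i ∉ S, (X - C x) ^ c ∣ u i) :
    (wronskian derivative u).eval x = 0 := by
  rw [wronskian, ← coe_evalRingHom, RingHom.map_det]
  refine det_eq_zero_of_card_lt (S := S) (T := {j | (j : ℕ) < c}) ?_ fun i hi j hj =>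
    eval_iterate_derivative_eq_zero (h i hi) (mem_filter.1 hj).2
  rwa [Fin.card_filter_val_lt, min_eq_right hc]

lemma wronskian_snoc_eq_det_updateRow {R : Type*} [CommRing R] (d : R → R) {n : ℕ}
    (u : Fin n → R) (y : R) :
    wronskian d (Fin.snoc u y : Fin (n + 1) → R) =
      Matrix.det ((Matrix.of fun i j : Fin (n + 1) =>
        d^[(j : ℕ)] ((Fin.snoc u 0 : Fin (n + 1) → R) i)).updateRow (Fin.last n)
          fun j => d^[(j : ℕ)] y) := by
  rw [wronskian]
  congr 1
  ext1 i j
  refine Fin.lastCases ?_ (fun i => ?_) i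
  · simp
  · simp [(Fin.castSucc_lt_last i).ne]

lemma wronskian_snoc_smul_add {k R : Type*} [CommRing k] [CommRing R] [Algebra k R]
    (d : R →ₗ[k] R) {n : ℕ} (u : Fin n → R) (c : k) (y z : R) :
    wronskian d (Fin.snoc u (c • y + z) : Fin (n + 1) → R) =
      c • wronskian d (Fin.snoc u y : Fin (n + 1) → R) +
        wronskian d (Fin.snoc u z : Fin (n + 1) → R) := by
  have hrow : (fun j : Fin (n + 1) => d^[(j : ℕ)] (c • y + z)) =
      algebraMap k R c • (fun j : Fin (n + 1) => d^[(j : ℕ)] y) +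
        fun j : Fin (n + 1) => d^[(j : ℕ)] z := by
    ext j
    simp only [← Module.End.coe_pow, map_add, map_smul, Pi.add_apply, Pi.smul_apply, smul_eq_mul,
      Algebra.smul_def c ((d ^ (j : ℕ)) y)]
  simp only [wronskian_snoc_eq_det_updateRow]
  rw [hrow, Matrix.det_updateRow_add, Matrix.det_updateRow_smul, Algebra.smul_def]

lemma X_sub_C_neg_one_pow_dvd_middlePoly {a b n : ℕ} (hb : 0 < b) (hbn : b ≤ n) (hna : n < a) :
    (X - C (-1)) ^ b ∣ middlePoly a b n := by
  rw [middlePoly]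
  split_ifs with h2
  · obtain ⟨c, hc⟩ := exists_jacobiOp_derivPhiPoly_eq hb h2 hna
    refine pow_dvd_of_pow_dvd_jacobiOp_sub_smul (A := -a) (B := -b) (μ := -lam (-a) (-b) n) .neg_one
      (fun j hj hlam => ?_) ?_
    · have hsub := lam_sub_lam_eq_mul (show n + (a + b - 1 - n) + 1 = a + b by omega) j
      rw [neg_inj.1 hlam, sub_self, eq_comm, mul_eq_zero] at hsub
      rcases hsub with hsub | hsub <;>
      · rw [neg_add_eq_zero] at hsub
        have := Nat.cast_injective hsub
        omega
    · rw [hc, add_sub_cancel_left, smul_eq_C_mul]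
      exact (X_sub_C_neg_one_pow_dvd_jacobiPoly _ (by omega)).mul_left _
  · exact X_sub_C_neg_one_pow_dvd_jacobiPoly _ hbn

section Seeds

variable {a b n : ℕ} {M : ℕ → ℝ} {F G : Finset ℕ} {y : ℝ[X]}

lemma X_sub_C_neg_one_pow_dvd_seedPoly (hb : 0 < b) (hn : n < a ∨ a + b ≤ n) :
    (X - C (-1)) ^ b ∣ seedPoly a b M F n := by
  by_cases hnb : n < b
  · rw [seedPoly_of_lt hnb]
    exact X_sub_C_neg_one_pow_dvd_jacobiPoly_sub_shiftedJacobi (by omega)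
  rcases hn with hna | hn
  · rw [seedPoly_of_mem_Ico (by omega) hna]
    exact X_sub_C_neg_one_pow_dvd_middlePoly hb (by omega) hna
  · rw [seedPoly_of_ge hn]
    exact X_sub_C_neg_one_pow_dvd_jacobiPoly _ (by omega)

lemma X_sub_C_one_pow_dvd_seedPoly (hba : b ≤ a) (han : a ≤ n)
    (hn : n < a + b → a + b - 1 - n ∈ F) : (X - C 1) ^ a ∣ seedPoly a b M F n := by
  by_cases hnab : n < a + b
  · rw [seedPoly_of_mem hba han hnab (hn hnab)]
    exact X_sub_C_one_pow_dvd_shiftedJacobi _ _ _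
  · obtain ⟨N, rfl⟩ := Nat.exists_eq_add_of_le (not_lt.1 hnab)
    rw [seedPoly_of_ge (by omega), jacobiPoly_neg_neg, mul_assoc]
    exact Dvd.intro _ rfl

lemma eval_wronskian_snoc_seedFamily_eq_zero {c : ℕ} {x : ℝ} {S : Finset ℕ} (hc : c ≤ #G + 1)
    (hS : #S < c) (h : ∀ f ∈ G, f ∉ S → (X - C x) ^ c ∣ seedPoly a b M F f)
    (hy : (X - C x) ^ c ∣ y) :
    (wronskian derivative
      (Fin.snoc (seedFamily a b M F G) y : Fin (#G + 1) → ℝ[X])).eval x = 0 := by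
  set T : Finset (Fin #G) := {i | G.orderEmbOfFin rfl i ∈ S}
  have hT : #T ≤ #S := card_le_card_of_injOn (G.orderEmbOfFin rfl)
    (fun i hi => (mem_filter.1 hi).2) (G.orderEmbOfFin rfl).injective.injOn
  refine eval_wronskian_eq_zero (S := T.map Fin.castSuccEmb) hc (by rw [card_map]; omega) ?_
  refine Fin.lastCases (fun _ => by simpa using hy) fun i hi => ?_
  rw [Fin.snoc_castSucc]
  refine h _ (G.orderEmbOfFin_mem rfl i) fun hiS => hi ?_
  simpa [T] using hiS

/- At most `b - 1` seeds fail to vanish to order `b` at `-1`. -/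
lemma eval_neg_one_wronskian_snoc_seedFamily_eq_zero {m : ℕ} (hb : 0 < b) (hm : m ∈ Ico a (a + b))
    (hmG : m ∉ G) (hG : b ≤ #G + 1) (hy : (X - C (-1)) ^ b ∣ y) :
    (wronskian derivative
      (Fin.snoc (seedFamily a b M F G) y : Fin (#G + 1) → ℝ[X])).eval (-1) = 0 := by
  refine eval_wronskian_snoc_seedFamily_eq_zero (S := (Ico a (a + b)).erase m) hG ?_ ?_ hy
  · rw [card_erase_of_mem hm, Nat.card_Ico]
    omega
  · intro f hf hfS
    have hfm : f ≠ m := fun h => hmG (h ▸ hf)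
    simp only [mem_erase, mem_Ico, not_and] at hfS
    exact X_sub_C_neg_one_pow_dvd_seedPoly hb (by have := hfS hfm; omega)

/- At most `a - 1` seeds fail to vanish to order `a` at `1`: reflecting the upper half of
`[0, a + b)` sends their indices injectively into `[0, a) \ {v}`. -/
lemma eval_one_wronskian_snoc_seedFamily_eq_zero {v : ℕ} (hba : b ≤ a) (hv : v < b) (hvF : v ∉ F)
    (hGF : G ⊆ F.erase (a + b - 1 - v)) (hG : a ≤ #G + 1) (hy : (X - C 1) ^ a ∣ y) :
    (wronskian derivative
      (Fin.snoc (seedFamily a b M F G) y : Fin (#G + 1) → ℝ[X])).eval 1 = 0 := by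
  refine eval_wronskian_snoc_seedFamily_eq_zero
    (S := {f ∈ G | f < a ∨ f < a + b ∧ a + b - 1 - f ∉ F}) hG ?_ ?_ hy
  · refine lt_of_le_of_lt (card_le_card_of_injOn (t := (range a).erase v)
      (fun f => if f < a then f else a + b - 1 - f) ?_ ?_)
      (card_erase_lt_of_mem (mem_range.2 (hv.trans_le hba)) |>.trans_eq (card_range a))
    · intro f hf
      obtain ⟨hfG, hf⟩ := mem_filter.1 hf
      obtain ⟨hfv, hfF⟩ := mem_erase.1 (hGF hfG)
      have : f ≠ v := fun h => hvF (h ▸ hfF)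
      simp only [coe_erase, coe_range, Set.mem_sdiff, Set.mem_Iio, Set.mem_singleton_iff]
      split_ifs <;> omega
    · intro f hf g hg hfg
      obtain ⟨hfG, hf⟩ := mem_filter.1 hf
      obtain ⟨hgG, hg⟩ := mem_filter.1 hg
      have hfF := mem_of_mem_erase (hGF hfG)
      have hgF := mem_of_mem_erase (hGF hgG)
      dsimp only at hfg
      split_ifs at hfg with hfa hga hga
      · exact hfg
      · exact absurd (hfg ▸ hfF) (hg.resolve_left hga).2
      · exact absurd (hfg ▸ hgF) (hf.resolve_left hfa).2
      · omega
  · intro f hf hfS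
    simp only [mem_filter, hf, true_and, not_or, not_and, not_not, not_lt] at hfS
    exact X_sub_C_one_pow_dvd_seedPoly hba hfS.1 hfS.2

end Seeds

/-! ### Monotonicity of quotients of Wronskians -/

lemma eq_zero_of_mul_derivative_eq_mul {K : Type*} [Field K] [CharZero K] {p r D : K[X]} {x : K}
    (h : p * derivative D = r * D) (hp : p.eval x ≠ 0) (hD : D.eval x = 0) : D = 0 := by
  by_contra hD0
  have hroot : 0 < D.rootMultiplicity x := (rootMultiplicity_pos hD0).2 hD
  have hcop : IsCoprime ((X - C x) ^ D.rootMultiplicity x) p :=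
    ((irreducible_X_sub_C x).coprime_iff_not_dvd.2 (mt dvd_iff_isRoot.1 hp)).pow_left
  have hdvd : (X - C x) ^ D.rootMultiplicity x ∣ derivative D :=
    hcop.dvd_of_dvd_mul_left (h ▸ (pow_rootMultiplicity_dvd D x).mul_left r)
  have hderiv : derivative D ≠ 0 := fun h0 => hD0 <| by
    rw [eq_C_of_derivative_eq_zero h0, eval_C] at hD
    rw [eq_C_of_derivative_eq_zero h0, hD, C_0]
  have := (le_rootMultiplicity_iff hderiv).2 hdvd
  rw [derivative_rootMultiplicity_of_root hD] at this
  omega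

section Abel

variable {a b : ℕ} {m : ℝ} {y z : ℝ[X]}

lemma one_sub_X_sq_mul_derivative_wronskian (hy : jacobiOp (-a) (-b) y = m • y)
    (hz : jacobiOp (-a) (-b) z = m • z) :
    (1 - X ^ 2) * derivative ((1 - X ^ 2) * (y * derivative z - derivative y * z)) =
      (C ((b : ℝ) - a) - C ((a : ℝ) + b) * X) *
        ((1 - X ^ 2) * (y * derivative z - derivative y * z)) := by
  simp only [jacobiOp_apply, smul_eq_C_mul, C_sub, C_add, C_neg] at hy hz
  simp only [derivative_mul, derivative_sub, derivative_one, derivative_X_pow, C_sub, C_add]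
  simp only [C_ofNat, Nat.cast_ofNat] at hy hz ⊢
  linear_combination (1 - X ^ 2) * (y * hz - z * hy)

-- Abel's identity: both sides solve the same first-order linear differential equation.
theorem exists_one_sub_X_sq_mul_wronskian_eq (hy : jacobiOp (-a) (-b) y = m • y)
    (hz : jacobiOp (-a) (-b) z = m • z) :
    ∃ c : ℝ, (1 - X ^ 2) * (y * derivative z - derivative y * z) = C c * jacobiWeight a b := by
  set P := (1 - X ^ 2) * (y * derivative z - derivative y * z)
  have hP := one_sub_X_sq_mul_derivative_wronskian hy hz
  have hE := one_sub_X_sq_mul_derivative_jacobiWeight a b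
  refine ⟨P.eval 0, sub_eq_zero.1 (eq_zero_of_mul_derivative_eq_mul (x := 0) (p := 1 - X ^ 2)
    (r := C ((b : ℝ) - a) - C ((a : ℝ) + b) * X) ?_ (by simp) (by simp [jacobiWeight]))⟩
  rw [derivative_sub, derivative_C_mul]
  linear_combination hP - C (P.eval 0) * hE

lemma one_sub_X_sq_mul_wronskian_shiftedJacobi (a : ℕ) (B : ℝ) (i : ℕ) (q : ℝ[X]) :
    (1 - X ^ 2) * (shiftedJacobi a B i * derivative q - derivative (shiftedJacobi a B i) * q) =
      (1 - X) ^ a * (C (2⁻¹ ^ a) * ((1 + X) *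
        ((1 - X) * (jacobiPoly a B i * derivative q - derivative (jacobiPoly a B i) * q) +
          C (a : ℝ) * (jacobiPoly a B i * q)))) := by
  rw [shiftedJacobi, derivative_C_mul, derivative_mul]
  linear_combination (-(C (2⁻¹ ^ a) * (1 + X) * jacobiPoly a B i * q)) *
    one_sub_X_mul_derivative_pow a

lemma neg_one_pow_mul_pos_of_wronskian_eq {i v : ℕ} {c : ℝ} (hba : b ≤ a) (hv : v + i + 1 = b)
    (hc : (1 - X ^ 2) * (shiftedJacobi a (-b) i * derivative (jacobiPoly (-a) (-b) v) -
      derivative (shiftedJacobi a (-b) i) * jacobiPoly (-a) (-b) v) = C c * jacobiWeight a b) :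
    0 < (-1) ^ v * c := by
  set G := jacobiPoly a (-b) i
  set q := jacobiPoly (-a) (-b) v
  have hcancel : C (2⁻¹ ^ a) * ((1 + X) * ((1 - X) * (G * derivative q - derivative G * q) +
      C (a : ℝ) * (G * q))) = C c * (1 + X) ^ b := by
    have hX : (1 - X : ℝ[X]) ≠ 0 := fun h => by simpa using congrArg (eval 0) h
    rw [one_sub_X_sq_mul_wronskian_shiftedJacobi, jacobiWeight, mul_left_comm (C c)] at hc
    exact mul_left_cancel₀ (pow_ne_zero a hX) hc
  have heval : 2⁻¹ ^ a * (2 * (a * (G.eval 1 * q.eval 1))) = c * 2 ^ b := by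
    simpa [one_add_one_eq_two] using congrArg (eval 1) hcancel
  have hG : 0 < G.eval 1 := by
    rw [eval_one_jacobiPoly, ← Nat.cast_add, genBinom_natCast]
    exact_mod_cast Nat.choose_pos (by omega)
  have hq : 0 < (-1) ^ v * q.eval 1 := by
    rw [eval_one_jacobiPoly_neg (by omega), ← mul_assoc, ← mul_pow, neg_one_mul, neg_neg, one_pow,
      one_mul]
    exact_mod_cast Nat.choose_pos (by omega)
  have ha : (0 : ℝ) < a := by exact_mod_cast (by omega : 0 < a)
  refine pos_of_mul_pos_left (b := (2 : ℝ) ^ b) ?_ (by positivity)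
  calc 0 < 2⁻¹ ^ a * (2 * (a * (G.eval 1 * ((-1) ^ v * q.eval 1)))) := by positivity
    _ = (-1) ^ v * c * 2 ^ b := by linear_combination (-1) ^ v * heval

lemma mixedPoly_add_eq (M : ℕ → ℝ) {i v : ℕ} (hv : v + i + 1 = b) :
    mixedPoly a b M (a + i) =
      (M i - 1)⁻¹ • jacobiPoly (-a) (-b) v + shiftedJacobi a (-b) i := by
  rw [mixedPoly, show a + b - 1 - (a + i) = v by omega, Nat.add_sub_cancel_left]

lemma exists_wronskian_mixedPoly_jacobiPoly_eq (M : ℕ → ℝ) {i v : ℕ} (hba : b ≤ a)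
    (hv : v + i + 1 = b) : ∃ c : ℝ, 0 < (-1) ^ v * c ∧
      (1 - X ^ 2) * (mixedPoly a b M (a + i) * derivative (jacobiPoly (-a) (-b) v) -
        derivative (mixedPoly a b M (a + i)) * jacobiPoly (-a) (-b) v) =
          C c * jacobiWeight a b := by
  obtain ⟨c, hc⟩ := exists_one_sub_X_sq_mul_wronskian_eq (jacobiOp_shiftedJacobi_neg (a := a) hv)
    (jacobiOp_jacobiPoly (-a) (-b) v)
  refine ⟨c, neg_one_pow_mul_pos_of_wronskian_eq hba hv hc, ?_⟩
  rw [mixedPoly_add_eq M hv, ← hc]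
  simp only [smul_eq_C_mul, derivative_add, derivative_C_mul]
  ring

end Abel

section WronskianSnoc

local notation "ι" => algebraMap ℝ[X] (RatFunc ℝ)

theorem jacobiWeight_mul_wronskian_snoc {a b n : ℕ} {u : Fin n → ℝ[X]} {μ : Fin n → ℝ}
    {y z : ℝ[X]} {m c : ℝ} (ha : a ≤ n + 1) (hb : b ≤ n + 1)
    (h : IsTriangular (jacobiOp (-a) (-b)) u μ) (hu : wronskian derivative u ≠ 0)
    (hy : jacobiOp (-a) (-b) y = m • y) (hz : jacobiOp (-a) (-b) z = m • z)
    (hc : (1 - X ^ 2) * (y * derivative z - derivative y * z) = C c * jacobiWeight a b) :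
    jacobiWeight (n + 1 - a) (n + 1 - b) *
      (wronskian derivative (Fin.snoc u y : Fin (n + 1) → ℝ[X]) *
          derivative (wronskian derivative (Fin.snoc u z : Fin (n + 1) → ℝ[X])) -
        derivative (wronskian derivative (Fin.snoc u y : Fin (n + 1) → ℝ[X])) *
          wronskian derivative (Fin.snoc u z : Fin (n + 1) → ℝ[X])) =
      C ((∏ i, (μ i - m)) * c) * wronskian derivative u ^ 2 := by
  have hTy := algebraMap_wronskian_mul_darbouxChain hu y
  have hTz := algebraMap_wronskian_mul_darbouxChain hu z
  have hTy' := congrArg (ratDeriv ℝ) hTy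
  have hTz' := congrArg (ratDeriv ℝ) hTz
  have hchain := darbouxChain_wronskian h.algebraMap (wronskian_algebraMap_ne_zero.2 hu)
    (secondOrder_algebraMap_eq_smul hy) (secondOrder_algebraMap_eq_smul hz)
  have hc' := congrArg ι hc
  have hE := algebraMap_jacobiWeight_ne_zero a b
  apply RatFunc.algebraMap_injective ℝ
  simp only [Derivation.leibniz, ratDeriv_algebraMap, smul_eq_mul] at hTy' hTz' hchain
  rw [map_mul ι (jacobiWeight _ _), ← pow_mul_inv_jacobiWeight ha hb]
  simp only [map_mul, map_sub ι (_ * _), map_pow, ← hTy, ← hTz, ← hTy', ← hTz', Algebra.smul_def,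
    IsScalarTower.algebraMap_apply ℝ ℝ[X] (RatFunc ℝ), algebraMap_eq] at hchain hc' ⊢
  linear_combination
    (ι (1 - X ^ 2) * (ι (jacobiWeight a b))⁻¹ * ι (wronskian derivative u) ^ 2) * hchain +
    (ι (C (∏ i, (μ i - m))) * (ι (jacobiWeight a b))⁻¹ * ι (wronskian derivative u) ^ 2) * hc' +
    (ι (C (∏ i, (μ i - m))) * ι (C c) * ι (wronskian derivative u) ^ 2) * mul_inv_cancel₀ hE

end WronskianSnoc

lemma mul_eval_div_eval_le {w d N W : ℝ[X]} {k p q : ℝ} (hpq : p ≤ q)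
    (hw : ∀ x ∈ Set.Ioo p q, 0 < w.eval x) (hd : ∀ x ∈ Set.Icc p q, d.eval x ≠ 0)
    (h : w * (d * derivative N - derivative d * N) = C k * W ^ 2) :
    k * (N.eval p / d.eval p) ≤ k * (N.eval q / d.eval q) := by
  have hmono := monotoneOn_eval_div_eval (n := C k * N) hd fun x hx =>
    nonneg_of_mul_nonneg_right (a := w.eval x) ?_ (hw x hx)
  · simpa [mul_div_assoc] using
      hmono (Set.left_mem_Icc.2 hpq) (Set.right_mem_Icc.2 hpq) hpq
  · rw [← eval_mul, derivative_C_mul, show w * (d * (C k * derivative N) - derivative d * (C k * N))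
      = (C k * W) ^ 2 by linear_combination C k * h, eval_pow]
    exact sq_nonneg _

lemma eval_jacobiWeight_pos (a b : ℕ) {x : ℝ} (hx : x ∈ Set.Ioo (-1 : ℝ) 1) :
    0 < (jacobiWeight a b).eval x := by
  simp only [jacobiWeight, eval_mul, eval_pow, eval_sub, eval_add, eval_one, eval_X]
  exact mul_pos (pow_pos (by linarith [hx.2]) _) (pow_pos (by linarith [hx.1]) _)

/-! ### The admissibility conditions -/

section Sign

lemma sign_eq_sign_of_mul_nonneg {x y : ℝ} (hx : x ≠ 0) (hy : y ≠ 0) (h : 0 ≤ x * y) :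
    Real.sign x = Real.sign y := by
  have hpos : 0 < x * y := h.lt_of_ne' (mul_ne_zero hx hy)
  rcases mul_pos_iff.1 hpos with ⟨hx, hy⟩ | ⟨hx, hy⟩
  · rw [Real.sign_of_pos hx, Real.sign_of_pos hy]
  · rw [Real.sign_of_neg hx, Real.sign_of_neg hy]

variable {a b i v : ℕ} {F : Finset ℕ}

lemma lam_sub_lam_eq_mul_of_add_add_one_eq (hv : v + i + 1 = b) (f : ℕ) :
    lam (-a) (-b) v - lam (-a) (-b) f = ((a : ℝ) + i - f) * (f - v) := by
  have hv' : (v : ℝ) + i + 1 = b := by exact_mod_cast hv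
  rw [lam, lam]
  linear_combination ((v : ℝ) - f) * hv'

lemma neg_one_pow_mul_prod_Ico_erase_pos (hba : b ≤ a) (hv : v + i + 1 = b) :
    0 < (-1) ^ v * ∏ f ∈ (Ico b (a + b)).erase (a + i), (lam (-a) (-b) v - lam (-a) (-b) f) := by
  have hsplit : (Ico b (a + b)).erase (a + i) = Ico b (a + i) ∪ Ico (a + i + 1) (a + b) := by
    ext f
    simp only [mem_erase, mem_union, mem_Ico]
    omega
  have hdisj : Disjoint (Ico b (a + i)) (Ico (a + i + 1) (a + b)) :=
    disjoint_left.2 fun f hf hf' => by simp only [mem_Ico] at hf hf'; omega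
  have hcard : #(Ico (a + i + 1) (a + b)) = v := by rw [Nat.card_Ico]; omega
  rw [hsplit, prod_union hdisj, mul_left_comm, ← hcard, ← prod_const, ← prod_mul_distrib, hcard]
  simp only [lam_sub_lam_eq_mul_of_add_add_one_eq hv]
  refine mul_pos (prod_pos fun f hf => ?_) (prod_pos fun f hf => ?_)
  · have hf : v < f ∧ f < a + i := by rw [mem_Ico] at hf; omega
    have hvf : (v : ℝ) < f := by exact_mod_cast hf.1
    have hfi : (f : ℝ) < a + i := by exact_mod_cast hf.2
    exact mul_pos (by linarith) (by linarith)
  · have hf : v < f ∧ a + i < f := by rw [mem_Ico] at hf; omega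
    have hvf : (v : ℝ) < f := by exact_mod_cast hf.1
    have hfi : (a : ℝ) + i < f := by exact_mod_cast hf.2
    rw [neg_one_mul, ← neg_mul]
    exact mul_pos (by linarith) (by linarith)

lemma prod_erase_eq_mul_prod_Ico_erase (hba : b ≤ a) (hF : ∀ f, b ≤ f → f < a + b → f ∈ F)
    (hi : i < b) (φ : ℕ → ℝ) :
    ∏ f ∈ F.erase (a + i), φ f =
      (∏ f ∈ F with f < b ∨ a + b ≤ f, φ f) * ∏ f ∈ (Ico b (a + b)).erase (a + i), φ f := by
  rw [← prod_filter_mul_prod_filter_not _ fun f => f < b ∨ a + b ≤ f]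
  congr 1 <;> refine prod_congr ?_ fun _ _ => rfl <;> ext f
  · simp only [mem_filter, mem_erase]
    exact ⟨fun h => ⟨h.1.2, h.2⟩, fun h => ⟨⟨by omega, h.1⟩, h.2⟩⟩
  · simp only [mem_filter, mem_erase, mem_Ico]
    exact ⟨fun h => ⟨h.1.1, by omega⟩, fun h => ⟨⟨h.1, hF f h.2.1 h.2.2⟩, by omega⟩⟩

end Sign

section Conditions

variable {a b i v : ℕ} {M : ℕ → ℝ} {F : Finset ℕ}

lemma eval_wronskian_ne_zero_of_omegaJ_ne_zero (hb : 0 < b) (hba : b ≤ a)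
    (hF : ∀ f, b ≤ f → f < a + b → f ∈ F) {n : ℕ} (hn : #F = n) {u : Fin n → ℝ[X]}
    (hu : ∀ f ∈ F, seedPoly a b M F f ∈ Set.range u) {x : ℝ}
    (hΩ : OmegaJ (-a) (-b) M F x ≠ 0) : (wronskian derivative u).eval x ≠ 0 := by
  obtain ⟨c, hc⟩ := exists_omegaJ_eq_mul_eval_wronskian hb hba M hn fun f hf =>
    phatPoly_mem_of_seedPoly_mem hba hF (fun g hg => Submodule.subset_span (hu g hg)) hf
  exact right_ne_zero_of_mul (hc x ▸ hΩ)

lemma le_card_of_forall_mem (hF : ∀ f, b ≤ f → f < a + b → f ∈ F) : a ≤ #F := by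
  have := card_le_card (show Ico b (a + b) ⊆ F from fun f hf =>
    hF f (mem_Ico.1 hf).1 (mem_Ico.1 hf).2)
  rwa [Nat.card_Ico, Nat.add_sub_cancel] at this

lemma eval_one_wronskian_snoc_mixedPoly (hba : b ≤ a) (hv : v + i + 1 = b) (hvF : v ∉ F)
    (hF : a ≤ #F) :
    (wronskian derivative (Fin.snoc (seedFamily a b M F (F.erase (a + i)))
        (mixedPoly a b M (a + i)) : Fin (#(F.erase (a + i)) + 1) → ℝ[X])).eval 1 =
      (M i - 1)⁻¹ * (wronskian derivative (Fin.snoc (seedFamily a b M F (F.erase (a + i)))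
        (jacobiPoly (-a) (-b) v) : Fin (#(F.erase (a + i)) + 1) → ℝ[X])).eval 1 := by
  have hcard : #F ≤ #(F.erase (a + i)) + 1 := Nat.sub_le_iff_le_add.1 pred_card_le_card_erase
  rw [mixedPoly_add_eq M hv, wronskian_snoc_smul_add, eval_add, eval_smul, smul_eq_mul,
    eval_one_wronskian_snoc_seedFamily_eq_zero hba (v := v) (by omega) hvF
      (by rw [show a + b - 1 - v = a + i by omega]) (hF.trans hcard)
      (X_sub_C_one_pow_dvd_shiftedJacobi _ _ _), add_zero]

lemma eval_neg_one_wronskian_snoc_mixedPoly (hv : v + i + 1 = b) (hF : b ≤ #F) :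
    (wronskian derivative (Fin.snoc (seedFamily a b M F (F.erase (a + i)))
        (mixedPoly a b M (a + i)) : Fin (#(F.erase (a + i)) + 1) → ℝ[X])).eval (-1) =
      ((M i - 1)⁻¹ + 1) * (wronskian derivative (Fin.snoc (seedFamily a b M F (F.erase (a + i)))
        (jacobiPoly (-a) (-b) v) : Fin (#(F.erase (a + i)) + 1) → ℝ[X])).eval (-1) := by
  have hcard : #F ≤ #(F.erase (a + i)) + 1 := Nat.sub_le_iff_le_add.1 pred_card_le_card_erase
  have hsplit : mixedPoly a b M (a + i) = ((M i - 1)⁻¹ + 1) • jacobiPoly (-a) (-b) v +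
      (shiftedJacobi a (-b) i - jacobiPoly (-a) (-b) v) := by
    rw [mixedPoly_add_eq M hv]
    module
  rw [hsplit, wronskian_snoc_smul_add, eval_add, eval_smul, smul_eq_mul,
    eval_neg_one_wronskian_snoc_seedFamily_eq_zero (by omega) (m := a + i)
      (mem_Ico.2 (by omega)) (notMem_erase _ _) (hF.trans hcard)
      ((dvd_sub_comm).1 (X_sub_C_neg_one_pow_dvd_jacobiPoly_sub_shiftedJacobi hv)), add_zero]

lemma mul_nonneg_of_mul_div_le {m k d₁ d₂ N₁ N₂ : ℝ} (hm0 : m ≠ 0) (hm1 : m ≠ 1) (hd₁ : d₁ ≠ 0)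
    (hd₂ : d₂ ≠ 0) (h₁ : d₁ = ((m - 1)⁻¹ + 1) * N₁) (h₂ : d₂ = (m - 1)⁻¹ * N₂)
    (h : k * (N₁ / d₁) ≤ k * (N₂ / d₂)) : 0 ≤ k * m := by
  have hm : m - 1 ≠ 0 := sub_ne_zero.2 hm1
  have hratio₁ : N₁ / d₁ = (m - 1) / m := by
    rw [div_eq_div_iff hd₁ hm0, h₁]
    field_simp
    ring
  have hratio₂ : N₂ / d₂ = m - 1 := by
    rw [div_eq_iff hd₂, h₂, mul_inv_cancel_left₀ hm]
  rw [hratio₁, hratio₂] at h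
  have hscale : 0 ≤ k * m * ((m - 1) / m) ^ 2 := by
    rw [show k * m * ((m - 1) / m) ^ 2 = k * (m - 1) - k * ((m - 1) / m) by field_simp]
    exact sub_nonneg.2 h
  exact nonneg_of_mul_nonneg_left hscale (by positivity)

lemma seedPoly_mem_range_snoc (hba : b ≤ a) (hv : v + i + 1 = b) (hvF : v ∉ F) {f : ℕ}
    (hf : f ∈ F) :
    seedPoly a b M F f ∈ Set.range (Fin.snoc (seedFamily a b M F (F.erase (a + i)))
      (mixedPoly a b M (a + i)) : Fin (#(F.erase (a + i)) + 1) → ℝ[X]) := by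
  by_cases hfi : f = a + i
  · refine ⟨Fin.last _, ?_⟩
    rw [Fin.snoc_last, hfi, seedPoly_of_notMem hba (by omega) (by omega)
      (by rwa [show a + b - 1 - (a + i) = v by omega])]
  · obtain ⟨j, hj⟩ := seedPoly_mem_range_seedFamily (M := M) (F := F) (a := a) (b := b)
      (mem_erase.2 ⟨hfi, hf⟩)
    exact ⟨j.castSucc, by rw [Fin.snoc_castSucc, hj]⟩

theorem neg_one_pow_mul_prod_mul_nonneg (hba : b ≤ a) (hv : v + i + 1 = b)
    (hF : ∀ f, b ≤ f → f < a + b → f ∈ F) (hvF : v ∉ F) (hM0 : M i ≠ 0) (hM1 : M i ≠ 1)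
    (hΩ : ∀ x ∈ Set.Icc (-1 : ℝ) 1, OmegaJ (-a) (-b) M F x ≠ 0) :
    0 ≤ (-1) ^ v * (∏ f ∈ F.erase (a + i), (lam (-a) (-b) v - lam (-a) (-b) f)) * M i := by
  have haF := le_card_of_forall_mem hF
  have hcard : #F = #(F.erase (a + i)) + 1 :=
    (card_erase_add_one (hF _ (by omega) (by omega))).symm
  obtain ⟨c, hc_pos, hc⟩ := exists_wronskian_mixedPoly_jacobiPoly_eq M hba hv
  have hd (x : ℝ) (hx : x ∈ Set.Icc (-1 : ℝ) 1) :=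
    eval_wronskian_ne_zero_of_omegaJ_ne_zero (by omega) hba hF hcard
      (fun f => seedPoly_mem_range_snoc hba hv hvF) (hΩ x hx)
  have hneg_one := hd (-1) (by simp)
  have hone := hd 1 (by simp)
  have hmixed : jacobiOp (-a) (-b) (mixedPoly a b M (a + i)) =
      -lam (-a) (-b) v • mixedPoly a b M (a + i) := by
    rw [jacobiOp_mixedPoly (by omega) (by omega),
      lam_eq_lam_of_add_add_one_eq (m := a + i) (n := v) (by omega)]
  have hrel := jacobiWeight_mul_wronskian_snoc (hcard ▸ haF) (hcard ▸ hba.trans haF)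
    (isTriangular_seedFamily (by omega) fun f hbf hfa =>
      mem_erase.2 ⟨by omega, hF f hbf (by omega)⟩)
    (wronskian_derivative_ne_zero_of_snoc fun h => hone (by rw [h, eval_zero]))
    hmixed (jacobiOp_jacobiPoly (-a) (-b) v) hc
  rw [prod_orderEmbOfFin _ fun f => -lam (-a) (-b) f - -lam (-a) (-b) v] at hrel
  simp only [neg_sub_neg] at hrel
  have hnonneg := mul_nonneg_of_mul_div_le hM0 hM1 hneg_one hone
    (eval_neg_one_wronskian_snoc_mixedPoly hv (hba.trans haF))
    (eval_one_wronskian_snoc_mixedPoly hba hv hvF haF)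
    (mul_eval_div_eval_le (by norm_num) (fun x => eval_jacobiWeight_pos _ _) hd hrel)
  refine nonneg_of_mul_nonneg_left (hnonneg.trans_eq ?_) hc_pos
  have hsq : ((-1 : ℝ) ^ v) ^ 2 = 1 := by rw [← pow_mul, mul_comm, pow_mul, neg_one_sq, one_pow]
  linear_combination (-(∏ f ∈ F.erase (a + i), (lam (-a) (-b) v - lam (-a) (-b) f)) * c * M i) * hsq

theorem sign_eq_sign_prod (hba : b ≤ a) (hv : v + i + 1 = b)
    (hF : ∀ f, b ≤ f → f < a + b → f ∈ F) (hvF : v ∉ F) (hM0 : M i ≠ 0) (hM1 : M i ≠ 1)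
    (hΩ : ∀ x ∈ Set.Icc (-1 : ℝ) 1, OmegaJ (-a) (-b) M F x ≠ 0) :
    Real.sign (M i) = Real.sign (∏ f ∈ F with f < b ∨ a + b ≤ f,
      (((a : ℝ) + i - f) * (f - v))) := by
  have hnonneg := neg_one_pow_mul_prod_mul_nonneg hba hv hF hvF hM0 hM1 hΩ
  have hmiddle := neg_one_pow_mul_prod_Ico_erase_pos hba hv
  rw [prod_erase_eq_mul_prod_Ico_erase hba hF (by omega), mul_left_comm, mul_right_comm] at hnonneg
  simp only [← lam_sub_lam_eq_mul_of_add_add_one_eq hv]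
  refine sign_eq_sign_of_mul_nonneg hM0 (prod_ne_zero_iff.2 fun f hf => ?_)
    (mul_comm (M i) _ ▸ nonneg_of_mul_nonneg_left hnonneg hmiddle)
  obtain ⟨hfF, hf⟩ := mem_filter.1 hf
  have hfi : a + i ≠ f := by omega
  have hfv : f ≠ v := fun h => hvF (h ▸ hfF)
  rw [lam_sub_lam_eq_mul_of_add_add_one_eq hv]
  exact mul_ne_zero (sub_ne_zero.2 (by exact_mod_cast hfi)) (sub_ne_zero.2 (by exact_mod_cast hfv))

theorem prod_filter_nonneg (hb : 0 < b) (hba : b ≤ a) (hF : ∀ f, b ≤ f → f < a + b → f ∈ F)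
    (hΩ : ∀ x ∈ Set.Icc (-1 : ℝ) 1, OmegaJ (-a) (-b) M F x ≠ 0) (x : ℕ) :
    0 ≤ ∏ f ∈ F with a + b ≤ f, ((a : ℤ) + b + x - f) := by
  have haF := le_card_of_forall_mem hF
  have hq0 : jacobiPoly (-a) (-b) (a + b + x) ≠ 0 := by
    rw [jacobiPoly_neg_neg]
    exact mul_ne_zero (mul_ne_zero (pow_ne_zero _ (X_sub_C_ne_zero 1))
      (pow_ne_zero _ (X_sub_C_ne_zero (-1))))
      (mul_ne_zero (C_ne_zero.2 (by positivity)) (jacobiPoly_natCast_ne_zero a b x))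
  have hdvd : jacobiWeight a b ∣ jacobiPoly (-a) (-b) (a + b + x) :=
    jacobiWeight_dvd_iff.2 ⟨_, jacobiPoly_neg_neg a b x⟩
  have hnonneg := prod_sub_nonneg_of_wronskian_eval_ne_zero haF (hba.trans haF)
    (isTriangular_seedFamily hb fun f hbf hfa => hF f hbf (by omega))
    (fun x hx => eval_wronskian_ne_zero_of_omegaJ_ne_zero hb hba hF rfl
      (fun f => seedPoly_mem_range_seedFamily) (hΩ x hx))
    (jacobiOp_jacobiPoly (-a) (-b) (a + b + x)) hq0 hdvd
  have hfactor (f : ℕ) : -lam (-a) (-b) f - -lam (-a) (-b) (a + b + x : ℕ) =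
      ((a : ℤ) + b + x - f : ℤ) * ((x : ℝ) + f + 1) := by
    simp only [lam]
    push_cast
    ring
  have hlast : 0 < ∏ f ∈ F, ((x : ℝ) + f + 1) := prod_pos fun f _ => by positivity
  rw [prod_orderEmbOfFin _ fun f => -lam (-a) (-b) f - -lam (-a) (-b) (a + b + x : ℕ)] at hnonneg
  simp only [hfactor] at hnonneg
  rw [prod_mul_distrib] at hnonneg
  have hint : 0 ≤ ∏ f ∈ F, ((a : ℤ) + b + x - f) := by
    exact_mod_cast nonneg_of_mul_nonneg_left hnonneg hlast
  rw [← prod_filter_mul_prod_filter_not F fun f => a + b ≤ f] at hint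
  exact nonneg_of_mul_nonneg_left hint (prod_pos fun f hf => by
    have := (mem_filter.1 hf).2
    omega)

end Conditions

end

end ExceptionalJacobi

/-- nonvanishing of `Ω_{M,F}^{α,β}` on `[-1,1]` implies admissibility. -/
theorem omega_nonvanishing_implies_admissible
    (α β : ℤ) (M : ℕ → ℝ) (F : Finset ℕ)
    (hαβ : α ≤ β) (hβ : β ≤ -1)
    (hM : ∀ i, M i ≠ 0 ∧ M i ≠ 1)
    (hFpos : ∀ f ∈ F, 0 < f)
    (hFc : ∀ k : ℕ, -β ≤ (k : ℤ) → (k : ℤ) ≤ -α - β - 1 → k ∈ F)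
    (hΩ : ∀ x ∈ Set.Icc (-1 : ℝ) 1, OmegaJ α β M F x ≠ 0) :
    IsAdmissible α β M F := by
  obtain ⟨a, rfl⟩ : ∃ a : ℕ, α = -(a : ℤ) := ⟨(-α).toNat, by omega⟩
  obtain ⟨b, rfl⟩ : ∃ b : ℕ, β = -(b : ℤ) := ⟨(-β).toNat, by omega⟩
  have hb : 0 < b := by omega
  have hba : b ≤ a := by omega
  have hF (f : ℕ) (hbf : b ≤ f) (hf : f < a + b) : f ∈ F := hFc f (by omega) (by omega)
  refine ⟨fun i hi hiF => ?_, fun x hx _ => ?_⟩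
  · obtain ⟨v, hv⟩ : ∃ v, v + i + 1 = b := ⟨b - 1 - i, by omega⟩
    have hv' : (v : ℝ) + i + 1 = b := by exact_mod_cast hv
    have hvF : v ∉ F := fun h => hiF v h (by omega)
    rw [ExceptionalJacobi.sign_eq_sign_prod hba hv hF hvF (hM i).1 (hM i).2 hΩ]
    congr 1
    refine prod_congr (filter_congr fun f _ => by omega) fun f _ => ?_
    push_cast
    linear_combination -((a : ℝ) + i - f) * hv'
  · lift x to ℕ using hx
    refine (ExceptionalJacobi.prod_filter_nonneg hb hba hF hΩ x).trans_eq
      (prod_congr (filter_congr fun f _ => by omega) fun f _ => by ring)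
end

section
/- Let g be a positive integer, let (p_N)_{N∈ℕ} be a sequence of real polynomials of degree g and let q be a polynomial of degree g such that lim_{N→∞} p_N((1−x)N/2)/N^g = q(x) uniformly on compact subsets of ℂ. Define r_N(x) = p_N(x+1) − p_N(x). Then lim_{N→∞} r_N((1−x)N/2)/N^{g−1} = −2 q′(x), uniformly on compact subsets of ℂ. -/
/-!
Since `(1 - x)N/2 + 1 = (1 - (x - 2/N))N/2`, the rescaled difference is `-2` times the slope of
`f_N x = p_N((1 - x)N/2)/N^g` between `x` and `x - 2/N`. The `f_N` are holomorphic, so their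
derivatives converge locally uniformly to `q'`, and by the mean value inequality so do these slopes.
-/

open Filter Set
open scoped Topology

section Slope

variable {𝕜 E ι : Type*} [RCLike 𝕜] [NormedAddCommGroup E] [NormedSpace 𝕜 E]

theorem norm_slope_sub_le_of_norm_deriv_sub_le {f : 𝕜 → E} {s : Set 𝕜} {c : E} {C : ℝ} {x y : 𝕜}
    (hs : Convex ℝ s) (hf : ∀ z ∈ s, DifferentiableAt 𝕜 f z)
    (hbound : ∀ z ∈ s, ‖deriv f z - c‖ ≤ C) (hx : x ∈ s) (hy : y ∈ s) (hxy : x ≠ y) :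
    ‖slope f x y - c‖ ≤ C := by
  have hyx : y - x ≠ 0 := sub_ne_zero.2 hxy.symm
  have hderiv : ∀ z ∈ s, HasDerivWithinAt (fun w => f w - w • c) (deriv f z - c) s z :=
    fun z hz => by
      simpa only [one_smul] using!
        ((hf z hz).hasDerivAt.sub ((hasDerivAt_id z).smul_const c)).hasDerivWithinAt
  have hslope : (y - x) • (slope f x y - c) = (f y - y • c) - (f x - x • c) := by
    rw [smul_sub, sub_smul_slope, vsub_eq_sub, sub_smul]
    abel
  have hmean := hs.norm_image_sub_le_of_norm_hasDerivWithin_le hderiv hbound hx hy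
  rw [← hslope, norm_smul, mul_comm] at hmean
  exact le_of_mul_le_mul_right hmean (norm_pos_iff.2 hyx)

theorem tendsto_slope_of_tendsto_deriv {F : ι → 𝕜 → E} {φ : Filter ι} {x₀ : 𝕜} {c : E}
    (hF : ∀ᶠ p in φ ×ˢ 𝓝 x₀, DifferentiableAt 𝕜 (F p.1) p.2)
    (hderiv : Tendsto (fun p : ι × 𝕜 => deriv (F p.1) p.2) (φ ×ˢ 𝓝 x₀) (𝓝 c)) :
    Tendsto (fun p : ι × 𝕜 × 𝕜 => slope (F p.1) p.2.1 p.2.2)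
      (φ ×ˢ 𝓝[(diagonal 𝕜)ᶜ] (x₀, x₀)) (𝓝 c) := by
  rw [Metric.nhds_basis_closedBall.tendsto_right_iff] at hderiv ⊢
  intro ε hε
  obtain ⟨P, hP, Q, hQ, hPQ⟩ := eventually_prod_iff.1 (hF.and (hderiv ε hε))
  obtain ⟨δ, hδ, hball⟩ := Metric.eventually_nhds_iff_ball.1 hQ
  have hpair : ∀ᶠ xy in 𝓝[(diagonal 𝕜)ᶜ] (x₀, x₀),
      (xy.1 ∈ Metric.ball x₀ δ ∧ xy.2 ∈ Metric.ball x₀ δ) ∧ xy.1 ≠ xy.2 :=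
    (eventually_nhdsWithin_of_eventually_nhds <|
      prod_mem_nhds (Metric.ball_mem_nhds x₀ hδ) (Metric.ball_mem_nhds x₀ hδ)).and
      eventually_mem_nhdsWithin
  filter_upwards [hP.prod_mk hpair] with ⟨n, x, y⟩ ⟨hn, ⟨hx, hy⟩, hxy⟩
  rw [mem_closedBall_iff_norm]
  exact norm_slope_sub_le_of_norm_deriv_sub_le (convex_ball x₀ δ)
    (fun z hz => (hPQ hn (hball z hz)).1)
    (fun z hz => mem_closedBall_iff_norm.1 (hPQ hn (hball z hz)).2) hx hy hxy

end Slope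

theorem tendsto_prodMk_add_nhdsWithin_compl_diagonal {G ι : Type*} [AddGroup G]
    [TopologicalSpace G] [ContinuousAdd G] {φ : Filter ι} {h : ι → G}
    (hh : Tendsto h φ (𝓝[≠] 0)) (x₀ : G) :
    Tendsto (fun p : ι × G => (p.2, p.2 + h p.1)) (φ ×ˢ 𝓝 x₀) (𝓝[(diagonal G)ᶜ] (x₀, x₀)) := by
  rw [tendsto_nhdsWithin_iff] at hh ⊢
  have hadd : Tendsto (fun p : ι × G => p.2 + h p.1) (φ ×ˢ 𝓝 x₀) (𝓝 x₀) := by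
    simpa only [add_zero, Function.comp_def] using tendsto_snd.add (hh.1.comp tendsto_fst)
  refine ⟨tendsto_snd.prodMk_nhds hadd, ?_⟩
  filter_upwards [hh.2.prod_inl _] with p hp
  simpa using hp

theorem tendstoLocallyUniformlyOn_slope_add {E ι : Type*} [NormedAddCommGroup E] [NormedSpace ℂ E]
    [CompleteSpace E] {F : ι → ℂ → E} {f : ℂ → E} {φ : Filter ι} [φ.NeBot] {U : Set ℂ} {h : ι → ℂ}
    (hf : TendstoLocallyUniformlyOn F f φ U)
    (hF : ∀ᶠ n in φ, DifferentiableOn ℂ (F n) U) (hU : IsOpen U) (hh : Tendsto h φ (𝓝[≠] 0)) :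
    TendstoLocallyUniformlyOn (fun n x => slope (F n) x (x + h n)) (deriv f) φ U := by
  rw [hU.tendstoLocallyUniformlyOn_iff_forall_tendsto]
  intro x₀ hx₀
  have hUx₀ : U ∈ 𝓝 x₀ := hU.mem_nhds hx₀
  have hderiv_lim : Tendsto (deriv f) (𝓝 x₀) (𝓝 (deriv f x₀)) :=
    ((hf.differentiableOn hF hU).deriv hU).continuousOn.continuousAt hUx₀
  have hdiff : ∀ᶠ p in φ ×ˢ 𝓝 x₀, DifferentiableAt ℂ (F p.1) p.2 :=
    (hF.prod_mk hUx₀).mono fun p hp => hp.1.differentiableAt (hU.mem_nhds hp.2)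
  have hderiv : Tendsto (fun p : ι × ℂ => deriv (F p.1) p.2) (φ ×ˢ 𝓝 x₀) (𝓝 (deriv f x₀)) :=
    (hderiv_lim.comp tendsto_snd).congr_uniformity <|
      hU.tendstoLocallyUniformlyOn_iff_forall_tendsto.1 (hf.deriv hF hU) x₀ hx₀
  have hslope := (tendsto_slope_of_tendsto_deriv hdiff hderiv).comp
    (tendsto_fst.prodMk (tendsto_prodMk_add_nhdsWithin_compl_diagonal hh x₀))
  exact ((hderiv_lim.comp tendsto_snd).prodMk_nhds hslope).mono_right (nhds_le_uniformity _)

theorem tendsto_const_div_natCast_nhdsNE_zero {𝕜 : Type*} [DivisionSemiring 𝕜] [CharZero 𝕜]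
    [TopologicalSpace 𝕜] [ContinuousSMul ℚ≥0 𝕜] [ContinuousMul 𝕜] {c : 𝕜} (hc : c ≠ 0) :
    Tendsto (fun N : ℕ => c / N) atTop (𝓝[≠] 0) := by
  refine tendsto_nhdsWithin_iff.2 ⟨tendsto_const_div_atTop_nhds_zero_nat c, ?_⟩
  filter_upwards [eventually_ne_atTop 0] with N hN
  exact div_ne_zero hc (Nat.cast_ne_zero.2 hN)

theorem sub_div_pow_eq_neg_two_mul_slope {𝕜 : Type*} [Field 𝕜] [CharZero 𝕜] (F : 𝕜 → 𝕜) {g N : ℕ}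
    (hg : 0 < g) (hN : N ≠ 0) (x : 𝕜) :
    (F ((1 - x) * N / 2 + 1) - F ((1 - x) * N / 2)) / (N : 𝕜) ^ (g - 1) =
      -2 * slope (fun y => F ((1 - y) * N / 2) / (N : 𝕜) ^ g) x (x + -2 / N) := by
  have hN' : (N : 𝕜) ≠ 0 := Nat.cast_ne_zero.2 hN
  have hshift : (1 - (x + -2 / N)) * N / 2 = (1 - x) * N / 2 + 1 := by
    field_simp
    ring
  obtain ⟨k, rfl⟩ := Nat.exists_eq_add_one.2 hg
  rw [slope_def_field, hshift, add_sub_cancel_left, Nat.add_sub_cancel, pow_succ]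
  field_simp

theorem difference_quotient_uniform_limit_general {g : ℕ} (hg : 0 < g) {F : ℕ → ℂ → ℂ} {f : ℂ → ℂ}
    (hF : ∀ N, Differentiable ℂ (F N))
    (hlim : ∀ K : Set ℂ, IsCompact K →
      TendstoUniformlyOn (fun (N : ℕ) (x : ℂ) => F N ((1 - x) * (N : ℂ) / 2) / (N : ℂ) ^ g)
        f atTop K)
    {K : Set ℂ} (hK : IsCompact K) :
    TendstoUniformlyOn
      (fun (N : ℕ) (x : ℂ) =>
        (F N ((1 - x) * (N : ℂ) / 2 + 1) - F N ((1 - x) * (N : ℂ) / 2)) / (N : ℂ) ^ (g - 1))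
      (fun x => -2 * deriv f x) atTop K := by
  have hlim_loc : TendstoLocallyUniformlyOn
      (fun (N : ℕ) (x : ℂ) => F N ((1 - x) * (N : ℂ) / 2) / (N : ℂ) ^ g) f atTop univ :=
    (tendstoLocallyUniformlyOn_iff_forall_isCompact isOpen_univ).2 fun K _ => hlim K
  have hdiff : ∀ N : ℕ, Differentiable ℂ fun x => F N ((1 - x) * N / 2) / (N : ℂ) ^ g :=
    fun N => ((hF N).comp (by fun_prop)).div_const _
  have hslope := tendstoLocallyUniformlyOn_slope_add hlim_loc
    (.of_forall fun N => (hdiff N).differentiableOn) isOpen_univ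
    (tendsto_const_div_natCast_nhdsNE_zero (neg_ne_zero.2 two_ne_zero))
  have hslopeK := (tendstoLocallyUniformlyOn_iff_forall_isCompact isOpen_univ).1 hslope K
    (subset_univ K) hK
  refine ((uniformContinuous_mul_left' (-2 : ℂ)).comp_tendstoUniformlyOn hslopeK).congr ?_
  filter_upwards [eventually_ne_atTop 0] with N hN x _
  exact (sub_div_pow_eq_neg_two_mul_slope (F N) hg hN x).symm

/-- if `p_N((1-x)N/2)/N^g → q(x)` uniformly on compact subsets of `ℂ`, then for
the difference `r_N(x) = p_N(x+1) - p_N(x)` one has `r_N((1-x)N/2)/N^{g-1} → -2 q'(x)`,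
uniformly on compact subsets of `ℂ`. -/
theorem difference_quotient_uniform_limit
    (g : ℕ) (hg : 0 < g) (p : ℕ → Polynomial ℝ) (q : Polynomial ℝ)
    (hdeg : ∀ N, (p N).degree = (g : WithBot ℕ)) (hq : q.degree = (g : WithBot ℕ))
    (hlim : ∀ K : Set ℂ, IsCompact K →
      TendstoUniformlyOn
        (fun (N : ℕ) (x : ℂ) => Polynomial.aeval ((1 - x) * (N : ℂ) / 2) (p N) / (N : ℂ) ^ g)
        (fun x : ℂ => Polynomial.aeval x q) Filter.atTop K)
    (K : Set ℂ) (hK : IsCompact K) :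
    TendstoUniformlyOn
      (fun (N : ℕ) (x : ℂ) =>
        (Polynomial.aeval ((1 - x) * (N : ℂ) / 2 + 1) (p N) -
            Polynomial.aeval ((1 - x) * (N : ℂ) / 2) (p N)) / (N : ℂ) ^ (g - 1))
      (fun x : ℂ => -2 * Polynomial.aeval x q.derivative) Filter.atTop K := by
  simpa only [Polynomial.deriv_aeval] using
    difference_quotient_uniform_limit_general hg (fun N => (p N).differentiable_aeval) hlim hK
end

section
/- Let α ≤ β ≤ −1 be negative integers and let M = (M_i)_{i≥0} be real parameters with M_i ∉ {0,1}. Then for every n ∈ ℕ, lim_{N→+∞} Ĥ_n^{α,β,N;M}((1−x)N/2) / N^n = (−1)^n · n! · P̂_n^{α,β;M}(x), uniformly on compact subsets of ℂ. -/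
open Finset

noncomputable section ExceptionalHahnJacobiComplex

/-- Pochhammer symbol `(z)_m = z (z+1) ⋯ (z+m-1)` (complex variable). -/
def pochC (z : ℂ) (m : ℕ) : ℂ := ∏ i ∈ Finset.range m, (z + (i : ℂ))

/-- Generalized binomial coefficient `C(z, k)` (complex variable). -/
def genBinomC (z : ℂ) (k : ℕ) : ℂ := (∏ i ∈ Finset.range k, (z - (i : ℂ))) / (k.factorial : ℂ)

/-- Hahn polynomial `h_n^{a,b,N}(x)` (complex variable). -/
def hahnC (a b N : ℂ) (n : ℕ) (x : ℂ) : ℂ :=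
  ∑ j ∈ Finset.range (n + 1),
    pochC (-(n : ℂ)) j * pochC (a + b + (n : ℂ) + 1) j * pochC (-N + (j : ℂ)) (n - j) *
      pochC (a + (j : ℂ) + 1) (n - j) * pochC (-x) j / (j.factorial : ℂ)

/-- Jacobi polynomial `P_n^{a,b}(x)` (complex variable). -/
def jacobiC (a b : ℂ) (n : ℕ) (x : ℂ) : ℂ :=
  (2 : ℂ)⁻¹ ^ n * ∑ j ∈ Finset.range (n + 1),
    genBinomC ((n : ℂ) + a) j * genBinomC ((n : ℂ) + b) (n - j) * (x - 1) ^ (n - j) * (x + 1) ^ j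

/-- The function `φ_u^{α,β,N}(s,x)` (complex variables). -/
def phiHC (α β : ℤ) (N : ℂ) (u : ℕ) (s x : ℂ) : ℂ :=
  pochC ((α : ℂ) + 1) (max u (-α - β - (u : ℤ) - 1).toNat) *
    pochC (-N) (max u (-α - β - (u : ℤ) - 1).toNat) *
    ∑ j ∈ Finset.range (u + 1),
      pochC (-(u : ℂ)) j * pochC ((u : ℂ) - s + (α : ℂ) + (β : ℂ) + 1) j * pochC (-x) j /
        (pochC ((α : ℂ) - s + 1) j * pochC (-N) j * (j.factorial : ℂ))

/-- The polynomials `Ĥ_n^{α,β,N;M}(x)` (complex variable). -/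
def HhatC (α β : ℤ) (N : ℂ) (M : ℕ → ℝ) (n : ℕ) (x : ℂ) : ℂ :=
  if ⌈((-α - β : ℤ) : ℚ) / 2⌉ ≤ (n : ℤ) ∧ (n : ℤ) ≤ -α - 1 then
    deriv (fun s : ℂ => phiHC α β N n s x) 0 -
      deriv (fun s : ℂ => phiHC α β N (-α - β - (n : ℤ) - 1).toNat s x) 0
  else if -α ≤ (n : ℤ) ∧ (n : ℤ) ≤ -α - β - 1 then
    (-1 : ℂ) ^ ((β : ℤ) + (n : ℤ)) * ((β + (n : ℤ)).toNat.factorial : ℂ) *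
      (((-α - β - (n : ℤ) - 1).toNat.factorial : ℂ) * pochC (-x) (-α).toNat *
          hahnC (-(α : ℂ)) (β : ℂ) ((α : ℂ) + N) ((α + (n : ℤ)).toNat) (x + (α : ℂ)) +
        (((α + (n : ℤ)).toNat.factorial : ℂ)) *
            pochC (-N - (α : ℂ) - (β : ℂ) - (n : ℂ) - 1) (2 * (n : ℤ) + α + β + 1).toNat /
            ((M ((α + (n : ℤ)).toNat) : ℂ) - 1) *
          hahnC (α : ℂ) (β : ℂ) N ((-α - β - (n : ℤ) - 1).toNat) x)
  else hahnC (α : ℂ) (β : ℂ) N n x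

/-- The function `φ_u^{α,β}(s,x)` (complex variables). -/
def phiJC (α β : ℤ) (u : ℕ) (s x : ℂ) : ℂ :=
  pochC ((α : ℂ) + 1) (max u (-α - β - (u : ℤ) - 1).toNat) /
      ((max u.factorial (-α - β - (u : ℤ) - 1).toNat.factorial : ℕ) : ℂ) *
    ∑ j ∈ Finset.range (u + 1),
      pochC (-(u : ℂ)) j * pochC ((u : ℂ) - s + (α : ℂ) + (β : ℂ) + 1) j /
          (pochC ((α : ℂ) - s + 1) j * (j.factorial : ℂ)) * ((1 - x) / 2) ^ j

/-- The polynomials `P̂_n^{α,β;M}(x)` (complex variable). -/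
def PhatC (α β : ℤ) (M : ℕ → ℝ) (n : ℕ) (x : ℂ) : ℂ :=
  if ⌈((-α - β : ℤ) : ℚ) / 2⌉ ≤ (n : ℤ) ∧ (n : ℤ) ≤ -α - 1 then
    deriv (fun s : ℂ => phiJC α β n s x) 0 -
      deriv (fun s : ℂ => phiJC α β (-α - β - (n : ℤ) - 1).toNat s x) 0
  else if -α ≤ (n : ℤ) ∧ (n : ℤ) ≤ -α - β - 1 then
    (-1 : ℂ) ^ ((β : ℤ) + (n : ℤ)) *
      ((((n : ℤ) + α).toNat.factorial : ℂ) * (((n : ℤ) + β).toNat.factorial : ℂ) *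
        ((-α - β - (n : ℤ) - 1).toNat.factorial : ℂ)) / (n.factorial : ℂ) *
      (((M ((α + (n : ℤ)).toNat) : ℂ) - 1)⁻¹ *
          jacobiC (α : ℂ) (β : ℂ) ((-α - β - (n : ℤ) - 1).toNat) x +
        ((1 - x) / 2) ^ (-α).toNat * jacobiC (-(α : ℂ)) (β : ℂ) ((α + (n : ℤ)).toNat) x)
  else jacobiC (α : ℂ) (β : ℂ) n x

/-- Exceptional Hahn polynomial `h_n^{α,β,N;M,F}(x)` (complex variable). -/
def exHahnC (α β : ℤ) (N : ℂ) (M : ℕ → ℝ) (F : Finset ℕ) (n : ℕ) (x : ℂ) : ℂ :=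
  Matrix.det (Matrix.of fun i j : Fin (F.card + 1) =>
    Fin.cases (HhatC α β N M (n - uF F) (x + ((j : ℕ) : ℂ)))
      (fun k => HhatC α β N M (elemOf F k) (x + ((j : ℕ) : ℂ))) i)

/-- Exceptional Jacobi polynomial `P_n^{α,β;M,F}(x)` (complex variable). -/
def exJacobiC (α β : ℤ) (M : ℕ → ℝ) (F : Finset ℕ) (n : ℕ) (x : ℂ) : ℂ :=
  Matrix.det (Matrix.of fun i j : Fin (F.card + 1) =>
    Fin.cases (iteratedDeriv (j : ℕ) (PhatC α β M (n - uF F)) x)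
      (fun k => iteratedDeriv (j : ℕ) (PhatC α β M (elemOf F k)) x) i)

end ExceptionalHahnJacobiComplex

/-!
Both `y = (1 - x) N / 2` and `N` grow linearly in `N`, and `(z)_m / N ^ m → t ^ m` whenever
`z / N → t`. Hence every term of the Hahn polynomials and of the functions `φ_u^{α,β,N}` has a limit
after division by the right power of `N`, and the limits are the terms of the hypergeometric forms
at `(1 - x) / 2`. That the hypergeometric form of the Jacobi polynomial agrees with the symmetric
sum defining it is the trinomial revision followed by the Chu–Vandermonde identity.

The limits are taken along an arbitrary filter on which `N → ∞` and `y / N → (1 - x₀) / 2`. On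
`atTop ×ˢ 𝓝 x₀` they say that the functions converge continuously, which on a compact set amounts
to uniform convergence.
-/

open Filter Topology Bornology

section ContinuousConvergence

variable {ι X Y : Type*} [TopologicalSpace X] {F : ι → X → Y} {f : X → Y} {p : Filter ι} {K : Set X}

theorem continuousOn_of_forall_tendsto_prod_nhdsWithin [TopologicalSpace Y] [RegularSpace Y]
    [p.NeBot]
    (h : ∀ x ∈ K, Tendsto (fun q : ι × X => F q.1 q.2) (p ×ˢ 𝓝[K] x) (𝓝 (f x))) :
    ContinuousOn f K := by
  intro x hx
  have hpointwise : ∀ y ∈ K, Tendsto (fun i => F i y) p (𝓝 (f y)) := fun y hy =>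
    (h y hy).comp (tendsto_id.prodMk (tendsto_const_pure.mono_right (pure_le_nhdsWithin hy)))
  refine (closed_nhds_basis (f x)).tendsto_right_iff.2 fun V ⟨hVx, hVclosed⟩ => ?_
  have hV : ∀ᶠ y in 𝓝[K] x, ∀ᶠ i in p, F i y ∈ V :=
    (eventually_swap_iff.1 ((h x hx).eventually hVx)).curry
  filter_upwards [hV, self_mem_nhdsWithin] with y hFV hy
  exact hVclosed.mem_of_tendsto (hpointwise y hy) hFV

theorem tendstoUniformlyOn_of_forall_tendsto_prod_nhdsWithin [UniformSpace Y]
    (hK : IsCompact K)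
    (h : ∀ x ∈ K, Tendsto (fun q : ι × X => F q.1 q.2) (p ×ˢ 𝓝[K] x) (𝓝 (f x))) :
    TendstoUniformlyOn F f p K := by
  rcases p.eq_or_neBot with rfl | hp
  · exact fun _ _ => eventually_bot
  rw [← tendstoLocallyUniformlyOn_iff_tendstoUniformlyOn_of_compact hK,
    tendstoLocallyUniformlyOn_iff_forall_tendsto]
  intro x hx
  have hf : Tendsto f (𝓝[K] x) (𝓝 (f x)) := continuousOn_of_forall_tendsto_prod_nhdsWithin h x hx
  exact ((hf.comp tendsto_snd).prodMk_nhds (h x hx)).mono_right (nhds_le_uniformity _)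

end ContinuousConvergence

section BinomialIdentities

theorem sum_antidiagonal_antidiagonal_assoc {A M : Type*} [AddMonoid A] [HasAntidiagonal A]
    [AddCommMonoid M] (n : A) (f : A → A → A → M) :
    ∑ x ∈ antidiagonal n, ∑ y ∈ antidiagonal x.1, f y.1 y.2 x.2 =
      ∑ x ∈ antidiagonal n, ∑ y ∈ antidiagonal x.2, f x.1 y.1 y.2 := by
  simp only [sum_sigma']
  apply sum_nbij' (fun ⟨⟨_, k⟩, ⟨i, j⟩⟩ => ⟨(i, j + k), (j, k)⟩)
    (fun ⟨⟨i, _⟩, ⟨j, k⟩⟩ => ⟨(i + j, k), (i, j)⟩) <;>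
    grind [HasAntidiagonal.mem_antidiagonal, add_assoc]

theorem sum_choose_mul_choose_mul_one_add_pow {R : Type*} [CommRing R] [BinomialRing R]
    (r s y : R) (n : ℕ) :
    ∑ x ∈ antidiagonal n, Ring.choose r x.1 * Ring.choose s x.2 * y ^ x.2 * (1 + y) ^ x.1 =
      ∑ x ∈ antidiagonal n, Ring.choose r x.1 * Ring.choose (r - x.1 + s) x.2 * y ^ x.2 := by
  have trinomial_revision : ∀ j i : ℕ,
      Ring.choose r j * Ring.choose s i * y ^ i * (1 + y) ^ j =
        ∑ x ∈ antidiagonal j,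
          Ring.choose r x.1 * (Ring.choose (r - x.1) x.2 * Ring.choose s i * y ^ (x.2 + i)) := by
    intro j i
    rw [(Commute.all 1 y).add_pow', mul_sum]
    refine sum_congr rfl fun x hx => ?_
    obtain rfl := mem_antidiagonal.1 hx
    have hchoose := Ring.choose_smul_choose r (Nat.le_add_right x.1 x.2)
    rw [Nat.add_sub_cancel_left, nsmul_eq_mul] at hchoose
    rw [nsmul_eq_mul, one_pow, pow_add]
    linear_combination Ring.choose s i * y ^ i * y ^ x.2 * hchoose
  simp only [trinomial_revision]
  rw [sum_antidiagonal_antidiagonal_assoc n fun p q i =>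
    Ring.choose r p * (Ring.choose (r - p) q * Ring.choose s i * y ^ (q + i))]
  refine sum_congr rfl fun x _ => ?_
  rw [Ring.add_choose_eq _ (Commute.all _ _), mul_assoc, sum_mul, mul_sum]
  exact sum_congr rfl fun z hz => by rw [mem_antidiagonal.1 hz]

end BinomialIdentities

section Pochhammer

theorem pochC_eq_ascPochhammer_eval (z : ℂ) (m : ℕ) : pochC z m = (ascPochhammer ℂ m).eval z := by
  induction m with
  | zero => simp [pochC]
  | succ m ih => rw [ascPochhammer_succ_eval, ← ih, pochC, prod_range_succ, pochC]

theorem pochC_add_one_eq_factorial_mul_choose (z : ℂ) (m : ℕ) :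
    pochC (z + 1) m = m.factorial * Ring.choose (z + m) m := by
  rw [pochC_eq_ascPochhammer_eval, ← Polynomial.ascPochhammer_smeval_eq_eval,
    ← Ring.factorial_nsmul_multichoose_eq_ascPochhammer, Ring.multichoose_eq, nsmul_eq_mul,
    add_right_comm, add_sub_cancel_right]

theorem pochC_neg_natCast_mul_factorial {n j : ℕ} (h : j ≤ n) :
    pochC (-n) j * (n - j).factorial = (-1) ^ j * n.factorial := by
  rw [pochC_eq_ascPochhammer_eval, ascPochhammer_eval_neg_eq_descPochhammer,
    descPochhammer_eval_eq_descFactorial, ← Nat.factorial_mul_descFactorial h]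
  push_cast
  ring

theorem genBinomC_eq_choose (z : ℂ) (k : ℕ) : genBinomC z k = Ring.choose z k := by
  rw [genBinomC, ← descPochhammer_eval_eq_prod_range, descPochhammer_eval_eq_ascPochhammer,
    ← pochC_eq_ascPochhammer_eval, pochC_add_one_eq_factorial_mul_choose, sub_add_cancel,
    mul_div_cancel_left₀ _ (Nat.cast_ne_zero.2 k.factorial_ne_zero)]

@[fun_prop]
theorem differentiable_pochC (m : ℕ) : Differentiable ℂ fun z => pochC z m := by
  unfold pochC
  fun_prop

end Pochhammer

section Jacobi

theorem jacobiC_eq_sum_antidiagonal (a b : ℂ) (n : ℕ) (x : ℂ) :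
    jacobiC a b n x = ∑ i ∈ antidiagonal n, Ring.choose (n + a) i.1 * Ring.choose (n + b) i.2 *
      ((x - 1) / 2) ^ i.2 * (1 + (x - 1) / 2) ^ i.1 := by
  rw [jacobiC, mul_sum, Nat.sum_antidiagonal_eq_sum_range_succ_mk]
  refine sum_congr rfl fun j hj => ?_
  have hpow : (2 : ℂ)⁻¹ ^ n = 2⁻¹ ^ (n - j) * 2⁻¹ ^ j :=
    (pow_sub_mul_pow _ (mem_range_succ_iff.1 hj)).symm
  rw [genBinomC_eq_choose, genBinomC_eq_choose, hpow,
    show 1 + (x - 1) / 2 = 2⁻¹ * (x + 1) by ring, mul_pow, div_eq_inv_mul, mul_pow]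
  ring

theorem sum_hypergeometric_eq_factorial_mul_jacobiC (a b : ℂ) (n : ℕ) (x : ℂ) :
    ∑ j ∈ range (n + 1), pochC (-n) j * pochC (a + b + n + 1) j * pochC (a + j + 1) (n - j) /
      j.factorial * ((1 - x) / 2) ^ j = n.factorial * jacobiC a b n x := by
  rw [jacobiC_eq_sum_antidiagonal, sum_choose_mul_choose_mul_one_add_pow,
    ← Nat.sum_antidiagonal_swap, Nat.sum_antidiagonal_eq_sum_range_succ_mk, mul_sum]
  refine sum_congr rfl fun j hj => ?_
  have hjn : j ≤ n := mem_range_succ_iff.1 hj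
  have hneg := pochC_neg_natCast_mul_factorial hjn
  rw [pochC_add_one_eq_factorial_mul_choose, pochC_add_one_eq_factorial_mul_choose,
    Prod.swap_prod_mk, Nat.cast_sub hjn,
    show a + (j : ℂ) + (n - j) = n + a by ring,
    show (n : ℂ) + a - (n - j) + (n + b) = a + b + n + j by ring,
    show (x - 1) / 2 = -((1 - x) / 2) by ring, neg_pow]
  have hfact : (j.factorial : ℂ) ≠ 0 := Nat.cast_ne_zero.2 j.factorial_ne_zero
  field_simp
  linear_combination
    Ring.choose (a + b + n + j) j * Ring.choose (n + a) (n - j) * ((1 - x) / 2) ^ j * hneg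

end Jacobi

section Phi

/-- The coefficient `(-u)_j (u - s + α + β + 1)_j / ((α - s + 1)_j j!)` shared by the terminating
hypergeometric sums `φ_u^{α,β,N}(s, ·)` and `φ_u^{α,β}(s, ·)`, as a function of `s`. -/
noncomputable def phiCoeff (α β : ℤ) (u j : ℕ) (s : ℂ) : ℂ :=
  pochC (-u) j * pochC (u - s + α + β + 1) j / (pochC (α - s + 1) j * j.factorial)

theorem differentiableAt_phiCoeff {α : ℤ} {j : ℕ} (hj : (j : ℤ) ≤ -α - 1) (β : ℤ) (u : ℕ) :
    DifferentiableAt ℂ (phiCoeff α β u j) 0 := by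
  have hden : pochC (α - 0 + 1) j ≠ 0 := by
    rw [pochC, prod_ne_zero_iff]
    intro i hi
    have hij := mem_range.1 hi
    rw [sub_zero]
    exact_mod_cast (by omega : α + 1 + (i : ℤ) ≠ 0)
  have hfact : (j.factorial : ℂ) ≠ 0 := Nat.cast_ne_zero.2 j.factorial_ne_zero
  exact DifferentiableAt.div (by fun_prop) (by fun_prop) (mul_ne_zero hden hfact)

theorem deriv_const_mul_sum_phiCoeff_mul {α : ℤ} {u : ℕ} (hu : (u : ℤ) ≤ -α - 1) (β : ℤ) (c : ℂ)
    (w : ℕ → ℂ) :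
    deriv (fun s => c * ∑ j ∈ range (u + 1), phiCoeff α β u j s * w j) 0 =
      c * ∑ j ∈ range (u + 1), deriv (phiCoeff α β u j) 0 * w j := by
  refine (HasDerivAt.const_mul c (HasDerivAt.fun_sum fun j hj => ?_)).deriv
  have hju := mem_range_succ_iff.1 hj
  exact (differentiableAt_phiCoeff (by omega) β u).hasDerivAt.mul_const (w j)

theorem deriv_phiHC {α β : ℤ} {u m : ℕ} (hu : (u : ℤ) ≤ -α - 1)
    (hm : max u (-α - β - (u : ℤ) - 1).toNat = m) (N y : ℂ) :
    deriv (fun s => phiHC α β N u s y) 0 =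
      pochC (α + 1) m * pochC (-N) m *
        ∑ j ∈ range (u + 1), deriv (phiCoeff α β u j) 0 * (pochC (-y) j / pochC (-N) j) := by
  rw [← deriv_const_mul_sum_phiCoeff_mul hu]
  congr 1
  ext s
  rw [phiHC, hm]
  congr 1
  refine sum_congr rfl fun j _ => ?_
  simp only [phiCoeff, div_eq_mul_inv, mul_inv]
  ring

theorem deriv_phiJC {α β : ℤ} {u m : ℕ} (hu : (u : ℤ) ≤ -α - 1)
    (hm : max u (-α - β - (u : ℤ) - 1).toNat = m) (x : ℂ) :
    deriv (fun s => phiJC α β u s x) 0 =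
      pochC (α + 1) m / m.factorial *
        ∑ j ∈ range (u + 1), deriv (phiCoeff α β u j) 0 * ((1 - x) / 2) ^ j := by
  have hfact : max u.factorial (-α - β - (u : ℤ) - 1).toNat.factorial = m.factorial := by
    rw [← hm, Monotone.map_max (fun _ _ => Nat.factorial_le)]
  rw [← deriv_const_mul_sum_phiCoeff_mul hu]
  congr 1
  ext s
  rw [phiJC, hm, hfact]
  rfl

end Phi

section Limits

variable {ι : Type*} {l : Filter ι} {N y z : ι → ℂ} {t x : ℂ}

theorem tendsto_add_const_div (hN : Tendsto N l (cobounded ℂ))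
    (hz : Tendsto (fun i => z i / N i) l (𝓝 t)) (c : ℂ) :
    Tendsto (fun i => (z i + c) / N i) l (𝓝 t) := by
  have hc : Tendsto (fun i => c / N i) l (𝓝 0) := by
    simpa only [div_eq_mul_inv, mul_zero, Function.comp_apply] using
      (tendsto_inv₀_cobounded.comp hN).const_mul c
  simpa only [add_div, add_zero] using hz.add hc

theorem tendsto_pochC_div_pow (hN : Tendsto N l (cobounded ℂ))
    (hz : Tendsto (fun i => z i / N i) l (𝓝 t)) (m : ℕ) :
    Tendsto (fun i => pochC (z i) m / N i ^ m) l (𝓝 (t ^ m)) := by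
  have hprod := tendsto_finsetProd (range m) fun k _ => tendsto_add_const_div hN hz k
  simpa only [prod_div_distrib, prod_const, card_range, pochC] using hprod

theorem tendsto_neg_div (hz : Tendsto (fun i => z i / N i) l (𝓝 t)) :
    Tendsto (fun i => -z i / N i) l (𝓝 (-t)) := by
  simpa only [neg_div] using hz.neg

theorem tendsto_self_div (hN : Tendsto N l (cobounded ℂ)) :
    Tendsto (fun i => N i / N i) l (𝓝 1) :=
  tendsto_const_nhds.congr' <| (hN.eventually_ne_cobounded 0).mono fun _ hi => (div_self hi).symm

theorem tendsto_hahnC_div_pow {N' : ι → ℂ} (hN : Tendsto N l (cobounded ℂ))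
    (hN' : Tendsto (fun i => N' i / N i) l (𝓝 1))
    (hy : Tendsto (fun i => y i / N i) l (𝓝 ((1 - x) / 2))) (a b : ℂ) (n : ℕ) :
    Tendsto (fun i => hahnC a b (N' i) n (y i) / N i ^ n) l
      (𝓝 ((-1) ^ n * n.factorial * jacobiC a b n x)) := by
  rw [mul_assoc, ← sum_hypergeometric_eq_factorial_mul_jacobiC, mul_sum]
  simp only [hahnC, sum_div]
  refine tendsto_finsetSum _ fun j hj => ?_
  have hjn : j ≤ n := mem_range_succ_iff.1 hj
  have hpochN := tendsto_pochC_div_pow hN (tendsto_add_const_div hN (tendsto_neg_div hN') j) (n - j)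
  have hpochy := tendsto_pochC_div_pow hN (tendsto_neg_div hy) j
  convert (hpochN.mul hpochy).const_mul
    (pochC (-n) j * pochC (a + b + n + 1) j * pochC (a + j + 1) (n - j) / j.factorial) using 2
  · rw [← pow_sub_mul_pow _ hjn]
    ring
  · rw [← pow_sub_mul_pow (-1 : ℂ) hjn, neg_pow ((1 - x) / 2)]
    ring

theorem tendsto_pochC_mul_hahnC_div_pow {N' : ι → ℂ} (hN : Tendsto N l (cobounded ℂ))
    (hz : Tendsto (fun i => z i / N i) l (𝓝 (-t))) (hN' : Tendsto (fun i => N' i / N i) l (𝓝 1))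
    (hy : Tendsto (fun i => y i / N i) l (𝓝 ((1 - x) / 2))) (a b : ℂ) (k n : ℕ) :
    Tendsto (fun i => pochC (z i) k * hahnC a b (N' i) n (y i) / N i ^ (k + n)) l
      (𝓝 ((-1) ^ (k + n) * t ^ k * n.factorial * jacobiC a b n x)) := by
  convert (tendsto_pochC_div_pow hN hz k).mul (tendsto_hahnC_div_pow hN hN' hy a b n) using 2
  · rw [pow_add, div_mul_div_comm]
  · rw [neg_pow t]
    ring

theorem tendsto_deriv_phiHC_div_pow {α β : ℤ} {u m : ℕ} (hN : Tendsto N l (cobounded ℂ))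
    (hy : Tendsto (fun i => y i / N i) l (𝓝 ((1 - x) / 2))) (hu : (u : ℤ) ≤ -α - 1)
    (hm : max u (-α - β - (u : ℤ) - 1).toNat = m) :
    Tendsto (fun i => deriv (fun s => phiHC α β (N i) u s (y i)) 0 / N i ^ m) l
      (𝓝 ((-1) ^ m * m.factorial * deriv (fun s => phiJC α β u s x) 0)) := by
  have hpochN := tendsto_pochC_div_pow hN (tendsto_neg_div (tendsto_self_div hN))
  have hratio : ∀ j, Tendsto (fun i => pochC (-y i) j / pochC (-N i) j) l
      (𝓝 (((1 - x) / 2) ^ j)) := by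
    intro j
    have hquot := (tendsto_pochC_div_pow hN (tendsto_neg_div hy) j).div (hpochN j)
      (pow_ne_zero j (neg_ne_zero.2 one_ne_zero))
    rw [← div_pow, neg_div_neg_eq, div_one] at hquot
    refine hquot.congr' ?_
    filter_upwards [hN.eventually_ne_cobounded 0] with i hi
    exact div_div_div_cancel_right₀ (pow_ne_zero j hi) _ _
  have hsum := tendsto_finsetSum (range (u + 1)) fun j _ =>
    (hratio j).const_mul (deriv (phiCoeff α β u j) 0)
  simp only [deriv_phiHC hu hm, deriv_phiJC hu hm]
  convert ((hpochN m).const_mul (pochC (α + 1) m)).mul hsum using 2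
  · ring
  · have hfact : (m.factorial : ℂ) ≠ 0 := Nat.cast_ne_zero.2 m.factorial_ne_zero
    field_simp

theorem tendsto_HhatC_div_pow_of_ceil_le {α β : ℤ} {n : ℕ} (hN : Tendsto N l (cobounded ℂ))
    (hy : Tendsto (fun i => y i / N i) l (𝓝 ((1 - x) / 2))) (hβ : β ≤ 0)
    (hn : ⌈((-α - β : ℤ) : ℚ) / 2⌉ ≤ (n : ℤ) ∧ (n : ℤ) ≤ -α - 1) (M : ℕ → ℝ) :
    Tendsto (fun i => HhatC α β (N i) M n (y i) / N i ^ n) l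
      (𝓝 ((-1) ^ n * n.factorial * PhatC α β M n x)) := by
  simp only [HhatC, PhatC, if_pos hn, sub_div, mul_sub]
  obtain ⟨hceil, hnα⟩ := hn
  have h2n : -α - β ≤ 2 * (n : ℤ) := by
    have := (div_le_iff₀ two_pos).1 (Int.ceil_le.1 hceil)
    rw [mul_comm]
    exact_mod_cast this
  exact (tendsto_deriv_phiHC_div_pow hN hy hnα (by omega)).sub
    (tendsto_deriv_phiHC_div_pow hN hy (by omega) (by omega))

theorem tendsto_HhatC_div_pow_of_neg_le {α β : ℤ} {n : ℕ} (hN : Tendsto N l (cobounded ℂ))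
    (hy : Tendsto (fun i => y i / N i) l (𝓝 ((1 - x) / 2))) (hαβ : α ≤ β) (hα : α ≤ 0)
    (hn : -α ≤ (n : ℤ) ∧ (n : ℤ) ≤ -α - β - 1) (M : ℕ → ℝ) :
    Tendsto (fun i => HhatC α β (N i) M n (y i) / N i ^ n) l
      (𝓝 ((-1) ^ n * n.factorial * PhatC α β M n x)) := by
  have hnot : ¬(⌈((-α - β : ℤ) : ℚ) / 2⌉ ≤ (n : ℤ) ∧ (n : ℤ) ≤ -α - 1) := by omega
  simp only [HhatC, PhatC, if_neg hnot, if_pos hn, add_comm (n : ℤ)]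
  generalize hk : (-α).toNat = k
  generalize hw : (α + (n : ℤ)).toNat = w
  generalize hv : (-α - β - (n : ℤ) - 1).toNat = v
  generalize hr : (2 * (n : ℤ) + α + β + 1).toNat = r
  have hkw : k + w = n := by omega
  have hrv : r + v = n := by omega
  have hNN := tendsto_self_div hN
  have hNα : Tendsto (fun i => (α + N i) / N i) l (𝓝 1) := by
    simpa only [add_comm] using tendsto_add_const_div hN hNN α
  have hN_shift : Tendsto (fun i => (-N i - α - β - n - 1) / N i) l (𝓝 (-1)) := by
    convert tendsto_add_const_div hN (tendsto_neg_div hNN) (-α - β - n - 1) using 3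
    ring
  have hfirst := tendsto_pochC_mul_hahnC_div_pow hN (tendsto_neg_div hy) hNα
    (tendsto_add_const_div hN hy α) (-α) β k w
  have hsecond := tendsto_pochC_mul_hahnC_div_pow hN hN_shift hNN hy α β r v
  rw [hkw] at hfirst
  rw [hrv, one_pow, mul_one] at hsecond
  convert ((hfirst.const_mul (v.factorial : ℂ)).add
    (hsecond.const_mul (w.factorial / (M w - 1) : ℂ))).const_mul
      ((-1) ^ (β + n) * ((β + n).toNat.factorial : ℂ)) using 2
  · ring
  · have hfact : (n.factorial : ℂ) ≠ 0 := Nat.cast_ne_zero.2 n.factorial_ne_zero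
    rw [div_eq_mul_inv (w.factorial : ℂ)]
    generalize ((M w : ℂ) - 1)⁻¹ = c
    field_simp
    ring

theorem tendsto_HhatC_div_pow {α β : ℤ} (hN : Tendsto N l (cobounded ℂ))
    (hy : Tendsto (fun i => y i / N i) l (𝓝 ((1 - x) / 2))) (hαβ : α ≤ β) (hβ : β ≤ 0) (M : ℕ → ℝ)
    (n : ℕ) :
    Tendsto (fun i => HhatC α β (N i) M n (y i) / N i ^ n) l
      (𝓝 ((-1) ^ n * n.factorial * PhatC α β M n x)) := by
  by_cases hceil : ⌈((-α - β : ℤ) : ℚ) / 2⌉ ≤ (n : ℤ) ∧ (n : ℤ) ≤ -α - 1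
  · exact tendsto_HhatC_div_pow_of_ceil_le hN hy hβ hceil M
  by_cases hneg : -α ≤ (n : ℤ) ∧ (n : ℤ) ≤ -α - β - 1
  · exact tendsto_HhatC_div_pow_of_neg_le hN hy hαβ (hαβ.trans hβ) hneg M
  simp only [HhatC, PhatC, if_neg hceil, if_neg hneg]
  exact tendsto_hahnC_div_pow hN (tendsto_self_div hN) hy α β n

end Limits

/-- the polynomials `P̂_n^{α,β;M}` as limits of the polynomials `Ĥ_n^{α,β,N;M}`,
uniformly on compact subsets of `ℂ`. -/
theorem Hhat_to_Phat_limit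
    (α β : ℤ) (M : ℕ → ℝ)
    (hαβ : α ≤ β) (hβ : β ≤ -1)
    (hM : ∀ i, M i ≠ 0 ∧ M i ≠ 1)
    (n : ℕ) (K : Set ℂ) (hK : IsCompact K) :
    TendstoUniformlyOn
      (fun (N : ℝ) (x : ℂ) => HhatC α β (N : ℂ) M n ((1 - x) * (N : ℂ) / 2) / (N : ℂ) ^ n)
      (fun x : ℂ => (-1 : ℂ) ^ n * (n.factorial : ℂ) * PhatC α β M n x)
      Filter.atTop K := by
  refine tendstoUniformlyOn_of_forall_tendsto_prod_nhdsWithin hK fun x _ => ?_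
  have hN : Tendsto (fun q : ℝ × ℂ => (q.1 : ℂ)) (atTop ×ˢ 𝓝[K] x) (cobounded ℂ) :=
    (RCLike.tendsto_ofReal_atTop_cobounded ℂ).comp tendsto_fst
  have hx : Tendsto (fun q : ℝ × ℂ => (1 - q.2) / 2) (atTop ×ˢ 𝓝[K] x) (𝓝 ((1 - x) / 2)) :=
    ((tendsto_snd.mono_right nhdsWithin_le_nhds).const_sub 1).div_const 2
  have hy : Tendsto (fun q : ℝ × ℂ => (1 - q.2) * (q.1 : ℂ) / 2 / q.1) (atTop ×ˢ 𝓝[K] x)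
      (𝓝 ((1 - x) / 2)) := by
    refine hx.congr' ?_
    filter_upwards [hN.eventually_ne_cobounded 0] with q hq
    field_simp
  exact tendsto_HhatC_div_pow hN hy hαβ (by omega) M n
end
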